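/- arXiv:2004.10571 — 7 statements merged into one kernel-verified Lean document; each statement's English description precedes it below -/
import Mathlib

section
/- Assume the kernel K satisfies Assumption (K) with exponent γ ∈ (0,2]. Let A : [0,T] → ℝ^{d×d} and B : [0,T] → ℝ^{d×m} be bounded and measurable, and define Λ : C([0,T];ℝᵈ) → [0,∞] by Λ(ψ) := inf{ (1/2)∫₀ᵀ |v_s|² ds : v ∈ L²([0,T];ℝᵐ) and ψ_t = ∫₀ᵗ K(t−s)[A(s)ψ_s + B(s)v_s] ds for all t ∈ [0,T] }, with inf ∅ := +∞. Then for every N > 0 the sublevel set {ψ ∈ C([0,T];ℝᵈ) : Λ(ψ) ≤ N} is compact in C([0,T];ℝᵈ) equipped with the supremum norm. -/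
/-!
The sublevel sets of `Λ` are closed, bounded and equicontinuous, so they are compact by
Arzelà–Ascoli. The estimates below all come from `K ∈ L²(0, T)`.

Write `𝒦 f (t) = ∫₀ᵗ K(t-s) f(s) ds` (`volt`), with `K` extended by zero outside `[0, T)`, so that
the limiting equation reads `ψ = 𝒦(Aψ) + 𝒦(Bv)` (`Solves`).

* By Cauchy–Schwarz, `|𝒦 f (t)|² ≤ C ∫₀ᵗ |f|²` (`exists_volt_sq_le`). Inserting the equation and
  using Grönwall's inequality for `|ψ|²` bounds `ψ` by the energy of the control
  (`exists_bound_of_solves`).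
* By Cauchy–Schwarz and continuity of translations in `L²(ℝ)`, `𝒦` maps bounded sets of `L²` to
  equicontinuous families (`exists_volt_sub_sq_le`), so the solutions driven by controls of bounded
  energy are equicontinuous (`exists_modulus_of_solves`).
* For closedness (`isClosed_sublevel`), a uniform limit `ψ` of paths `ψₙ` with controls `vₙ` of
  energy nearly at most `N` satisfies `𝒦(Bvₙ) = ψₙ - 𝒦(Aψₙ) → ψ - 𝒦(Aψ)`. Each value
  `(𝒦(Bv)(t))ᵢ` is an inner product of `v` with a fixed element of `L²`, so a weak limit point of
  `vₙ`, which exists by Banach–Alaoglu (`exists_inner_eq_of_approx`), is a control for `ψ` with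
  energy at most `N`. The same argument covers the fact that the infimum in `Λ` is only approached.
-/

open MeasureTheory Set
open scoped ENNReal

/-- Frobenius norm of a real matrix. -/
noncomputable def frobNorm {n m : ℕ} (A : Matrix (Fin n) (Fin m) ℝ) : ℝ :=
  Real.sqrt (∑ i, ∑ j, (A i j) ^ 2)

/-- Euclidean norm of a vector in `ℝⁿ`. -/
noncomputable def euclNorm {n : ℕ} (x : Fin n → ℝ) : ℝ :=
  Real.sqrt (∑ i, x i ^ 2)

/-- Assumption (K): the kernel is square integrable on `[0,T]` and there are constants
`C_K > 0` and `h₀ ∈ (0,1]` such that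
`∫₀ʰ |K(t)|² dt + ∫₀ᵀ |K(t+h) - K(t)|² dt ≤ C_K h^γ` for all `h ∈ (0,h₀]`. -/
def AssumptionK {d : ℕ} (T γ : ℝ) (K : ℝ → Matrix (Fin d) (Fin d) ℝ) : Prop :=
  MeasureTheory.IntegrableOn (fun t => frobNorm (K t) ^ 2) (Set.Ioc 0 T) ∧
  ∃ C_K > (0:ℝ), ∃ h₀ ∈ Set.Ioc (0:ℝ) 1, ∀ h ∈ Set.Ioc (0:ℝ) h₀,
    (∫ t in Set.Ioc 0 h, frobNorm (K t) ^ 2) +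
        (∫ t in Set.Ioc 0 T, frobNorm (K (t + h) - K t) ^ 2) ≤ C_K * h ^ γ

/-- The moderate deviations rate function
`Λ(ψ) = inf { (1/2)∫₀ᵀ |v|² : v ∈ L², ψ t = ∫₀ᵗ K(t-s)[A(s)ψ(s) + B(s)v(s)] ds }`,
with `inf ∅ = +∞`, defined on `C([0,T];ℝᵈ)`. -/
noncomputable def rateLambda {d : ℕ} (m : ℕ) (T : ℝ)
    (K : ℝ → Matrix (Fin d) (Fin d) ℝ)
    (A : ℝ → Matrix (Fin d) (Fin d) ℝ) (B : ℝ → Matrix (Fin d) (Fin m) ℝ)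
    (Ψ : ContinuousMap (Set.Icc (0:ℝ) T) (Fin d → ℝ)) : ℝ≥0∞ :=
  sInf {E : ℝ≥0∞ | ∃ (ψ : ℝ → Fin d → ℝ) (v : ℝ → Fin m → ℝ),
    Measurable v ∧
    MeasureTheory.IntegrableOn (fun s => euclNorm (v s) ^ 2) (Set.Ioc 0 T) ∧
    ContinuousOn ψ (Set.Icc 0 T) ∧
    (∀ t ∈ Set.Icc (0:ℝ) T,
      MeasureTheory.IntegrableOn
        (fun s => (K (t - s)).mulVec ((A s).mulVec (ψ s) + (B s).mulVec (v s)))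
        (Set.Ioc 0 t) ∧
      ψ t = ∫ s in Set.Ioc 0 t,
        (K (t - s)).mulVec ((A s).mulVec (ψ s) + (B s).mulVec (v s))) ∧
    (∀ x : Set.Icc (0:ℝ) T, Ψ x = ψ ↑x) ∧
    E = ENNReal.ofReal (2⁻¹ * ∫ s in Set.Ioc 0 T, euclNorm (v s) ^ 2)}

/-! ### Square integrable functions -/

lemma inner_toLp_eq {α : Type*} [MeasurableSpace α] {μ : Measure α} {E : Type*}
    [NormedAddCommGroup E] [InnerProductSpace ℝ E] {f g : α → E}
    (hf : MemLp f 2 μ) (hg : MemLp g 2 μ) :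
    inner ℝ (hf.toLp f) (hg.toLp g) = ∫ a, inner ℝ (f a) (g a) ∂μ := by
  rw [L2.inner_def]
  refine integral_congr_ae ?_
  filter_upwards [hf.coeFn_toLp, hg.coeFn_toLp] with a h1 h2
  rw [h1, h2]

/-- Cauchy–Schwarz inequality for real functions, in squared form. -/
lemma sq_integral_mul_le {α : Type*} [MeasurableSpace α] {μ : Measure α} {f g : α → ℝ}
    (hf : MemLp f 2 μ) (hg : MemLp g 2 μ) :
    (∫ a, f a * g a ∂μ) ^ 2 ≤ (∫ a, f a ^ 2 ∂μ) * ∫ a, g a ^ 2 ∂μ := by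
  have h := real_inner_mul_inner_self_le (hf.toLp f) (hg.toLp g)
  simp only [inner_toLp_eq, real_inner_eq_re_inner] at h
  simpa [pow_two, mul_comm] using h

/-- Continuity of translations in `L²(ℝ)`. -/
lemma exists_integral_translate_sub_sq_le {k : ℝ → ℝ} (hk : MemLp k 2 volume) {ε : ℝ}
    (hε : 0 < ε) :
    ∃ δ > 0, ∀ h : ℝ, |h| < δ → ∫ u, (k (u + h) - k u) ^ 2 ≤ ε := by
  have : Fact ((2 : ℝ≥0∞) ≠ ∞) := ⟨by simp⟩
  have hc : Continuous fun h : ℝ => (DomAddAct.mk h) +ᵥ hk.toLp k := by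
    have : Continuous fun h : ℝ => DomAddAct.mk h := DomAddAct.continuous_mk
    exact this.vadd continuous_const
  have h0 := Metric.continuous_iff.1 hc 0 (Real.sqrt ε) (Real.sqrt_pos.2 hε)
  obtain ⟨δ, hδ, H⟩ := h0
  refine ⟨δ, hδ, fun h hh => ?_⟩
  have h1 := H h (by simpa using hh)
  rw [dist_eq_norm] at h1
  have hk' : MemLp (fun u => k (h +ᵥ u)) 2 volume :=
    hk.comp_measurePreserving (measurePreserving_vadd h volume)
  have h2 : (DomAddAct.mk h +ᵥ hk.toLp k) - (DomAddAct.mk (0 : ℝ) +ᵥ hk.toLp k)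
      = (hk'.sub hk).toLp _ := by
    rw [DomAddAct.mk_vadd_toLp, MemLp.toLp_sub hk' hk]
    simp
  rw [h2] at h1
  have h3 := real_inner_self_eq_norm_sq ((hk'.sub hk).toLp (fun u => k (h +ᵥ u) - k u))
  rw [inner_toLp_eq] at h3
  have h4 : ∫ u, (k (u + h) - k u) ^ 2 =
      ∫ u, inner ℝ (k (h +ᵥ u) - k u) (k (h +ᵥ u) - k u) := by
    refine integral_congr_ae (Filter.Eventually.of_forall fun u => ?_)
    simp [pow_two, add_comm]
  rw [h4]
  refine h3.le.trans ?_
  have := pow_le_pow_left₀ (norm_nonneg _) h1.le 2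
  rwa [Real.sq_sqrt hε.le] at this

/-- Weak compactness of balls: a system of linear equations in a Hilbert space that is
approximately solvable, uniformly in the equations, with norm nearly at most `r`, has an exact
solution in the closed ball of radius `r`. -/
lemma exists_inner_eq_of_approx {H ι : Type*} [NormedAddCommGroup H] [InnerProductSpace ℝ H]
    [CompleteSpace H] (k : ι → H) (y : ι → ℝ) (r : ℝ)
    (happ : ∀ ε > 0, ∃ v : H, ‖v‖ ≤ r + ε ∧ ∀ i, |inner ℝ (k i) v - y i| ≤ ε) :
    ∃ v : H, ‖v‖ ≤ r ∧ ∀ i, inner ℝ (k i) v = y i := by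
  choose! v hv using happ
  let e : ℕ → ℝ := fun n => 1 / ((n : ℝ) + 1)
  have he : ∀ n, 0 < e n := fun n => by positivity
  have he0 : Filter.Tendsto e Filter.atTop (nhds 0) := tendsto_one_div_add_atTop_nhds_zero_nat
  let φ : ℕ → WeakDual ℝ H := fun n =>
    StrongDual.toWeakDual (InnerProductSpace.toDual ℝ H (v (e n)))
  let U : Ultrafilter ℕ := Filter.hyperfilter ℕ
  have hU : (U : Filter ℕ) ≤ Filter.atTop := Nat.hyperfilter_le_atTop
  have hmem : ∀ s : ℝ, r < s → ∀ᶠ n in (U : Filter ℕ),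
      φ n ∈ WeakDual.toStrongDual ⁻¹' Metric.closedBall (0 : StrongDual ℝ H) s := by
    intro s hs
    refine hU ?_
    have := he0.eventually (gt_mem_nhds (show (0 : ℝ) < s - r by linarith))
    filter_upwards [this] with n hn
    have h1 := (hv (e n) (he n)).1
    simp only [φ, mem_preimage, mem_closedBall_zero_iff]
    change ‖InnerProductSpace.toDual ℝ H (v (e n))‖ ≤ s
    rw [LinearIsometryEquiv.norm_map]
    linarith
  obtain ⟨ψ, -, hψ⟩ := (WeakDual.isCompact_closedBall (𝕜 := ℝ) (0 : StrongDual ℝ H)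
    (r + 1)).ultrafilter_le_nhds (U.map φ) (by
      have h1 : φ ⁻¹' _ ∈ (U : Filter ℕ) := hmem (r + 1) (by linarith)
      exact Filter.le_principal_iff.2 h1)
  have hψ' : Filter.Tendsto φ U (nhds ψ) := hψ
  refine ⟨(InnerProductSpace.toDual ℝ H).symm (WeakDual.toStrongDual ψ), ?_, fun i => ?_⟩
  · rw [LinearIsometryEquiv.norm_map]
    refine le_of_forall_gt_imp_ge_of_dense fun s hs => ?_
    have := (WeakDual.isClosed_closedBall (𝕜 := ℝ) (0 : StrongDual ℝ H) s).mem_of_tendsto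
      hψ' (hmem s hs)
    simpa using this
  · rw [real_inner_comm, InnerProductSpace.toDual_symm_apply]
    have h1 : Filter.Tendsto (fun n => φ n (k i)) U (nhds (ψ (k i))) :=
      ((WeakDual.eval_continuous (k i)).tendsto ψ).comp hψ'
    have h2 : Filter.Tendsto (fun n => φ n (k i)) Filter.atTop (nhds (y i)) := by
      rw [tendsto_iff_dist_tendsto_zero]
      refine squeeze_zero (fun _ => dist_nonneg) (fun n => ?_) he0
      have := (hv (e n) (he n)).2 i
      rw [real_inner_comm] at this
      exact this
    exact tendsto_nhds_unique h1 (h2.mono_left hU)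

/-- Grönwall's inequality in integral form. At a maximum point of `e^{-2bt} u(t)` the integral term
is absorbed into the left-hand side. -/
lemma gronwall_integral {T a b : ℝ} (hT : 0 < T) (hb : 0 < b) {u : ℝ → ℝ}
    (hu : Continuous u) (hu0 : ∀ t, 0 ≤ u t)
    (h : ∀ t ∈ Icc 0 T, u t ≤ a + b * ∫ s in Ioc 0 t, u s) :
    ∀ t ∈ Icc 0 T, u t ≤ 2 * a * Real.exp (2 * b * T) := by
  obtain ⟨t₀, ht₀, hmax⟩ := isCompact_Icc.exists_isMaxOn (nonempty_Icc.2 hT.le)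
    (f := fun t => Real.exp (-(2 * b) * t) * u t) (by fun_prop)
  have hle : ∀ s ∈ Icc 0 T, u s ≤ Real.exp (2 * b * s) * (Real.exp (-(2 * b) * t₀) * u t₀) := by
    intro s hs
    have h1 : Real.exp (-(2 * b) * s) * u s ≤ Real.exp (-(2 * b) * t₀) * u t₀ := hmax hs
    have h2 := mul_le_mul_of_nonneg_left h1 (Real.exp_pos (2 * b * s)).le
    rw [← mul_assoc, ← Real.exp_add] at h2
    simpa using h2
  set W := Real.exp (-(2 * b) * t₀) * u t₀ with hW
  have hW0 : 0 ≤ W := mul_nonneg (Real.exp_pos _).le (hu0 _)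
  have hint : ∫ s in Ioc 0 t₀, u s ≤ Real.exp (2 * b * t₀) / (2 * b) * W := by
    calc ∫ s in Ioc 0 t₀, u s ≤ ∫ s in Ioc 0 t₀, Real.exp (2 * b * s) * W := by
          refine setIntegral_mono_on ?_ ?_ measurableSet_Ioc fun s hs =>
            hle s ⟨hs.1.le, hs.2.trans ht₀.2⟩
          · exact (hu.integrableOn_Icc).mono_set Ioc_subset_Icc_self
          · exact (Continuous.integrableOn_Icc (by fun_prop)).mono_set Ioc_subset_Icc_self
      _ = (∫ s in (0 : ℝ)..t₀, Real.exp (2 * b * s)) * W := by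
          rw [intervalIntegral.integral_of_le ht₀.1, integral_mul_const]
      _ ≤ _ := by
          refine mul_le_mul_of_nonneg_right ?_ hW0
          rw [intervalIntegral.integral_comp_mul_left (fun x => Real.exp x) (by positivity),
            integral_exp, smul_eq_mul, div_eq_inv_mul]
          refine mul_le_mul_of_nonneg_left ?_ (by positivity)
          simp
  have hW2 : W ≤ 2 * a := by
    have h1 := h t₀ ht₀
    have h2 : u t₀ = Real.exp (2 * b * t₀) * W := by
      rw [hW, ← mul_assoc, ← Real.exp_add]; simp
    have h3 : b * (∫ s in Ioc 0 t₀, u s) ≤ Real.exp (2 * b * t₀) * W / 2 := by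
      refine (mul_le_mul_of_nonneg_left hint hb.le).trans (le_of_eq ?_)
      field_simp
    have h4 : Real.exp (2 * b * t₀) * W ≤ 2 * a := by linarith
    have h5 : 1 ≤ Real.exp (2 * b * t₀) := Real.one_le_exp (by have := ht₀.1; positivity)
    nlinarith
  intro t ht
  have h1 := hle t ht
  have h2 : Real.exp (2 * b * t) ≤ Real.exp (2 * b * T) :=
    Real.exp_le_exp.2 (by have := ht.2; gcongr)
  calc u t ≤ _ := h1
    _ ≤ Real.exp (2 * b * T) * (2 * a) := by gcongr
    _ = _ := by ring

/-! ### The Volterra operator -/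

/-- The entry `K i j` of the kernel, restricted to `[0, T)` and extended by zero to `ℝ`. -/
noncomputable def truncK {d : ℕ} (T : ℝ) (K : ℝ → Matrix (Fin d) (Fin d) ℝ) (i j : Fin d) :
    ℝ → ℝ :=
  (Ico 0 T).indicator fun t => K t i j

/-- The Volterra operator `f ↦ ∫₀ᵗ K(t-s) f(s) ds`. Since the truncated kernel vanishes on the
negative half-line, the integral is taken over the fixed interval `(0, T]`. -/
noncomputable def volt {d : ℕ} (T : ℝ) (K : ℝ → Matrix (Fin d) (Fin d) ℝ)
    (f : ℝ → Fin d → ℝ) (t : ℝ) (i : Fin d) : ℝ :=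
  ∑ j, ∫ s in Ioc 0 T, truncK T K i j (t - s) * f s j

/-- Componentwise square integrability on `(0, T]`. -/
def IsL2 {n : ℕ} (T : ℝ) (f : ℝ → Fin n → ℝ) : Prop :=
  ∀ j, MemLp (fun s => f s j) 2 (volume.restrict (Ioc 0 T))

lemma sq_entry_le_frobNorm_sq {n m : ℕ} (M : Matrix (Fin n) (Fin m) ℝ) (i : Fin n) (j : Fin m) :
    M i j ^ 2 ≤ frobNorm M ^ 2 := by
  unfold frobNorm
  rw [Real.sq_sqrt (by positivity)]
  calc M i j ^ 2 ≤ ∑ j, M i j ^ 2 :=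
        Finset.single_le_sum (f := fun j => M i j ^ 2) (fun _ _ => sq_nonneg _) (Finset.mem_univ j)
    _ ≤ _ := Finset.single_le_sum (f := fun i => ∑ j, M i j ^ 2)
        (fun _ _ => Finset.sum_nonneg fun _ _ => sq_nonneg _) (Finset.mem_univ i)

lemma memLp_truncK {d : ℕ} {T γ : ℝ} {K : ℝ → Matrix (Fin d) (Fin d) ℝ}
    (hKmeas : ∀ i j, Measurable fun t => K t i j) (hK : AssumptionK T γ K) (i j : Fin d) :
    MemLp (truncK T K i j) 2 volume := by
  unfold truncK
  rw [memLp_indicator_iff_restrict measurableSet_Ico,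
    memLp_two_iff_integrable_sq (hKmeas i j).aestronglyMeasurable]
  have h1 : IntegrableOn (fun t => frobNorm (K t) ^ 2) (Ico 0 T) :=
    ((integrableOn_Icc_iff_integrableOn_Ioc).2 hK.1).mono_set Ico_subset_Icc_self
  refine Integrable.mono' h1 ((hKmeas i j).pow_const 2).aestronglyMeasurable
    (Filter.Eventually.of_forall fun t => ?_)
  rw [Real.norm_of_nonneg (sq_nonneg _)]
  exact sq_entry_le_frobNorm_sq _ _ _

section Volterra

variable {d : ℕ} {T : ℝ} {K : ℝ → Matrix (Fin d) (Fin d) ℝ}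

lemma memLp_truncK_sub (hk : ∀ i j, MemLp (truncK T K i j) 2 volume) (i j : Fin d) (t : ℝ) :
    MemLp (fun s => truncK T K i j (t - s)) 2 volume :=
  (hk i j).comp_measurePreserving (volume.measurePreserving_sub_left t)

lemma integrable_truncK_mul (hk : ∀ i j, MemLp (truncK T K i j) 2 volume) {f : ℝ → Fin d → ℝ}
    (hf : IsL2 T f) (t : ℝ) (i j : Fin d) :
    IntegrableOn (fun s => truncK T K i j (t - s) * f s j) (Ioc 0 T) :=
  ((memLp_truncK_sub hk i j t).restrict _).integrable_mul (hf j)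

lemma truncK_sub_of_mem {t s : ℝ} (ht : t ∈ Icc 0 T) (hs : s ∈ Ioc 0 t) (i j : Fin d) :
    truncK T K i j (t - s) = K (t - s) i j :=
  indicator_of_mem (show t - s ∈ Ico 0 T from ⟨by linarith [hs.2], by linarith [hs.1, ht.2]⟩) _

lemma setIntegral_truncK_mul {t : ℝ} (ht : t ∈ Icc 0 T) (f : ℝ → Fin d → ℝ) (i j : Fin d) :
    ∫ s in Ioc 0 T, truncK T K i j (t - s) * f s j =
      ∫ s in Ioc 0 t, truncK T K i j (t - s) * f s j := by
  refine setIntegral_eq_of_subset_of_forall_sdiff_eq_zero measurableSet_Ioc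
    (Ioc_subset_Ioc_right ht.2) fun s hs => ?_
  have : t < s := by
    by_contra h
    exact hs.2 ⟨hs.1.1, not_lt.1 h⟩
  have h0 : truncK T K i j (t - s) = 0 :=
    indicator_of_notMem (fun h => by linarith [h.1]) _
  rw [h0, zero_mul]

/-- The Volterra operator is the convolution integral of the limiting equation. -/
lemma integral_mulVec_eq_volt (hk : ∀ i j, MemLp (truncK T K i j) 2 volume)
    {f : ℝ → Fin d → ℝ} (hf : IsL2 T f) {t : ℝ} (ht : t ∈ Icc 0 T) :
    IntegrableOn (fun s => (K (t - s)).mulVec (f s)) (Ioc 0 t) ∧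
      ∫ s in Ioc 0 t, (K (t - s)).mulVec (f s) = volt T K f t := by
  have heq : ∀ i, EqOn (fun s => (K (t - s)).mulVec (f s) i)
      (fun s => ∑ j, truncK T K i j (t - s) * f s j) (Ioc 0 t) := by
    intro i s hs
    simp only [Matrix.mulVec, dotProduct]
    exact Finset.sum_congr rfl fun j _ => by rw [truncK_sub_of_mem ht hs]
  have hij : ∀ i j, IntegrableOn (fun s => truncK T K i j (t - s) * f s j) (Ioc 0 t) :=
    fun i j => (integrable_truncK_mul hk hf t i j).mono_set (Ioc_subset_Ioc_right ht.2)
  have hint : ∀ i, IntegrableOn (fun s => (K (t - s)).mulVec (f s) i) (Ioc 0 t) := by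
    intro i
    rw [integrableOn_congr_fun (heq i) measurableSet_Ioc]
    exact integrable_finsetSum _ fun j _ => hij i j
  refine ⟨Integrable.of_eval hint, ?_⟩
  ext i
  rw [eval_integral hint, setIntegral_congr_fun measurableSet_Ioc (heq i),
    integral_finsetSum _ fun j _ => hij i j]
  exact Finset.sum_congr rfl fun j _ => (setIntegral_truncK_mul ht f i j).symm

lemma volt_add (hk : ∀ i j, MemLp (truncK T K i j) 2 volume) {f g : ℝ → Fin d → ℝ}
    (hf : IsL2 T f) (hg : IsL2 T g) (t : ℝ) (i : Fin d) :
    volt T K (fun s => f s + g s) t i = volt T K f t i + volt T K g t i := by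
  unfold volt
  rw [← Finset.sum_add_distrib]
  refine Finset.sum_congr rfl fun j _ => ?_
  rw [← integral_add (integrable_truncK_mul hk hf t i j) (integrable_truncK_mul hk hg t i j)]
  simp [mul_add]

lemma volt_sub (hk : ∀ i j, MemLp (truncK T K i j) 2 volume) {f g : ℝ → Fin d → ℝ}
    (hf : IsL2 T f) (hg : IsL2 T g) (t : ℝ) (i : Fin d) :
    volt T K (fun s => f s - g s) t i = volt T K f t i - volt T K g t i := by
  unfold volt
  rw [← Finset.sum_sub_distrib]
  refine Finset.sum_congr rfl fun j _ => ?_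
  rw [← integral_sub (integrable_truncK_mul hk hf t i j) (integrable_truncK_mul hk hg t i j)]
  simp [mul_sub]

/-- The causal form of the `L² → L^∞` bound: only the values of `f` on `(0, t]` enter. -/
lemma exists_volt_sq_le (hk : ∀ i j, MemLp (truncK T K i j) 2 volume) :
    ∃ C > 0, ∀ f : ℝ → Fin d → ℝ, IsL2 T f → ∀ t ∈ Icc 0 T, ∀ i,
      volt T K f t i ^ 2 ≤ C * ∑ j, ∫ s in Ioc 0 t, f s j ^ 2 := by
  let c : ℝ := ∑ i, ∑ j, ∫ u, truncK T K i j u ^ 2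
  have hc : 0 ≤ c := Finset.sum_nonneg fun i _ => Finset.sum_nonneg fun j _ =>
    integral_nonneg fun u => sq_nonneg _
  have hcij : ∀ i j, ∫ u, truncK T K i j u ^ 2 ≤ c := fun i j =>
    (Finset.single_le_sum (f := fun j => ∫ u, truncK T K i j u ^ 2)
      (fun _ _ => integral_nonneg fun u => sq_nonneg _) (Finset.mem_univ j)).trans
    (Finset.single_le_sum (f := fun i => ∑ j, ∫ u, truncK T K i j u ^ 2)
      (fun _ _ => Finset.sum_nonneg fun _ _ => integral_nonneg fun u => sq_nonneg _)
      (Finset.mem_univ i))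
  refine ⟨d * c + 1, by positivity, fun f hf t ht i => ?_⟩
  have hf' : ∀ j, MemLp (fun s => f s j) 2 (volume.restrict (Ioc 0 t)) := fun j =>
    (hf j).mono_measure (Measure.restrict_mono (Ioc_subset_Ioc_right ht.2) le_rfl)
  have hS : 0 ≤ ∑ j, ∫ s in Ioc 0 t, f s j ^ 2 :=
    Finset.sum_nonneg fun j _ => integral_nonneg fun u => sq_nonneg _
  calc volt T K f t i ^ 2
      ≤ d * ∑ j, (∫ s in Ioc 0 T, truncK T K i j (t - s) * f s j) ^ 2 := by
        simpa [volt] using sq_sum_le_card_mul_sum_sq (s := Finset.univ)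
          (f := fun j => ∫ s in Ioc 0 T, truncK T K i j (t - s) * f s j)
    _ ≤ d * ∑ j, c * ∫ s in Ioc 0 t, f s j ^ 2 := by
        gcongr with j
        rw [setIntegral_truncK_mul ht]
        have hm := memLp_truncK_sub hk i j t
        refine (sq_integral_mul_le (hm.restrict _) (hf' j)).trans ?_
        refine mul_le_mul_of_nonneg_right ?_ (integral_nonneg fun u => sq_nonneg _)
        refine (setIntegral_le_integral hm.integrable_sq
          (Filter.Eventually.of_forall fun u => sq_nonneg _)).trans ?_
        rw [integral_sub_left_eq_self (fun u => truncK T K i j u ^ 2)]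
        exact hcij i j
    _ = (d * c) * ∑ j, ∫ s in Ioc 0 t, f s j ^ 2 := by rw [← Finset.mul_sum]; ring
    _ ≤ _ := by gcongr; linarith

/-- Images of bounded sets of `L²` are uniformly equicontinuous. -/
lemma exists_volt_sub_sq_le (hk : ∀ i j, MemLp (truncK T K i j) 2 volume) {ε : ℝ} (hε : 0 < ε) :
    ∃ δ > 0, ∀ f : ℝ → Fin d → ℝ, IsL2 T f → ∀ t t' : ℝ, |t - t'| < δ → ∀ i,
      (volt T K f t i - volt T K f t' i) ^ 2 ≤ ε * ∑ j, ∫ s in Ioc 0 T, f s j ^ 2 := by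
  have hε' : 0 < ε / (d + 1) := by positivity
  choose δ hδ H using fun p : Fin d × Fin d =>
    exists_integral_translate_sub_sq_le (hk p.1 p.2) hε'
  obtain ⟨δ₀, hδ₀, hδ₀'⟩ : ∃ δ₀ > 0, ∀ p, δ₀ ≤ δ p := by
    rcases isEmpty_or_nonempty (Fin d × Fin d) with h | h
    · exact ⟨1, one_pos, fun p => h.elim p⟩
    · obtain ⟨p, hp⟩ := Finite.exists_min δ
      exact ⟨δ p, hδ p, hp⟩
  refine ⟨δ₀, hδ₀, fun f hf t t' htt i => ?_⟩
  have hm : ∀ j, MemLp (fun s => truncK T K i j (t - s) - truncK T K i j (t' - s)) 2 volume :=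
    fun j => (memLp_truncK_sub hk i j t).sub (memLp_truncK_sub hk i j t')
  have hS : 0 ≤ ∑ j, ∫ s in Ioc 0 T, f s j ^ 2 :=
    Finset.sum_nonneg fun j _ => integral_nonneg fun u => sq_nonneg _
  have h1 : volt T K f t i - volt T K f t' i =
      ∑ j, ∫ s in Ioc 0 T, (truncK T K i j (t - s) - truncK T K i j (t' - s)) * f s j := by
    unfold volt
    rw [← Finset.sum_sub_distrib]
    refine Finset.sum_congr rfl fun j _ => ?_
    rw [← integral_sub (integrable_truncK_mul hk hf t i j) (integrable_truncK_mul hk hf t' i j)]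
    simp [sub_mul]
  rw [h1]
  calc _ ≤ d * ∑ j, (∫ s in Ioc 0 T,
        (truncK T K i j (t - s) - truncK T K i j (t' - s)) * f s j) ^ 2 := by
        simpa using sq_sum_le_card_mul_sum_sq (s := Finset.univ)
          (f := fun j => ∫ s in Ioc 0 T,
            (truncK T K i j (t - s) - truncK T K i j (t' - s)) * f s j)
    _ ≤ d * ∑ j, ε / (d + 1) * ∫ s in Ioc 0 T, f s j ^ 2 := by
        gcongr with j
        refine (sq_integral_mul_le ((hm j).restrict _) (hf j)).trans ?_
        refine mul_le_mul_of_nonneg_right ?_ (integral_nonneg fun u => sq_nonneg _)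
        refine (setIntegral_le_integral (hm j).integrable_sq
          (Filter.Eventually.of_forall fun u => sq_nonneg _)).trans ?_
        have h2 := integral_sub_left_eq_self
          (fun u => (truncK T K i j (u + (t - t')) - truncK T K i j u) ^ 2) volume t'
        have h3 : ∀ s, t' - s + (t - t') = t - s := fun s => by ring
        simp only [h3] at h2
        rw [h2]
        exact H (i, j) (t - t') (htt.trans_le (hδ₀' _))
    _ = (d / (d + 1) * ε) * ∑ j, ∫ s in Ioc 0 T, f s j ^ 2 := by rw [← Finset.mul_sum]; ring
    _ ≤ _ := by
        gcongr
        have : (d : ℝ) / (d + 1) ≤ 1 := by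
          rw [div_le_one (by positivity)]; linarith
        nlinarith

end Volterra

/-! ### Bounded coefficients -/

lemma euclNorm_sq {n : ℕ} (x : Fin n → ℝ) : euclNorm x ^ 2 = ∑ i, x i ^ 2 :=
  Real.sq_sqrt (Finset.sum_nonneg fun _ _ => sq_nonneg _)

lemma mulVec_sq_le {n p : ℕ} (M : Matrix (Fin n) (Fin p) ℝ) (x : Fin p → ℝ) (j : Fin n) :
    M.mulVec x j ^ 2 ≤ frobNorm M ^ 2 * euclNorm x ^ 2 := by
  rw [euclNorm_sq]
  unfold frobNorm
  rw [Real.sq_sqrt (by positivity)]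
  simp only [Matrix.mulVec, dotProduct]
  refine (Finset.sum_mul_sq_le_sq_mul_sq _ _ _).trans ?_
  gcongr
  exact Finset.single_le_sum (f := fun i => ∑ j, M i j ^ 2)
    (fun _ _ => Finset.sum_nonneg fun _ _ => sq_nonneg _) (Finset.mem_univ j)

section Coefficients

variable {d p : ℕ} {T : ℝ} {K : ℝ → Matrix (Fin d) (Fin d) ℝ}
  {M : ℝ → Matrix (Fin d) (Fin p) ℝ}

lemma measurable_mulVec (hM : ∀ i j, Measurable fun t => M t i j) {x : ℝ → Fin p → ℝ}
    (hx : Measurable x) (j : Fin d) : Measurable fun s => (M s).mulVec (x s) j := by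
  simp only [Matrix.mulVec, dotProduct]
  have := fun l => (measurable_pi_apply l).comp hx
  exact Finset.measurable_fun_sum _ fun l _ => (hM j l).mul (this l)

lemma mulVec_sq_le_of_mem {b : ℝ} (hb : ∀ t ∈ Icc 0 T, frobNorm (M t) ≤ b) {s : ℝ}
    (hs : s ∈ Ioc 0 T) (x : Fin p → ℝ) (j : Fin d) :
    (M s).mulVec x j ^ 2 ≤ b ^ 2 * euclNorm x ^ 2 := by
  refine (mulVec_sq_le _ _ _).trans ?_
  have h0 : 0 ≤ frobNorm (M s) := Real.sqrt_nonneg _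
  gcongr
  exact hb s ⟨hs.1.le, hs.2⟩

lemma isL2_mulVec (hM : ∀ i j, Measurable fun t => M t i j)
    {b : ℝ} (hb : ∀ t ∈ Icc 0 T, frobNorm (M t) ≤ b) {x : ℝ → Fin p → ℝ} (hx : Measurable x)
    (hx2 : IntegrableOn (fun s => euclNorm (x s) ^ 2) (Ioc 0 T)) :
    IsL2 T fun s => (M s).mulVec (x s) := by
  intro j
  have hm := measurable_mulVec hM hx j
  rw [memLp_two_iff_integrable_sq hm.aestronglyMeasurable]
  refine Integrable.mono' (hx2.const_mul (b ^ 2)) (hm.pow_const 2).aestronglyMeasurable ?_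
  filter_upwards [ae_restrict_mem measurableSet_Ioc] with s hs
  rw [Real.norm_of_nonneg (sq_nonneg _)]
  exact mulVec_sq_le_of_mem hb hs _ _

lemma sum_integral_mulVec_sq_le (hM : ∀ i j, Measurable fun t => M t i j)
    {b : ℝ} (hb : ∀ t ∈ Icc 0 T, frobNorm (M t) ≤ b) {x : ℝ → Fin p → ℝ} (hx : Measurable x)
    (hx2 : IntegrableOn (fun s => euclNorm (x s) ^ 2) (Ioc 0 T)) {t : ℝ} (ht : t ∈ Icc 0 T) :
    ∑ j, ∫ s in Ioc 0 t, (M s).mulVec (x s) j ^ 2 ≤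
      d * b ^ 2 * ∫ s in Ioc 0 t, euclNorm (x s) ^ 2 := by
  have hsub : Ioc 0 t ⊆ Ioc 0 T := Ioc_subset_Ioc_right ht.2
  calc ∑ j, ∫ s in Ioc 0 t, (M s).mulVec (x s) j ^ 2
      ≤ ∑ _j : Fin d, ∫ s in Ioc 0 t, b ^ 2 * euclNorm (x s) ^ 2 := by
        refine Finset.sum_le_sum fun j _ => ?_
        refine setIntegral_mono_on ?_ ((hx2.mono_set hsub).const_mul _) measurableSet_Ioc
          fun s hs => mulVec_sq_le_of_mem hb (hsub hs) _ _
        have : IntegrableOn (fun s => (M s).mulVec (x s) j ^ 2) (Ioc 0 T) :=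
          (isL2_mulVec hM hb hx hx2 j).integrable_sq
        exact this.mono_set hsub
    _ = _ := by rw [integral_const_mul]; simp; ring

lemma exists_volt_mulVec_sq_le (hk : ∀ i j, MemLp (truncK T K i j) 2 volume)
    (hM : ∀ i j, Measurable fun t => M t i j)
    {b : ℝ} (hb : ∀ t ∈ Icc 0 T, frobNorm (M t) ≤ b) :
    ∃ C > 0, ∀ x : ℝ → Fin p → ℝ, Measurable x →
      IntegrableOn (fun s => euclNorm (x s) ^ 2) (Ioc 0 T) → ∀ t ∈ Icc 0 T, ∀ i,
      volt T K (fun s => (M s).mulVec (x s)) t i ^ 2 ≤ C * ∫ s in Ioc 0 t, euclNorm (x s) ^ 2 := by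
  obtain ⟨C, hC, H⟩ := exists_volt_sq_le hk
  refine ⟨C * (d * b ^ 2 + 1), by positivity, fun x hx hx2 t ht i => ?_⟩
  refine (H _ (isL2_mulVec hM hb hx hx2) t ht i).trans ?_
  rw [mul_assoc]
  gcongr
  refine (sum_integral_mulVec_sq_le hM hb hx hx2 ht).trans ?_
  have : 0 ≤ ∫ s in Ioc 0 t, euclNorm (x s) ^ 2 := integral_nonneg fun s => sq_nonneg _
  gcongr
  linarith

lemma exists_volt_mulVec_sub_sq_le (hT : 0 < T) (hk : ∀ i j, MemLp (truncK T K i j) 2 volume)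
    (hM : ∀ i j, Measurable fun t => M t i j)
    {b : ℝ} (hb : ∀ t ∈ Icc 0 T, frobNorm (M t) ≤ b) {ε : ℝ} (hε : 0 < ε) :
    ∃ δ > 0, ∀ x : ℝ → Fin p → ℝ, Measurable x →
      IntegrableOn (fun s => euclNorm (x s) ^ 2) (Ioc 0 T) → ∀ t t' : ℝ, |t - t'| < δ → ∀ i,
      (volt T K (fun s => (M s).mulVec (x s)) t i - volt T K (fun s => (M s).mulVec (x s)) t' i) ^ 2
        ≤ ε * ∫ s in Ioc 0 T, euclNorm (x s) ^ 2 := by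
  have hc : 0 < (d : ℝ) * b ^ 2 + 1 := by positivity
  obtain ⟨δ, hδ, H⟩ := exists_volt_sub_sq_le hk (div_pos hε hc)
  refine ⟨δ, hδ, fun x hx hx2 t t' htt i => ?_⟩
  refine (H _ (isL2_mulVec hM hb hx hx2) t t' htt i).trans ?_
  have h0 : 0 ≤ ∫ s in Ioc 0 T, euclNorm (x s) ^ 2 := integral_nonneg fun s => sq_nonneg _
  calc _ ≤ ε / (d * b ^ 2 + 1) * ((d * b ^ 2 + 1) * ∫ s in Ioc 0 T, euclNorm (x s) ^ 2) := by
        gcongr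
        refine (sum_integral_mulVec_sq_le hM hb hx hx2 ⟨hT.le, le_rfl⟩).trans ?_
        gcongr
        linarith
    _ = _ := by field_simp

/-- The control enters the equation through inner products in `L²((0, T]; ℝᵖ)`: there are
elements `k (t, i)` representing `v ↦ (∫₀ᵗ K(t-s) M(s) v(s) ds)ᵢ`. -/
lemma exists_representer (hk : ∀ i j, MemLp (truncK T K i j) 2 volume)
    (hM : ∀ i j, Measurable fun t => M t i j)
    {b : ℝ} (hb : ∀ t ∈ Icc 0 T, frobNorm (M t) ≤ b) :
    ∃ k : ℝ × Fin d → Lp (EuclideanSpace ℝ (Fin p)) 2 (volume.restrict (Ioc 0 T)),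
      ∀ (v : ℝ → Fin p → ℝ) (_ : Measurable v)
        (_ : IntegrableOn (fun s => euclNorm (v s) ^ 2) (Ioc 0 T))
        (hv : MemLp (fun s => WithLp.toLp 2 (v s)) 2 (volume.restrict (Ioc 0 T))) (t : ℝ)
        (i : Fin d),
        inner ℝ (k (t, i)) (hv.toLp _) = volt T K (fun s => (M s).mulVec (v s)) t i := by
  have hmem : ∀ q : ℝ × Fin d, MemLp (fun s => (WithLp.toLp 2 fun l =>
      ∑ j, truncK T K q.2 j (q.1 - s) * M s j l : EuclideanSpace ℝ (Fin p))) 2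
      (volume.restrict (Ioc 0 T)) := by
    rintro ⟨t, i⟩
    refine MemLp.of_eval_piLp fun l => ?_
    change MemLp (fun s => ∑ j, truncK T K i j (t - s) * M s j l) 2 (volume.restrict (Ioc 0 T))
    refine memLp_finsetSum _ fun j _ => ?_
    have h1 := (memLp_truncK_sub hk i j t).restrict (Ioc 0 T)
    refine h1.of_le_mul (c := b) (h1.1.mul (hM j l).aestronglyMeasurable) ?_
    filter_upwards [ae_restrict_mem measurableSet_Ioc] with s hs
    rw [norm_mul, mul_comm]
    gcongr
    have h0 : 0 ≤ frobNorm (M s) := Real.sqrt_nonneg _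
    exact (abs_le_of_sq_le_sq (sq_entry_le_frobNorm_sq (M s) j l) h0).trans
      (hb s ⟨hs.1.le, hs.2⟩)
  refine ⟨fun q => (hmem q).toLp _, fun v hvm hv2 hv t i => ?_⟩
  rw [inner_toLp_eq]
  unfold volt
  rw [← integral_finsetSum _ fun j _ =>
    integrable_truncK_mul hk (isL2_mulVec hM hb hvm hv2) t i j]
  refine integral_congr_ae (Filter.Eventually.of_forall fun s => ?_)
  simp only [PiLp.inner_apply, RCLike.inner_apply, conj_trivial, Matrix.mulVec, dotProduct,
    Finset.mul_sum]
  rw [Finset.sum_comm]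
  refine Finset.sum_congr rfl fun j _ => Finset.sum_congr rfl fun l _ => ?_
  ring

end Coefficients

lemma inner_toLp_self {n : ℕ} (x : Fin n → ℝ) :
    inner ℝ (WithLp.toLp 2 x) (WithLp.toLp 2 x) = euclNorm x ^ 2 := by
  rw [euclNorm_sq, PiLp.inner_apply]
  simp [pow_two]

lemma memLp_toLp {n : ℕ} {T : ℝ} {v : ℝ → Fin n → ℝ} (hv : Measurable v)
    (hv2 : IntegrableOn (fun s => euclNorm (v s) ^ 2) (Ioc 0 T)) :
    MemLp (fun s => WithLp.toLp 2 (v s)) 2 (volume.restrict (Ioc 0 T)) := by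
  refine MemLp.of_eval_piLp fun l => ?_
  have hm : Measurable fun s => v s l := (measurable_pi_apply l).comp hv
  refine (memLp_two_iff_integrable_sq hm.aestronglyMeasurable).2 ?_
  refine Integrable.mono' hv2 (hm.pow_const 2).aestronglyMeasurable
    (Filter.Eventually.of_forall fun s => ?_)
  rw [Real.norm_of_nonneg (sq_nonneg _), euclNorm_sq]
  exact Finset.single_le_sum (f := fun l => v s l ^ 2) (fun _ _ => sq_nonneg _)
    (Finset.mem_univ l)

lemma norm_toLp_sq {n : ℕ} {T : ℝ} {v : ℝ → Fin n → ℝ}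
    (hv : MemLp (fun s => WithLp.toLp 2 (v s)) 2 (volume.restrict (Ioc 0 T))) :
    ‖hv.toLp _‖ ^ 2 = ∫ s in Ioc 0 T, euclNorm (v s) ^ 2 := by
  rw [← real_inner_self_eq_norm_sq, inner_toLp_eq]
  simp only [inner_toLp_self]

/-- Every element of `L²((0, T]; ℝⁿ)` has a Borel representative with the required energy. -/
lemma exists_control_of_Lp {n : ℕ} {T : ℝ}
    (V : Lp (EuclideanSpace ℝ (Fin n)) 2 (volume.restrict (Ioc 0 T))) :
    ∃ v : ℝ → Fin n → ℝ, Measurable v ∧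
      IntegrableOn (fun s => euclNorm (v s) ^ 2) (Ioc 0 T) ∧
      ∃ hv : MemLp (fun s => WithLp.toLp 2 (v s)) 2 (volume.restrict (Ioc 0 T)),
        hv.toLp _ = V := by
  have hm : Measurable V := (Lp.stronglyMeasurable V).measurable
  have hv : MemLp (fun s => WithLp.toLp 2 (WithLp.ofLp (V s))) 2 (volume.restrict (Ioc 0 T)) :=
    Lp.memLp V
  refine ⟨fun s => WithLp.ofLp (V s), ?_, ?_, hv, Lp.toLp_coeFn V _⟩
  · exact (WithLp.measurable_ofLp 2 _).comp hm
  · have := hv.integrable_norm_pow (p := 2) (by simp)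
    refine this.congr (Filter.Eventually.of_forall fun s => ?_)
    simp only [← inner_toLp_self, real_inner_self_eq_norm_sq]

/-! ### The limiting equation and the rate function -/

section Rate

variable {d m : ℕ} {T : ℝ} {K : ℝ → Matrix (Fin d) (Fin d) ℝ}
  {A : ℝ → Matrix (Fin d) (Fin d) ℝ} {B : ℝ → Matrix (Fin d) (Fin m) ℝ}

/-- The path `ψ` solves the limiting equation driven by the control `v`, in componentwise form. -/
def Solves (T : ℝ) (K : ℝ → Matrix (Fin d) (Fin d) ℝ)
    (A : ℝ → Matrix (Fin d) (Fin d) ℝ) (B : ℝ → Matrix (Fin d) (Fin m) ℝ)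
    (ψ : ℝ → Fin d → ℝ) (v : ℝ → Fin m → ℝ) : Prop :=
  ∀ t ∈ Icc 0 T, ∀ i, ψ t i =
    volt T K (fun s => (A s).mulVec (ψ s)) t i + volt T K (fun s => (B s).mulVec (v s)) t i

lemma integrableOn_euclNorm_sq_of_continuous {ψ : ℝ → Fin d → ℝ} (hψ : Continuous ψ) (t : ℝ) :
    IntegrableOn (fun s => euclNorm (ψ s) ^ 2) (Ioc 0 t) := by
  have : Continuous fun s => euclNorm (ψ s) ^ 2 := by
    simp only [euclNorm_sq]
    fun_prop
  exact this.integrableOn_Icc.mono_set Ioc_subset_Icc_self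

lemma integral_mulVec_add_eq (hk : ∀ i j, MemLp (truncK T K i j) 2 volume)
    (hA : ∀ i j, Measurable fun t => A t i j) (hB : ∀ i j, Measurable fun t => B t i j)
    {a b : ℝ} (ha : ∀ t ∈ Icc 0 T, frobNorm (A t) ≤ a) (hb : ∀ t ∈ Icc 0 T, frobNorm (B t) ≤ b)
    {ψ : ℝ → Fin d → ℝ} (hψ : Continuous ψ) {v : ℝ → Fin m → ℝ} (hv : Measurable v)
    (hv2 : IntegrableOn (fun s => euclNorm (v s) ^ 2) (Ioc 0 T)) {t : ℝ} (ht : t ∈ Icc 0 T) :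
    IntegrableOn (fun s => (K (t - s)).mulVec ((A s).mulVec (ψ s) + (B s).mulVec (v s)))
      (Ioc 0 t) ∧
    ∀ i, (∫ s in Ioc 0 t, (K (t - s)).mulVec ((A s).mulVec (ψ s) + (B s).mulVec (v s))) i =
      volt T K (fun s => (A s).mulVec (ψ s)) t i + volt T K (fun s => (B s).mulVec (v s)) t i := by
  have h1 := isL2_mulVec hA ha hψ.measurable (integrableOn_euclNorm_sq_of_continuous hψ T)
  have h2 := isL2_mulVec hB hb hv hv2
  have h3 : IsL2 T fun s => (A s).mulVec (ψ s) + (B s).mulVec (v s) :=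
    fun j => (h1 j).add (h2 j)
  obtain ⟨h4, h5⟩ := integral_mulVec_eq_volt hk h3 ht
  refine ⟨h4, fun i => ?_⟩
  rw [h5, volt_add hk h1 h2]

lemma exists_control_of_rate_le (hT : 0 < T) (hk : ∀ i j, MemLp (truncK T K i j) 2 volume)
    (hA : ∀ i j, Measurable fun t => A t i j) (hB : ∀ i j, Measurable fun t => B t i j)
    {a b : ℝ} (ha : ∀ t ∈ Icc 0 T, frobNorm (A t) ≤ a) (hb : ∀ t ∈ Icc 0 T, frobNorm (B t) ≤ b)
    {N R : ℝ} (hR : 2 * N < R) (hR0 : 0 < R) {Ψ : C(Icc (0 : ℝ) T, Fin d → ℝ)}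
    (hΨ : rateLambda m T K A B Ψ ≤ ENNReal.ofReal N) :
    ∃ v : ℝ → Fin m → ℝ, Measurable v ∧
      IntegrableOn (fun s => euclNorm (v s) ^ 2) (Ioc 0 T) ∧
      ∫ s in Ioc 0 T, euclNorm (v s) ^ 2 ≤ R ∧ Solves T K A B (IccExtend hT.le Ψ) v := by
  have h1 : rateLambda m T K A B Ψ < ENNReal.ofReal (R / 2) :=
    hΨ.trans_lt ((ENNReal.ofReal_lt_ofReal_iff (by positivity)).2 (by linarith))
  obtain ⟨E, ⟨ψ, v, hv, hv2, -, heq, hΨψ, rfl⟩, hE⟩ := sInf_lt_iff.1 h1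
  have hE' := (ENNReal.ofReal_lt_ofReal_iff (by positivity)).1 hE
  refine ⟨v, hv, hv2, by linarith, fun t ht i => ?_⟩
  have hext : ∀ s ∈ Icc 0 T, IccExtend hT.le Ψ s = ψ s := fun s hs => by
    rw [IccExtend_of_mem hT.le _ hs, hΨψ]
  rw [← (integral_mulVec_add_eq hk hA hB ha hb (Ψ.continuous.Icc_extend') hv hv2 ht).2 i,
    hext t ht, (heq t ht).2]
  refine congrFun (setIntegral_congr_fun measurableSet_Ioc fun s hs => ?_) i
  simp only [hext s ⟨hs.1.le, hs.2.trans ht.2⟩]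

lemma rate_le_of_solves (hT : 0 < T) (hk : ∀ i j, MemLp (truncK T K i j) 2 volume)
    (hA : ∀ i j, Measurable fun t => A t i j) (hB : ∀ i j, Measurable fun t => B t i j)
    {a b : ℝ} (ha : ∀ t ∈ Icc 0 T, frobNorm (A t) ≤ a) (hb : ∀ t ∈ Icc 0 T, frobNorm (B t) ≤ b)
    {N : ℝ} {Ψ : C(Icc (0 : ℝ) T, Fin d → ℝ)} {v : ℝ → Fin m → ℝ} (hv : Measurable v)
    (hv2 : IntegrableOn (fun s => euclNorm (v s) ^ 2) (Ioc 0 T))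
    (hvN : ∫ s in Ioc 0 T, euclNorm (v s) ^ 2 ≤ 2 * N)
    (hsol : Solves T K A B (IccExtend hT.le Ψ) v) :
    rateLambda m T K A B Ψ ≤ ENNReal.ofReal N := by
  have hc : Continuous (IccExtend hT.le Ψ) := Ψ.continuous.Icc_extend'
  refine (sInf_le ?_).trans (ENNReal.ofReal_le_ofReal
    (show 2⁻¹ * ∫ s in Ioc 0 T, euclNorm (v s) ^ 2 ≤ N by linarith))
  refine ⟨IccExtend hT.le Ψ, v, hv, hv2, hc.continuousOn, fun t ht => ?_, fun x => ?_, rfl⟩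
  · obtain ⟨h1, h2⟩ := integral_mulVec_add_eq hk hA hB ha hb hc hv hv2 ht
    refine ⟨h1, ?_⟩
    ext i
    rw [h2 i, hsol t ht i]
  · rw [IccExtend_val]

/-- A priori bound for solutions, by Grönwall's inequality for `|ψ|²`. -/
lemma exists_bound_of_solves (hT : 0 < T) (hk : ∀ i j, MemLp (truncK T K i j) 2 volume)
    (hA : ∀ i j, Measurable fun t => A t i j) (hB : ∀ i j, Measurable fun t => B t i j)
    {a b : ℝ} (ha : ∀ t ∈ Icc 0 T, frobNorm (A t) ≤ a) (hb : ∀ t ∈ Icc 0 T, frobNorm (B t) ≤ b)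
    (R : ℝ) (hR : 0 ≤ R) :
    ∃ D ≥ 0, ∀ (ψ : ℝ → Fin d → ℝ) (v : ℝ → Fin m → ℝ), Continuous ψ → Measurable v →
      IntegrableOn (fun s => euclNorm (v s) ^ 2) (Ioc 0 T) →
      ∫ s in Ioc 0 T, euclNorm (v s) ^ 2 ≤ R → Solves T K A B ψ v →
      ∀ t ∈ Icc 0 T, euclNorm (ψ t) ^ 2 ≤ D := by
  obtain ⟨C₁, hC₁, H₁⟩ := exists_volt_mulVec_sq_le hk hA ha
  obtain ⟨C₂, hC₂, H₂⟩ := exists_volt_mulVec_sq_le hk hB hb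
  -- `d + 1` in place of `d` keeps the Grönwall rate positive when `d = 0`
  refine ⟨2 * ((d + 1) * (2 * (C₂ * R))) * Real.exp (2 * ((d + 1) * (2 * C₁)) * T),
    by positivity, fun ψ v hψ hv hv2 hvR hsol => ?_⟩
  have hcont : Continuous fun s => euclNorm (ψ s) ^ 2 := by
    simp only [euclNorm_sq]
    fun_prop
  refine gronwall_integral hT (by positivity) hcont (fun t => sq_nonneg _) fun t ht => ?_
  have hψ2 := integrableOn_euclNorm_sq_of_continuous hψ T
  set I := ∫ s in Ioc 0 t, euclNorm (ψ s) ^ 2 with hI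
  have hI0 : 0 ≤ I := integral_nonneg fun s => sq_nonneg _
  have hJ : ∫ s in Ioc 0 t, euclNorm (v s) ^ 2 ≤ R :=
    (setIntegral_mono_set hv2 (Filter.Eventually.of_forall fun s => sq_nonneg _)
      (Filter.Eventually.of_forall (Ioc_subset_Ioc_right ht.2))).trans hvR
  have hcomp : ∀ i, ψ t i ^ 2 ≤ 2 * (C₁ * I) + 2 * (C₂ * R) := by
    intro i
    rw [hsol t ht i]
    have h1 := H₁ ψ hψ.measurable hψ2 t ht i
    have h2 := (H₂ v hv hv2 t ht i).trans (mul_le_mul_of_nonneg_left hJ hC₂.le)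
    have h3 := add_sq_le (a := volt T K (fun s => (A s).mulVec (ψ s)) t i)
      (b := volt T K (fun s => (B s).mulVec (v s)) t i)
    linarith
  rw [euclNorm_sq]
  calc ∑ i, ψ t i ^ 2 ≤ ∑ _i : Fin d, (2 * (C₁ * I) + 2 * (C₂ * R)) :=
        Finset.sum_le_sum fun i _ => hcomp i
    _ = d * (2 * (C₁ * I) + 2 * (C₂ * R)) := by
        rw [Finset.sum_const, Finset.card_univ, Fintype.card_fin, nsmul_eq_mul]
    _ ≤ (d + 1) * (2 * (C₁ * I) + 2 * (C₂ * R)) := by gcongr; linarith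
    _ = _ := by ring

/-- Solutions driven by controls of bounded energy have a common modulus of continuity. -/
lemma exists_modulus_of_solves (hT : 0 < T) (hk : ∀ i j, MemLp (truncK T K i j) 2 volume)
    (hA : ∀ i j, Measurable fun t => A t i j) (hB : ∀ i j, Measurable fun t => B t i j)
    {a b : ℝ} (ha : ∀ t ∈ Icc 0 T, frobNorm (A t) ≤ a) (hb : ∀ t ∈ Icc 0 T, frobNorm (B t) ≤ b)
    (R : ℝ) (hR : 0 ≤ R) {ε : ℝ} (hε : 0 < ε) :
    ∃ δ > 0, ∀ (ψ : ℝ → Fin d → ℝ) (v : ℝ → Fin m → ℝ), Continuous ψ → Measurable v →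
      IntegrableOn (fun s => euclNorm (v s) ^ 2) (Ioc 0 T) →
      ∫ s in Ioc 0 T, euclNorm (v s) ^ 2 ≤ R → Solves T K A B ψ v →
      ∀ t ∈ Icc 0 T, ∀ t' ∈ Icc 0 T, |t - t'| < δ → ∀ i, |ψ t i - ψ t' i| < ε := by
  obtain ⟨D, hD, hbound⟩ := exists_bound_of_solves hT hk hA hB ha hb R hR
  have hη : 0 < ε ^ 2 / (4 * (D * T + R + 1)) := by positivity
  set η := ε ^ 2 / (4 * (D * T + R + 1)) with hη_def
  obtain ⟨δ₁, hδ₁, H₁⟩ := exists_volt_mulVec_sub_sq_le hT hk hA ha hη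
  obtain ⟨δ₂, hδ₂, H₂⟩ := exists_volt_mulVec_sub_sq_le hT hk hB hb hη
  refine ⟨min δ₁ δ₂, lt_min hδ₁ hδ₂, fun ψ v hψ hv hv2 hvR hsol t ht t' ht' htt i => ?_⟩
  have hψ2 := integrableOn_euclNorm_sq_of_continuous hψ T
  have hψD : ∫ s in Ioc 0 T, euclNorm (ψ s) ^ 2 ≤ D * T := by
    calc ∫ s in Ioc 0 T, euclNorm (ψ s) ^ 2 ≤ ∫ s in Ioc 0 T, D :=
          setIntegral_mono_on hψ2 (by simp) measurableSet_Ioc fun s hs =>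
            hbound ψ v hψ hv hv2 hvR hsol s ⟨hs.1.le, hs.2⟩
      _ = D * T := by simp [hT.le, mul_comm]
  have h1 := (H₁ ψ hψ.measurable hψ2 t t' (htt.trans_le (min_le_left _ _)) i).trans
    (mul_le_mul_of_nonneg_left hψD hη.le)
  have h2 := (H₂ v hv hv2 t t' (htt.trans_le (min_le_right _ _)) i).trans
    (mul_le_mul_of_nonneg_left hvR hη.le)
  refine abs_lt_of_sq_lt_sq ?_ hε.le
  rw [hsol t ht i, hsol t' ht' i]
  have h3 := add_sq_le (a := volt T K (fun s => (A s).mulVec (ψ s)) t i -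
      volt T K (fun s => (A s).mulVec (ψ s)) t' i)
    (b := volt T K (fun s => (B s).mulVec (v s)) t i - volt T K (fun s => (B s).mulVec (v s)) t' i)
  rw [show ∀ x y z w : ℝ, x + y - (z + w) = (x - z) + (y - w) from fun x y z w => by ring]
  have h4 : η * (4 * (D * T + R + 1)) = ε ^ 2 := div_mul_cancel₀ _ (by positivity)
  nlinarith

/-- Closedness of the sublevel sets. If `Ψ` is a uniform limit of paths of the sublevel set, then
the linear equations for a control of `Ψ` are solvable up to small errors uniform in time, and weak
compactness of balls in `L²` yields an exact solution of the right energy. -/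
lemma isClosed_sublevel (hT : 0 < T) (hk : ∀ i j, MemLp (truncK T K i j) 2 volume)
    (hA : ∀ i j, Measurable fun t => A t i j) (hB : ∀ i j, Measurable fun t => B t i j)
    {a b : ℝ} (ha : ∀ t ∈ Icc 0 T, frobNorm (A t) ≤ a) (hb : ∀ t ∈ Icc 0 T, frobNorm (B t) ≤ b)
    {N : ℝ} (hN : 0 < N) :
    IsClosed {Ψ : C(Icc (0 : ℝ) T, Fin d → ℝ) |
      rateLambda m T K A B Ψ ≤ ENNReal.ofReal N} := by
  obtain ⟨C, hC, HC⟩ := exists_volt_mulVec_sq_le hk hA ha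
  obtain ⟨k, hk_inner⟩ := exists_representer (p := m) hk hB hb
  refine isClosed_of_closure_subset fun Ψ hΨ => ?_
  rw [Metric.mem_closure_iff] at hΨ
  set ψ := IccExtend hT.le Ψ with hψ_def
  have hψ : Continuous ψ := Ψ.continuous.Icc_extend'
  obtain ⟨V, hVN, hV⟩ := exists_inner_eq_of_approx
    (fun q : Icc (0 : ℝ) T × Fin d => k ((q.1 : ℝ), q.2))
    (fun q => ψ q.1 q.2 - volt T K (fun s => (A s).mulVec (ψ s)) q.1 q.2) (Real.sqrt (2 * N)) (by
      intro ε hε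
      set c := Real.sqrt (C * (d * T)) with hc
      have hc0 : 0 ≤ c := Real.sqrt_nonneg _
      have hη : 0 < ε / (1 + c) := by positivity
      obtain ⟨Φ, hΦ, hdist⟩ := hΨ _ hη
      set η := ε / (1 + c) with hη_def
      have hr : 2 * N < (Real.sqrt (2 * N) + ε) ^ 2 := by
        have h1 := Real.sq_sqrt (show 0 ≤ 2 * N by positivity)
        have h2 := Real.sqrt_nonneg (2 * N)
        nlinarith
      obtain ⟨v, hv, hv2, hvR, hsol⟩ :=
        exists_control_of_rate_le hT hk hA hB ha hb hr (by linarith) hΦ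
      set φ := IccExtend hT.le Φ with hφ_def
      have hφ : Continuous φ := Φ.continuous.Icc_extend'
      have hVm := memLp_toLp hv hv2
      refine ⟨hVm.toLp _, ?_, ?_⟩
      · refine abs_le_of_sq_le_sq' ?_ (by positivity) |>.2
        rw [norm_toLp_sq]
        exact hvR
      rintro ⟨t, i⟩
      rw [hk_inner v hv hv2 hVm]
      have hpt : ∀ s j, |φ s j - ψ s j| ≤ η := by
        intro s j
        have h1 : dist (Φ (projIcc 0 T hT.le s)) (Ψ (projIcc 0 T hT.le s)) ≤ dist Φ Ψ :=
          ContinuousMap.dist_apply_le_dist _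
        have h2 := (dist_le_pi_dist _ _ j).trans h1
        rw [dist_comm Φ Ψ] at h2
        exact h2.trans hdist.le
      have hdiff : Continuous fun s => φ s - ψ s := hφ.sub hψ
      have hsq : volt T K (fun s => (A s).mulVec (φ s - ψ s)) t i ^ 2 ≤ (c * η) ^ 2 := by
        refine (HC _ hdiff.measurable (integrableOn_euclNorm_sq_of_continuous hdiff T)
          t t.2 i).trans ?_
        rw [mul_pow, hc, Real.sq_sqrt (by positivity), mul_assoc]
        refine mul_le_mul_of_nonneg_left ?_ hC.le
        have hbd : ∀ s, euclNorm (φ s - ψ s) ^ 2 ≤ d * η ^ 2 := by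
          intro s
          rw [euclNorm_sq]
          calc ∑ j, (φ s - ψ s) j ^ 2 ≤ ∑ _j : Fin d, η ^ 2 :=
                Finset.sum_le_sum fun j _ => sq_le_sq' (abs_le.1 (hpt s j)).1 (abs_le.1 (hpt s j)).2
            _ = d * η ^ 2 := by simp
        calc ∫ s in Ioc 0 (t : ℝ), euclNorm (φ s - ψ s) ^ 2
            ≤ ∫ s in Ioc 0 (t : ℝ), (d * η ^ 2 : ℝ) :=
              setIntegral_mono_on (integrableOn_euclNorm_sq_of_continuous hdiff t)
                (integrableOn_const (by simp))
                measurableSet_Ioc fun s _ => hbd s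
          _ = t * (d * η ^ 2) := by simp [t.2.1]
          _ ≤ T * (d * η ^ 2) := by gcongr; exact t.2.2
          _ = _ := by ring
      have habs := abs_le_of_sq_le_sq hsq (by positivity)
      have hlin : volt T K (fun s => (A s).mulVec (φ s - ψ s)) t i =
          volt T K (fun s => (A s).mulVec (φ s)) t i -
            volt T K (fun s => (A s).mulVec (ψ s)) t i := by
        rw [← volt_sub hk
          (isL2_mulVec hA ha hφ.measurable (integrableOn_euclNorm_sq_of_continuous hφ T))
          (isL2_mulVec hA ha hψ.measurable (integrableOn_euclNorm_sq_of_continuous hψ T))]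
        simp only [Matrix.mulVec_sub]
      have hs := hsol t t.2 i
      have hp := abs_le.1 (hpt t i)
      rw [hlin] at habs
      have hε' : η + c * η = ε := by
        rw [hη_def]; field_simp
      rw [abs_le] at habs ⊢
      constructor <;> simp only <;> linarith [hp.1, hp.2, habs.1, habs.2])
  obtain ⟨v, hv, hv2, hVm, rfl⟩ := exists_control_of_Lp V
  refine rate_le_of_solves hT hk hA hB ha hb hv hv2 ?_ fun t ht i => ?_
  · rw [← norm_toLp_sq hVm, ← Real.sq_sqrt (show 0 ≤ 2 * N by positivity)]
    gcongr
  · have h1 := hV (⟨t, ht⟩, i)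
    rw [hk_inner v hv hv2 hVm] at h1
    simp only at h1
    linarith

end Rate

/-- Arzelà–Ascoli for vector-valued continuous maps on a compact metric space. -/
lemma isCompact_of_bounded_of_modulus {X : Type*} [MetricSpace X] [CompactSpace X] {d : ℕ}
    {S : Set C(X, Fin d → ℝ)} (hS : IsClosed S) (D : ℝ)
    (hD : ∀ Ψ ∈ S, ∀ x, ‖Ψ x‖ ≤ D)
    (hmod : ∀ ε > 0, ∃ δ > 0, ∀ Ψ ∈ S, ∀ x y, dist x y < δ → dist (Ψ x) (Ψ y) < ε) :
    IsCompact S := by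
  let e := ContinuousMap.isometryEquivBoundedOfCompact X (Fin d → ℝ)
  have h : IsCompact (e.symm ⁻¹' S) := by
    refine BoundedContinuousFunction.arzela_ascoli₂ (Metric.closedBall 0 D)
      (isCompact_closedBall 0 D) _ (hS.preimage e.symm.continuous) (fun f x hf => ?_) ?_
    · exact mem_closedBall_zero_iff.2 (hD _ hf x)
    · refine UniformEquicontinuous.equicontinuous (Metric.uniformEquicontinuous_iff.2 ?_)
      intro ε hε
      obtain ⟨δ, hδ, H⟩ := hmod ε hε
      exact ⟨δ, hδ, fun x y hxy f => H _ f.2 x y hxy⟩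
  have h2 := h.image e.symm.continuous
  rwa [image_preimage_eq _ e.symm.surjective] at h2

/-- **Compactness of the sublevel sets of the moderate deviations rate function.**
If `K` satisfies Assumption (K) and `A`, `B` are bounded and measurable, then every
sublevel set `{ψ : Λ(ψ) ≤ N}`, `N > 0`, is compact in `C([0,T];ℝᵈ)`. -/
theorem moderate_rate_function_compact_sublevels
    (d m : ℕ) (T : ℝ) (hT : 0 < T)
    (γ : ℝ) (hγ : γ ∈ Ioc (0:ℝ) 2)
    (K : ℝ → Matrix (Fin d) (Fin d) ℝ)
    (hKmeas : ∀ i j, Measurable fun t => K t i j)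
    (hK : AssumptionK T γ K)
    (A : ℝ → Matrix (Fin d) (Fin d) ℝ) (B : ℝ → Matrix (Fin d) (Fin m) ℝ)
    (hAmeas : ∀ i j, Measurable fun t => A t i j)
    (hBmeas : ∀ i j, Measurable fun t => B t i j)
    (hAbdd : ∃ M : ℝ, ∀ t ∈ Icc (0:ℝ) T, frobNorm (A t) ≤ M)
    (hBbdd : ∃ M : ℝ, ∀ t ∈ Icc (0:ℝ) T, frobNorm (B t) ≤ M)
    (N : ℝ) (hN : 0 < N) :
    IsCompact {Ψ : ContinuousMap (Icc (0:ℝ) T) (Fin d → ℝ) |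
      rateLambda m T K A B Ψ ≤ ENNReal.ofReal N} := by
  obtain ⟨a, ha⟩ := hAbdd
  obtain ⟨b, hb⟩ := hBbdd
  have hk := memLp_truncK hKmeas hK
  have hR : 2 * N < 2 * N + 1 := by linarith
  have hR0 : 0 < 2 * N + 1 := by linarith
  obtain ⟨D, hD, hbound⟩ :=
    exists_bound_of_solves hT hk hAmeas hBmeas ha hb (2 * N + 1) hR0.le
  have hcont : ∀ Ψ : C(Icc (0 : ℝ) T, Fin d → ℝ), Continuous (IccExtend hT.le Ψ) :=
    fun Ψ => Ψ.continuous.Icc_extend'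
  refine isCompact_of_bounded_of_modulus (isClosed_sublevel hT hk hAmeas hBmeas ha hb hN)
    (Real.sqrt D) (fun Ψ hΨ x => ?_) fun ε hε => ?_
  · obtain ⟨v, hv, hv2, hvR, hsol⟩ :=
      exists_control_of_rate_le hT hk hAmeas hBmeas ha hb hR hR0 hΨ
    have h1 := hbound _ v (hcont Ψ) hv hv2 hvR hsol x x.2
    rw [IccExtend_val, euclNorm_sq] at h1
    refine (pi_norm_le_iff_of_nonneg (Real.sqrt_nonneg _)).2 fun i => ?_
    refine Real.abs_le_sqrt (le_trans ?_ h1)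
    exact Finset.single_le_sum (f := fun i => Ψ x i ^ 2) (fun _ _ => sq_nonneg _)
      (Finset.mem_univ i)
  · obtain ⟨δ, hδ, H⟩ :=
      exists_modulus_of_solves hT hk hAmeas hBmeas ha hb (2 * N + 1) hR0.le hε
    refine ⟨δ, hδ, fun Ψ hΨ x y hxy => ?_⟩
    obtain ⟨v, hv, hv2, hvR, hsol⟩ :=
      exists_control_of_rate_le hT hk hAmeas hBmeas ha hb hR hR0 hΨ
    refine (dist_pi_lt_iff hε).2 fun i => ?_
    have h1 := H _ v (hcont Ψ) hv hv2 hvR hsol x x.2 y y.2 hxy i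
    rwa [IccExtend_val, IccExtend_val] at h1
end

section
/- Let K ∈ L²([0,T];ℝ^{d×d}), and assume the coefficients b, σ are continuous in the space variable uniformly in time and have linear growth uniformly in time. Fix t ∈ [0,T]. Suppose ωⁿ → ω uniformly in C([0,T];ℝᵈ), and fⁿ → f weakly in L²([0,T];ℝᵐ) (that is, ∫₀ᵀ ⟨fⁿ_s − f_s, g_s⟩ ds → 0 for every g ∈ L²([0,T];ℝᵐ)). Then ∫₀ᵗ K(t−s)[b(s,ωⁿ_s) + σ(s,ωⁿ_s) fⁿ_s] ds converges in ℝᵈ to ∫₀ᵗ K(t−s)[b(s,ω_s) + σ(s,ω_s) f_s] ds. -/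
/-!
Expanding the matrix products, the `i`-th coordinate of the Volterra integral is a finite sum of
scalar integrals `∫₀ᵗ k aₙ hₙ`, where `k` is an entry of `K(t - ·)`, hence in `L²`, `aₙ` is an entry
of `b(·, ωⁿ)` or `σ(·, ωⁿ)`, and `hₙ` is `1` or a coordinate of `fⁿ`. The paths `ωⁿ`, `ω` stay
eventually in a common ball, so the uniform continuity of the coefficients gives `aₙ → a` uniformly
on `[0,T]`, while linear growth makes `a` and each `aₙ` bounded.

`tendsto_integral_mul_mul` treats one such integral: writing `k aₙ hₙ = k (aₙ - a) hₙ + k a hₙ`, the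
first term is at most `sup |aₙ - a| · ∫ (k² + hₙ²) / 2`, and tends to `0` because weakly convergent
sequences are bounded in `L²` (`bounded_of_weak`, by Banach–Steinhaus); the second converges by weak
convergence, since `k a` is in `L²`.
-/

open MeasureTheory Set Filter Topology

lemma euclNorm_eq {n : ℕ} (x : Fin n → ℝ) : euclNorm x = ‖WithLp.toLp 2 x‖ := by
  simp [euclNorm, EuclideanSpace.norm_eq]

lemma abs_le_euclNorm {n : ℕ} (x : Fin n → ℝ) (i : Fin n) : |x i| ≤ euclNorm x := by
  apply Real.abs_le_sqrt
  exact Finset.single_le_sum (f := fun i => x i ^ 2) (fun _ _ => sq_nonneg _) (Finset.mem_univ i)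

lemma euclNorm_nonneg {n : ℕ} (x : Fin n → ℝ) : 0 ≤ euclNorm x := Real.sqrt_nonneg _

lemma frobNorm_nonneg {n m : ℕ} (A : Matrix (Fin n) (Fin m) ℝ) : 0 ≤ frobNorm A :=
  Real.sqrt_nonneg _

lemma abs_le_frobNorm {n m : ℕ} (A : Matrix (Fin n) (Fin m) ℝ) (i : Fin n) (j : Fin m) :
    |A i j| ≤ frobNorm A := by
  apply Real.abs_le_sqrt
  refine le_trans (Finset.single_le_sum (f := fun j => A i j ^ 2) (fun _ _ => sq_nonneg _)
    (Finset.mem_univ j)) ?_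
  exact Finset.single_le_sum (f := fun i => ∑ j, A i j ^ 2)
    (fun _ _ => Finset.sum_nonneg fun _ _ => sq_nonneg _) (Finset.mem_univ i)

lemma continuous_euclNorm {n : ℕ} : Continuous (euclNorm : (Fin n → ℝ) → ℝ) := by
  unfold euclNorm
  fun_prop

lemma euclNorm_le_add {n : ℕ} (x y : Fin n → ℝ) : euclNorm x ≤ euclNorm (x - y) + euclNorm y := by
  simp only [euclNorm_eq]
  have := norm_add_le (WithLp.toLp 2 (x - y)) (WithLp.toLp 2 y)
  rwa [← WithLp.toLp_add, sub_add_cancel] at this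

/-- A sequence whose `L²` pairings against every `g ∈ L²` converge is bounded in `L²`. -/
lemma bounded_of_weak {α : Type*} [MeasurableSpace α] {μ : Measure α} (h : ℕ → α → ℝ)
    (hh : ∀ n, MemLp (h n) 2 μ)
    (hw : ∀ g : α → ℝ, MemLp g 2 μ → ∃ l, Tendsto (fun n => ∫ s, h n s * g s ∂μ) atTop (𝓝 l)) :
    ∃ C, ∀ n, ∫ s, h n s ^ 2 ∂μ ≤ C := by
  obtain ⟨C, hC⟩ := banach_steinhaus (g := fun n => innerSL ℝ ((hh n).toLp (h n))) (by
    intro g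
    obtain ⟨l, hl⟩ := hw g (Lp.memLp g)
    obtain ⟨C, hC⟩ := hl.norm.bddAbove_range
    refine ⟨C, fun n => le_trans (le_of_eq ?_) (hC ⟨n, rfl⟩)⟩
    rw [innerSL_apply_apply, L2.inner_def]
    congr 1
    apply integral_congr_ae
    filter_upwards [(hh n).coeFn_toLp] with s hs
    simp [hs, mul_comm])
  refine ⟨C ^ 2, fun n => ?_⟩
  have h1 : ‖(hh n).toLp (h n)‖ ≤ C := by simpa using hC n
  have h2 : ∫ s, h n s ^ 2 ∂μ = ‖(hh n).toLp (h n)‖ ^ 2 := by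
    rw [← real_inner_self_eq_norm_sq, L2.inner_def]
    apply integral_congr_ae
    filter_upwards [(hh n).coeFn_toLp] with s hs
    simp [hs, pow_two]
  rw [h2]
  gcongr

lemma integrable_mul_mul {α : Type*} [MeasurableSpace α] {μ : Measure α} {k a h : α → ℝ}
    (hk : MemLp k 2 μ) (ham : AEStronglyMeasurable a μ) (hab : ∃ B, ∀ᵐ s ∂μ, |a s| ≤ B)
    (hh : MemLp h 2 μ) : Integrable (fun s => k s * a s * h s) μ := by
  obtain ⟨B, hB⟩ := hab
  refine ((hk.integrable_mul hh).bdd_mul ham (c := B) hB).congr ?_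
  filter_upwards with s
  simp only [Pi.mul_apply]
  ring

/-- Product of a fixed `L²` function, a uniformly convergent bounded sequence and an `L²`-bounded
sequence: the limit may be taken in the uniformly convergent factor first. -/
lemma tendsto_integral_mul_mul {α : Type*} [MeasurableSpace α] {μ : Measure α} {k a : α → ℝ}
    {an hn : ℕ → α → ℝ} {l C : ℝ} (hk : MemLp k 2 μ)
    (ham : AEStronglyMeasurable a μ) (hab : ∃ B, ∀ᵐ s ∂μ, |a s| ≤ B)
    (hanm : ∀ n, AEStronglyMeasurable (an n) μ) (hanb : ∀ n, ∃ B, ∀ᵐ s ∂μ, |an n s| ≤ B)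
    (hlim : ∀ ε > (0:ℝ), ∀ᶠ n in atTop, ∀ᵐ s ∂μ, |an n s - a s| ≤ ε)
    (hh : ∀ n, MemLp (hn n) 2 μ) (hC : ∀ n, ∫ s, hn n s ^ 2 ∂μ ≤ C)
    (hl : Tendsto (fun n => ∫ s, k s * a s * hn n s ∂μ) atTop (𝓝 l)) :
    Tendsto (fun n => ∫ s, k s * an n s * hn n s ∂μ) atTop (𝓝 l) := by
  have key : Tendsto (fun n => ∫ s, k s * an n s * hn n s ∂μ - ∫ s, k s * a s * hn n s ∂μ)
      atTop (𝓝 0) := by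
    rw [Metric.tendsto_nhds]
    intro ε hε
    have hC0 : 0 ≤ C := (integral_nonneg fun s => sq_nonneg _).trans (hC 0)
    set L := ∫ s, k s ^ 2 ∂μ + C with hL
    have hL0 : 0 ≤ L := add_nonneg (integral_nonneg fun s => sq_nonneg _) hC0
    filter_upwards [hlim (ε / (L + 1)) (by positivity)] with n hn'
    rw [Real.dist_eq, sub_zero, ← integral_sub (integrable_mul_mul hk (hanm n) (hanb n) (hh n))
      (integrable_mul_mul hk ham hab (hh n))]
    have hint : Integrable (fun s => ε / (L + 1) * (k s ^ 2 + hn n s ^ 2)) μ :=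
      (hk.integrable_sq.add (hh n).integrable_sq).const_mul _
    calc |∫ s, (k s * an n s * hn n s - k s * a s * hn n s) ∂μ|
        ≤ ∫ s, ε / (L + 1) * (k s ^ 2 + hn n s ^ 2) ∂μ := by
          rw [← Real.norm_eq_abs]
          apply norm_integral_le_of_norm_le hint
          filter_upwards [hn'] with s hs
          have e : k s * an n s * hn n s - k s * a s * hn n s
            = (an n s - a s) * (k s * hn n s) := by ring
          rw [e, Real.norm_eq_abs, abs_mul]
          have h3 : |k s * hn n s| ≤ k s ^ 2 + hn n s ^ 2 := by
            rw [abs_le]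
            constructor <;> nlinarith [sq_nonneg (k s + hn n s), sq_nonneg (k s - hn n s)]
          gcongr
      _ = ε / (L + 1) * (∫ s, k s ^ 2 ∂μ + ∫ s, hn n s ^ 2 ∂μ) := by
          rw [integral_const_mul, integral_add hk.integrable_sq (hh n).integrable_sq]
      _ ≤ ε / (L + 1) * L := by
          gcongr
          linarith [hC n]
      _ < ε := by
          rw [div_mul_eq_mul_div, div_lt_iff₀ (by positivity)]
          nlinarith
  simpa using key.add hl

/-- **Joint continuity of the Volterra integral map.** If `ωⁿ → ω` uniformly on `[0,T]` and
`fⁿ → f` weakly in `L²([0,T];ℝᵐ)`, then for each fixed `t ∈ [0,T]`,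
`∫₀ᵗ K(t-s)[b(s,ωⁿ_s) + σ(s,ωⁿ_s) fⁿ_s] ds → ∫₀ᵗ K(t-s)[b(s,ω_s) + σ(s,ω_s) f_s] ds` in `ℝᵈ`. -/
theorem volterra_map_continuous
    (d m : ℕ) (T : ℝ) (hT : 0 < T)
    (K : ℝ → Matrix (Fin d) (Fin d) ℝ)
    (hKmeas : ∀ i j, Measurable fun t => K t i j)
    (hKL2 : IntegrableOn (fun t => frobNorm (K t) ^ 2) (Ioc 0 T))
    (b : ℝ → (Fin d → ℝ) → Fin d → ℝ)
    (σ : ℝ → (Fin d → ℝ) → Matrix (Fin d) (Fin m) ℝ)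
    (hbmeas : Measurable (Function.uncurry b))
    (hσmeas : ∀ i j, Measurable fun p : ℝ × (Fin d → ℝ) => σ p.1 p.2 i j)
    (hucont : ∀ M > (0:ℝ), ∀ ε > (0:ℝ), ∃ δ > (0:ℝ), ∀ t ∈ Icc (0:ℝ) T, ∀ x y : Fin d → ℝ,
      euclNorm x ≤ M → euclNorm y ≤ M → euclNorm (x - y) ≤ δ →
      euclNorm (b t x - b t y) + frobNorm (σ t x - σ t y) ≤ ε)
    (C_L : ℝ) (hCL : 0 < C_L)
    (hgrowth : ∀ t ∈ Icc (0:ℝ) T, ∀ x,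
      euclNorm (b t x) + frobNorm (σ t x) ≤ C_L * (1 + euclNorm x))
    (t : ℝ) (ht : t ∈ Icc (0:ℝ) T)
    (ω : ℝ → Fin d → ℝ) (ωseq : ℕ → ℝ → Fin d → ℝ)
    (hωc : ContinuousOn ω (Icc 0 T)) (hωseqc : ∀ n, ContinuousOn (ωseq n) (Icc 0 T))
    (hunif : TendstoUniformlyOn ωseq ω atTop (Icc (0:ℝ) T))
    (f : ℝ → Fin m → ℝ) (fseq : ℕ → ℝ → Fin m → ℝ)
    (hfmeas : Measurable f)
    (hfL2 : IntegrableOn (fun s => euclNorm (f s) ^ 2) (Ioc 0 T))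
    (hfseqmeas : ∀ n, Measurable (fseq n))
    (hfseqL2 : ∀ n, IntegrableOn (fun s => euclNorm (fseq n s) ^ 2) (Ioc 0 T))
    (hweak : ∀ g : ℝ → Fin m → ℝ, Measurable g →
      IntegrableOn (fun s => euclNorm (g s) ^ 2) (Ioc 0 T) →
      Tendsto (fun n => ∫ s in Ioc 0 T, ∑ i, (fseq n s i - f s i) * g s i)
        atTop (nhds 0)) :
    Tendsto
      (fun n => ∫ s in Ioc 0 t,
        (K (t - s)).mulVec (b s (ωseq n s) + (σ s (ωseq n s)).mulVec (fseq n s)))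
      atTop
      (nhds (∫ s in Ioc 0 t,
        (K (t - s)).mulVec (b s (ω s) + (σ s (ω s)).mulVec (f s)))) := by
  have hsub : Ioc 0 t ⊆ Icc 0 T := fun s hs => ⟨hs.1.le, hs.2.trans ht.2⟩
  have hsub' : Ioc 0 t ⊆ Ioc 0 T := fun s hs => ⟨hs.1, hs.2.trans ht.2⟩
  set μ := volume.restrict (Ioc 0 t) with hμ
  set ν := volume.restrict (Ioc 0 T) with hν
  have hμν : ν.restrict (Ioc 0 t) = μ := by
    rw [hν, Measure.restrict_restrict measurableSet_Ioc, inter_eq_left.mpr hsub']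
  have hμle : μ ≤ ν := Measure.restrict_mono hsub' le_rfl
  have hmem : ∀ᵐ s ∂μ, s ∈ Icc 0 T :=
    (ae_restrict_mem measurableSet_Ioc).mono fun s hs => hsub hs
  have hcoord : ∀ (g : ℝ → Fin m → ℝ), Measurable g →
      IntegrableOn (fun s => euclNorm (g s) ^ 2) (Ioc 0 T) → ∀ k, MemLp (fun s => g s k) 2 ν := by
    intro g hg hgi k
    have hm : Measurable fun s => g s k := (measurable_pi_apply k).comp hg
    rw [memLp_two_iff_integrable_sq hm.aestronglyMeasurable]
    refine Integrable.mono' hgi (hm.pow_const 2).aestronglyMeasurable ?_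
    filter_upwards with s
    rw [Real.norm_eq_abs, abs_pow]
    gcongr
    exact abs_le_euclNorm _ _
  have hK : ∀ i j, MemLp (fun s => K (t - s) i j) 2 μ := by
    intro i j
    have hm : Measurable fun s => K (t - s) i j :=
      (hKmeas i j).comp (measurable_const.sub measurable_id)
    rw [memLp_two_iff_integrable_sq hm.aestronglyMeasurable]
    have h1 : IntegrableOn (fun s => K s i j ^ 2) (Ioc 0 t) := by
      refine Integrable.mono' (hKL2.mono_set hsub')
        ((hKmeas i j).pow_const 2).aestronglyMeasurable ?_
      filter_upwards with s
      rw [Real.norm_eq_abs, abs_pow]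
      gcongr
      exact abs_le_frobNorm _ _ _
    have h2 := ((intervalIntegrable_iff_integrableOn_Ioc_of_le ht.1).mpr h1).comp_sub_left t
    rw [sub_zero, sub_self] at h2
    exact (intervalIntegrable_iff_integrableOn_Ioc_of_le ht.1).mp h2.symm
  -- `hweak` asks for a measurable test function, so `g` is replaced by a measurable version
  have hweak' : ∀ k, ∀ g : ℝ → ℝ, MemLp g 2 ν →
      Tendsto (fun n => ∫ s, fseq n s k * g s ∂ν) atTop (𝓝 (∫ s, f s k * g s ∂ν)) := by
    intro k g hg
    set g' := hg.1.mk g with hg'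
    have hgm : Measurable g' := hg.1.stronglyMeasurable_mk.measurable
    have hgg : g =ᵐ[ν] g' := hg.1.ae_eq_mk
    have hgL : MemLp g' 2 ν := hg.ae_eq hgg
    have hw := hweak (fun s => Pi.single k (g' s))
      (by
        rw [measurable_pi_iff]
        intro j
        by_cases hj : j = k
        · subst hj; simpa using hgm
        · simp [hj])
      (by
        refine hgL.integrable_sq.congr ?_
        filter_upwards with s
        rw [euclNorm, Real.sq_sqrt (Finset.sum_nonneg fun _ _ => sq_nonneg _),
          Finset.sum_eq_single k (fun j _ hj => by simp [hj]) (by simp)]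
        simp)
    have hw2 := hw.add_const (∫ s, f s k * g s ∂ν)
    rw [zero_add] at hw2
    refine hw2.congr fun n => ?_
    have e : ∫ s, ∑ i, (fseq n s i - f s i) * (Pi.single k (g' s) : Fin m → ℝ) i ∂ν
        = ∫ s, (fseq n s k * g s - f s k * g s) ∂ν := by
      apply integral_congr_ae
      filter_upwards [hgg] with s hs
      rw [Finset.sum_eq_single k (fun j _ hj => by simp [hj]) (by simp), hs]
      simp [sub_mul]
    have i1 : Integrable (fun s => fseq n s k * g s) ν :=
      (hcoord _ (hfseqmeas n) (hfseqL2 n) k).integrable_mul hg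
    have i2 : Integrable (fun s => f s k * g s) ν := (hcoord _ hfmeas hfL2 k).integrable_mul hg
    rw [e, integral_sub i1 i2, sub_add_cancel]
  -- test functions on `(0, t]` are extended by zero to `(0, T]`
  have hweakt : ∀ k, ∀ g : ℝ → ℝ, MemLp g 2 μ →
      Tendsto (fun n => ∫ s, g s * fseq n s k ∂μ) atTop (𝓝 (∫ s, g s * f s k ∂μ)) := by
    intro k g hg
    have hgi : MemLp ((Ioc 0 t).indicator g) 2 ν := by
      rw [memLp_indicator_iff_restrict measurableSet_Ioc, hμν]
      exact hg
    have e : ∀ φ : ℝ → ℝ, ∫ s, φ s * (Ioc 0 t).indicator g s ∂ν = ∫ s, g s * φ s ∂μ := by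
      intro φ
      rw [← hμν, ← integral_indicator (μ := ν) measurableSet_Ioc]
      refine integral_congr_ae (Eventually.of_forall fun s => ?_)
      by_cases hs : s ∈ Ioc 0 t <;> simp [hs, mul_comm]
    have := hweak' k _ hgi
    rw [e] at this
    simpa only [e] using this
  have hbdd : ∀ k, ∃ C, ∀ n, ∫ s, fseq n s k ^ 2 ∂μ ≤ C := fun k =>
    bounded_of_weak (fun n s => fseq n s k)
      (fun n => (hcoord _ (hfseqmeas n) (hfseqL2 n) k).mono_measure hμle)
      (fun g hg => ⟨_, by simpa only [mul_comm] using hweakt k g hg⟩)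
  have hpath : ∀ w : ℝ → Fin d → ℝ, ContinuousOn w (Icc 0 T) →
      ∃ M > 0, ∀ s ∈ Icc 0 T, euclNorm (w s) ≤ M := by
    intro w hw
    obtain ⟨M, hM⟩ := (isCompact_Icc.image_of_continuousOn
      (continuous_euclNorm.comp_continuousOn hw)).bddAbove
    exact ⟨max M 1, by positivity, fun s hs => (hM ⟨s, hs, rfl⟩).trans (le_max_left _ _)⟩
  have hcoef : ∀ w : ℝ → Fin d → ℝ, ContinuousOn w (Icc 0 T) →
      ∃ B, ∀ s ∈ Icc 0 T, euclNorm (b s (w s)) + frobNorm (σ s (w s)) ≤ B := by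
    intro w hw
    obtain ⟨M, -, hM⟩ := hpath w hw
    refine ⟨C_L * (1 + M), fun s hs => (hgrowth s hs _).trans ?_⟩
    have := hM s hs
    gcongr
  have hbb : ∀ w : ℝ → Fin d → ℝ, ContinuousOn w (Icc 0 T) → ∀ j,
      ∃ B, ∀ᵐ s ∂μ, |b s (w s) j| ≤ B := by
    intro w hw j
    obtain ⟨B, hB⟩ := hcoef w hw
    refine ⟨B, hmem.mono fun s hs => ?_⟩
    linarith [hB s hs, abs_le_euclNorm (b s (w s)) j, frobNorm_nonneg (σ s (w s))]
  have hσb : ∀ w : ℝ → Fin d → ℝ, ContinuousOn w (Icc 0 T) → ∀ j k,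
      ∃ B, ∀ᵐ s ∂μ, |σ s (w s) j k| ≤ B := by
    intro w hw j k
    obtain ⟨B, hB⟩ := hcoef w hw
    refine ⟨B, hmem.mono fun s hs => ?_⟩
    linarith [hB s hs, abs_le_frobNorm (σ s (w s)) j k, euclNorm_nonneg (b s (w s))]
  have hwm : ∀ w : ℝ → Fin d → ℝ, ContinuousOn w (Icc 0 T) →
      AEMeasurable (fun s => (s, w s)) μ := fun w hw =>
    aemeasurable_id.prodMk ((hw.mono hsub).aemeasurable measurableSet_Ioc)
  have hbm : ∀ w : ℝ → Fin d → ℝ, ContinuousOn w (Icc 0 T) → ∀ j,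
      AEStronglyMeasurable (fun s => b s (w s) j) μ := fun w hw j =>
    (((measurable_pi_apply j).comp hbmeas).comp_aemeasurable (hwm w hw)).aestronglyMeasurable
  have hσm : ∀ w : ℝ → Fin d → ℝ, ContinuousOn w (Icc 0 T) → ∀ j k,
      AEStronglyMeasurable (fun s => σ s (w s) j k) μ := fun w hw j k =>
    ((hσmeas j k).comp_aemeasurable (hwm w hw)).aestronglyMeasurable
  -- `hunif` is in the sup norm of `Fin d → ℝ`; continuity of `euclNorm` at `0` transfers it
  have hunifE : ∀ δ > (0:ℝ), ∀ᶠ n in atTop, ∀ s ∈ Icc 0 T, euclNorm (ωseq n s - ω s) ≤ δ := by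
    intro δ hδ
    have h0 : Tendsto (euclNorm : (Fin d → ℝ) → ℝ) (𝓝 0) (𝓝 0) := by
      have := continuous_euclNorm.tendsto (0 : Fin d → ℝ)
      rwa [show euclNorm (0 : Fin d → ℝ) = 0 by simp [euclNorm]] at this
    obtain ⟨η, hη, hball⟩ := Metric.eventually_nhds_iff.mp (h0.eventually_le_const hδ)
    filter_upwards [Metric.tendstoUniformlyOn_iff.mp hunif η hη] with n hn s hs
    apply hball
    rw [dist_zero_right, ← dist_eq_norm, dist_comm]
    exact hn s hs
  have hlim : ∀ ε > (0:ℝ), ∀ᶠ n in atTop, ∀ᵐ s ∂μ,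
      euclNorm (b s (ωseq n s) - b s (ω s)) + frobNorm (σ s (ωseq n s) - σ s (ω s)) ≤ ε := by
    intro ε hε
    obtain ⟨M, hM0, hM⟩ := hpath ω hωc
    obtain ⟨δ, hδ, hδ'⟩ := hucont (M + 1) (by positivity) ε hε
    filter_upwards [hunifE 1 one_pos, hunifE δ hδ] with n h1 h2
    filter_upwards [hmem] with s hs
    refine hδ' s hs _ _ ?_ ?_ (h2 s hs)
    · linarith [h1 s hs, euclNorm_le_add (ωseq n s) (ω s), hM s hs]
    · linarith [hM s hs]
  -- the drift term carries a factor `1`, so that it has the same shape as the control terms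
  have hone : MemLp (fun _ : ℝ => (1:ℝ)) 2 μ := memLp_const 1
  have hexp : ∀ (w : ℝ → Fin d → ℝ) (g : ℝ → Fin m → ℝ) (i : Fin d) (s : ℝ),
      (K (t - s)).mulVec (b s (w s) + (σ s (w s)).mulVec (g s)) i
      = ∑ j, (K (t - s) i j * b s (w s) j * 1 + ∑ k, K (t - s) i j * σ s (w s) j k * g s k) := by
    intro w g i s
    simp only [Matrix.mulVec, dotProduct, Pi.add_apply]
    refine Finset.sum_congr rfl fun j _ => ?_
    rw [mul_add, Finset.mul_sum, mul_one]
    simp only [mul_assoc]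
  have hval : ∀ (w : ℝ → Fin d → ℝ) (g : ℝ → Fin m → ℝ), ContinuousOn w (Icc 0 T) →
      (∀ k, MemLp (fun s => g s k) 2 μ) → ∀ i,
      (∫ s, (K (t - s)).mulVec (b s (w s) + (σ s (w s)).mulVec (g s)) ∂μ) i
      = ∑ j, (∫ s, K (t - s) i j * b s (w s) j * 1 ∂μ
          + ∑ k, ∫ s, K (t - s) i j * σ s (w s) j k * g s k ∂μ) := by
    intro w g hw hg i
    have hB : ∀ i j, Integrable (fun s => K (t - s) i j * b s (w s) j * 1) μ := fun i j =>
      integrable_mul_mul (hK i j) (hbm w hw j) (hbb w hw j) hone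
    have hS : ∀ i j k, Integrable (fun s => K (t - s) i j * σ s (w s) j k * g s k) μ :=
      fun i j k => integrable_mul_mul (hK i j) (hσm w hw j k) (hσb w hw j k) (hg k)
    have hS' : ∀ i j, Integrable (fun s => ∑ k, K (t - s) i j * σ s (w s) j k * g s k) μ :=
      fun i j => integrable_finsetSum _ fun k _ => hS i j k
    have hBS : ∀ i j, Integrable (fun s => K (t - s) i j * b s (w s) j * 1
        + ∑ k, K (t - s) i j * σ s (w s) j k * g s k) μ := fun i j => (hB i j).add (hS' i j)
    rw [eval_integral]
    · simp only [hexp]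
      rw [integral_finsetSum _ fun j _ => hBS i j]
      refine Finset.sum_congr rfl fun j _ => ?_
      rw [integral_add (hB i j) (hS' i j), integral_finsetSum _ fun k _ => hS i j k]
    · intro i
      simp only [hexp]
      exact integrable_finsetSum _ fun j _ => hBS i j
  rw [tendsto_pi_nhds]
  intro i
  have hfn : ∀ n k, MemLp (fun s => fseq n s k) 2 μ := fun n k =>
    (hcoord _ (hfseqmeas n) (hfseqL2 n) k).mono_measure hμle
  rw [hval ω f hωc (fun k => (hcoord _ hfmeas hfL2 k).mono_measure hμle) i]
  simp only [fun n => hval (ωseq n) (fseq n) (hωseqc n) (hfn n) i]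
  refine tendsto_finsetSum _ fun j _ => Tendsto.add ?_ (tendsto_finsetSum _ fun k _ => ?_)
  · refine tendsto_integral_mul_mul (an := fun n s => b s (ωseq n s) j) (hn := fun _ _ => 1)
      (hK i j) (hbm ω hωc j) (hbb ω hωc j)
      (fun n => hbm _ (hωseqc n) j) (fun n => hbb _ (hωseqc n) j) (fun ε hε => ?_)
      (fun _ => hone) (fun _ => le_rfl) tendsto_const_nhds
    filter_upwards [hlim ε hε] with n hn
    filter_upwards [hn] with s hs
    have := abs_le_euclNorm (b s (ωseq n s) - b s (ω s)) j
    rw [Pi.sub_apply] at this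
    linarith [frobNorm_nonneg (σ s (ωseq n s) - σ s (ω s))]
  · obtain ⟨C, hC⟩ := hbdd k
    obtain ⟨B, hB⟩ := hσb ω hωc j k
    refine tendsto_integral_mul_mul (an := fun n s => σ s (ωseq n s) j k)
      (hn := fun n s => fseq n s k)
      (hK i j) (hσm ω hωc j k) ⟨B, hB⟩
      (fun n => hσm _ (hωseqc n) j k) (fun n => hσb _ (hωseqc n) j k) (fun ε hε => ?_)
      (fun n => hfn n k) hC (hweakt k _ ?_)
    · filter_upwards [hlim ε hε] with n hn
      filter_upwards [hn] with s hs
      have := abs_le_frobNorm (σ s (ωseq n s) - σ s (ω s)) j k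
      rw [Matrix.sub_apply] at this
      linarith [euclNorm_nonneg (b s (ωseq n s) - b s (ω s))]
    · refine MemLp.of_le_mul (c := B) (hK i j) ((hK i j).1.mul (hσm ω hωc j k)) ?_
      filter_upwards [hB] with s hs
      rw [norm_mul, mul_comm]
      gcongr
      exact hs
end

section
/- Define θ(x) := 2x/(2−x) for x ≠ 2. Let T > 0, 2 < q < p, t ∈ (0,T], K : [0,T]² → ℝ measurable and f : [0,t] → ℝ measurable. Then, as an inequality in [0,∞], (∫₀ᵗ |K(t,s) f(s)|² ds)^{p/2} ≤ t^{(p−q)/q} (∫₀ᵗ |K(t,s)|^{−θ(q)} ds)^{p/(−θ(q))} ∫₀ᵗ |f(s)|^p ds, where −θ(q) = 2q/(q−2) > 0 and p/(−θ(q)) = p(q−2)/(2q). -/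
/-!
Hölder's inequality with `1/2 = 1/r + 1/q`, where `r = -θ(q) = 2q/(q-2)`, bounds the `L²` norm of
`K(t,·) f` on `(0,t]` by `‖K(t,·)‖_r ‖f‖_q`. Hölder again with `1/q = 1/p + (p-q)/(pq)`, applied to
`f · 1`, bounds `‖f‖_q` by `‖f‖_p t^{(p-q)/(pq)}` (the Jensen step). Raising the product of the two
bounds to the power `p` gives the claim. Both applications are in `[0,∞]`, so no integrability is
needed.
-/

open MeasureTheory Set
open scoped ENNReal

/-- `θ(x) = 2x/(2-x)`. -/
noncomputable def theta (x : ℝ) : ℝ := 2 * x / (2 - x)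

/-- **Hölder–Jensen estimate for non-convolution Volterra kernels.** For `2 < q < p` and
`t ∈ (0,T]`, as an inequality in `[0,∞]`,
`(∫₀ᵗ |K(t,s) f(s)|² ds)^{p/2} ≤ t^{(p-q)/q} (∫₀ᵗ |K(t,s)|^{-θ(q)} ds)^{p/(-θ(q))} ∫₀ᵗ |f(s)|^p ds`,
where `-θ(q) = 2q/(q-2) > 0`. -/
theorem holder_jensen_kernel_estimate
    (T p q : ℝ) (hT : 0 < T) (hq : 2 < q) (hpq : q < p)
    (t : ℝ) (ht : t ∈ Ioc (0:ℝ) T)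
    (K : ℝ → ℝ → ℝ) (hKmeas : Measurable (Function.uncurry K))
    (f : ℝ → ℝ) (hfmeas : Measurable f) :
    (∫⁻ s in Ioc 0 t, ENNReal.ofReal ((K t s * f s) ^ 2)) ^ (p / 2) ≤
      ENNReal.ofReal t ^ ((p - q) / q) *
        (∫⁻ s in Ioc 0 t, ENNReal.ofReal (|K t s| ^ (-theta q))) ^ (p / (-theta q)) *
        ∫⁻ s in Ioc 0 t, ENNReal.ofReal (|f s| ^ p) := by
  set r : ℝ := -theta q with hr
  have hq2 : q - 2 ≠ 0 := by linarith
  have hpq0 : p - q ≠ 0 := by linarith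
  have hq0 : 0 < q := by linarith
  have hp0 : 0 < p := by linarith
  have hreq : r = 2 * q / (q - 2) := by
    rw [hr, theta, ← neg_sub q 2, div_neg, neg_neg]
  have h2r : 2 < r := by
    rw [hreq, lt_div_iff₀ (by linarith)]
    linarith
  have hr0 : 0 < r := by linarith
  set μ : Measure ℝ := volume.restrict (Ioc 0 t) with hμ
  let k : ℝ → ℝ≥0∞ := fun s => ENNReal.ofReal |K t s|
  let g : ℝ → ℝ≥0∞ := fun s => ENNReal.ofReal |f s|
  have hKt : Measurable (K t) := hKmeas.comp measurable_prodMk_left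
  have hk : Measurable k := ENNReal.measurable_ofReal.comp (by fun_prop)
  have hg : Measurable g := ENNReal.measurable_ofReal.comp (by fun_prop)
  have e1 : ∀ s, ENNReal.ofReal ((K t s * f s) ^ 2) = (k * g) s ^ (2 : ℝ) := fun s => by
    simp only [Pi.mul_apply, k, g]
    rw [← ENNReal.ofReal_mul (abs_nonneg _), ← abs_mul,
      ENNReal.ofReal_rpow_of_nonneg (abs_nonneg _) zero_le_two, Real.rpow_two, sq_abs]
  have e2 : ∀ s, ENNReal.ofReal (|K t s| ^ r) = k s ^ r := fun s =>
    (ENNReal.ofReal_rpow_of_nonneg (abs_nonneg _) hr0.le).symm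
  have e3 : ∀ s, ENNReal.ofReal (|f s| ^ p) = g s ^ p := fun s =>
    (ENNReal.ofReal_rpow_of_nonneg (abs_nonneg _) hp0.le).symm
  simp only [e1, e2, e3]
  have h1 := ENNReal.lintegral_Lp_mul_le_Lq_mul_Lr zero_lt_two h2r
    (r := q) (by rw [hreq]; field_simp; ring) μ hk.aemeasurable hg.aemeasurable
  have h2 := ENNReal.lintegral_Lp_mul_le_Lq_mul_Lr hq0 hpq
    (r := p * q / (p - q)) (by field_simp; ring) μ hg.aemeasurable
    (aemeasurable_const (b := (1 : ℝ≥0∞)))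
  have hvol : μ univ = ENNReal.ofReal t := by simp [hμ]
  simp only [Pi.mul_apply, mul_one, ENNReal.one_rpow, lintegral_const, one_mul, hvol] at h2
  calc (∫⁻ s, (k * g) s ^ (2 : ℝ) ∂μ) ^ (p / 2)
      = ((∫⁻ s, (k * g) s ^ (2 : ℝ) ∂μ) ^ (1 / (2 : ℝ))) ^ p := by
        rw [← ENNReal.rpow_mul, one_div_mul_eq_div]
    _ ≤ ((∫⁻ s, k s ^ r ∂μ) ^ (1 / r) * ((∫⁻ s, g s ^ p ∂μ) ^ (1 / p) *
          ENNReal.ofReal t ^ (1 / (p * q / (p - q))))) ^ p := by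
        gcongr
        exact h1.trans (by gcongr)
    _ = _ := by
        rw [ENNReal.mul_rpow_of_nonneg _ _ hp0.le, ENNReal.mul_rpow_of_nonneg _ _ hp0.le,
          ← ENNReal.rpow_mul, ← ENNReal.rpow_mul, ← ENNReal.rpow_mul, one_div_mul_eq_div,
          one_div_mul_cancel hp0.ne', ENNReal.rpow_one,
          show 1 / (p * q / (p - q)) * p = (p - q) / q by field_simp]
        ring
end

section
/- Let T > 0, H ∈ (0, 1/2), y₀ > 0, ξ ∈ ℝ and v ∈ L²([0,T];ℝ). Let φ : [0,T] → [0,∞) be continuous and satisfy the Volterra equation φ_t = y₀ + (ξ/Γ(H+1/2)) ∫₀ᵗ (t−s)^{H−1/2} √(φ_s) v_s ds for all t ∈ [0,T]. Then the set {t ∈ [0,T] : φ_t > 0} has Lebesgue measure T. -/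
open MeasureTheory Set

/-!
Write `α = H + 1/2 ∈ (1/2, 1)`, `c = ξ / Γ(α)` and `u = √φ · v`, so that
`φ t = y₀ + c ∫₀ᵗ (t - r)^(α-1) u r dr`. The proof rests on the fact that the fractional derivative
of order `α` of `φ - y₀` is strictly negative at a zero of `φ`, whereas it is proportional to `u`,
which vanishes there. It uses the truncated Marchaud derivative and an average over the zero set.

Let `φ t = 0` and `0 < h < t`. Then `∫₀^{t-h} (t - s)^(-α-1) φ s ds ≥ 0`. Inserting the equation for
`φ s`, exchanging the integrals (`fubini_kernel`; the inner integral is elementary, see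
`kernel_integral`), and using `0 = y₀ + c ∫₀ᵗ (t - r)^(α-1) u r dr` gives
`y₀ (h/t)^α ≤ -c ∫₀ᵗ k_h(t - r) u r dr` with `k_h x = x^(α-1) - (x - h)₊^α / x`. This kernel is at most
`min (x^(α-1)) (h x^(α-2))`, the function `majorant`, whose integral over `(0, ∞)` is a multiple of
`h^α` (`fractional_bound`, `lintegral_majorant_le`).

Integrate this over the zero set `Z` and apply Tonelli. Where `t - r < δ`, uniform continuity bounds
`√(φ r) = |√(φ r) - √(φ t)|` by `ε`; where `t - r ≥ δ`, the majorant is at most `h δ^(α-2)`. Hence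
`y₀ T^(-α) h^α |Z| ≤ |c| ‖v‖₁ (ε κ h^α + O(h))`. Dividing by `h^α` and letting first `h → 0`, then
`ε → 0`, yields `|Z| = 0` (`volume_zero_set`).
-/

namespace RoughHeston

/-- The function `min (x^(α-1)) (h x^(α-2))` on `x > 0` (for `h > 0`). Up to a factor `h^α`, it is an
integrable kernel at scale `h`. Only its values at `x > 0` matter. -/
noncomputable def majorant (α h x : ℝ) : ℝ := if x ≤ h then x ^ (α - 1) else h * x ^ (α - 2)

lemma measurable_majorant (α h : ℝ) : Measurable (majorant α h) := by
  unfold majorant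
  exact Measurable.ite measurableSet_Iic (by fun_prop) (by fun_prop)

lemma majorant_nonneg {α h x : ℝ} (hh : 0 < h) (hx : 0 < x) : 0 ≤ majorant α h x := by
  unfold majorant; split_ifs <;> positivity

lemma abs_kernel_le_majorant {α h x : ℝ} (hα0 : 0 < α) (hα1 : α < 1) (hh : 0 < h) (hx : 0 < x) :
    |x ^ (α - 1) - (max (x - h) 0) ^ α / x| ≤ majorant α h x := by
  unfold majorant
  split_ifs with hxh
  · rw [max_eq_right (by linarith), Real.zero_rpow hα0.ne']
    simp [abs_of_nonneg (Real.rpow_nonneg hx.le _)]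
  · push Not at hxh
    rw [max_eq_left (by linarith)]
    have e1 : x ^ (α - 1) = x ^ α / x := by rw [Real.rpow_sub hx, Real.rpow_one]
    have e2 : x ^ (α - 2) = x ^ α / x / x := by
      rw [show α - 2 = α - 1 - 1 by ring, Real.rpow_sub hx, Real.rpow_sub hx, Real.rpow_one]
    have e3 : (x - h) ^ α = x ^ α * ((x - h) / x) ^ α := by
      rw [← Real.mul_rpow hx.le (div_nonneg (by linarith) hx.le)]
      congr 1; field_simp
    have hy0 : 0 < (x - h) / x := div_pos (by linarith) hx
    have hy1 : (x - h) / x ≤ 1 := by rw [div_le_one hx]; linarith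
    have l1 : ((x - h) / x) ^ α ≤ 1 := Real.rpow_le_one hy0.le hy1 hα0.le
    have l2 : (x - h) / x ≤ ((x - h) / x) ^ α := by
      simpa using Real.rpow_le_rpow_of_exponent_ge hy0 hy1 hα1.le
    have hp : 0 < x ^ α / x := by positivity
    rw [e1, e2, e3]
    have e4 : x ^ α / x - x ^ α * ((x - h) / x) ^ α / x
        = x ^ α / x * (1 - ((x - h) / x) ^ α) := by ring
    rw [e4, abs_of_nonneg (mul_nonneg hp.le (by linarith))]
    have e5 : h * (x ^ α / x / x) = x ^ α / x * (1 - (x - h) / x) := by field_simp; ring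
    rw [e5]
    gcongr

lemma lintegral_majorant_le {α h : ℝ} (hα0 : 0 < α) (hα1 : α < 1) (hh : 0 < h) :
    ∫⁻ x in Ioi 0, ENNReal.ofReal (majorant α h x)
      ≤ ENNReal.ofReal (h ^ α * (1 / α + 1 / (1 - α))) := by
  have hu : Ioi (0:ℝ) = Ioc 0 h ∪ Ioi h := (Ioc_union_Ioi_eq_Ioi hh.le).symm
  rw [hu]
  refine (lintegral_union_le _ _ _).trans ?_
  have i1 : ∫⁻ x in Ioc 0 h, ENNReal.ofReal (majorant α h x) = ENNReal.ofReal (h ^ α / α) := by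
    have : ∫ x in (0:ℝ)..h, x ^ (α - 1) = h ^ α / α := by
      rw [integral_rpow (Or.inl (by linarith))]
      simp [Real.zero_rpow hα0.ne']
    rw [← this, intervalIntegral.integral_of_le hh.le, ofReal_integral_eq_lintegral_ofReal]
    · refine setLIntegral_congr_fun measurableSet_Ioc fun x hx => ?_
      simp [majorant, hx.2]
    · exact (intervalIntegrable_iff_integrableOn_Ioc_of_le hh.le).1
        (intervalIntegral.intervalIntegrable_rpow' (by linarith))
    · filter_upwards [ae_restrict_mem measurableSet_Ioc] with x hx
      exact Real.rpow_nonneg hx.1.le _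
  have i2 : ∫⁻ x in Ioi h, ENNReal.ofReal (majorant α h x)
      = ENNReal.ofReal (h ^ α / (1 - α)) := by
    have : ∫ x in Ioi h, h * x ^ (α - 2) = h ^ α / (1 - α) := by
      rw [integral_const_mul, integral_Ioi_rpow_of_lt (by linarith) hh,
        show α - 2 + 1 = α - 1 by ring, Real.rpow_sub hh, Real.rpow_one]
      have : α - 1 ≠ 0 := by linarith
      have : 1 - α ≠ 0 := by linarith
      rw [← neg_sub 1 α]
      field_simp
    rw [← this, ofReal_integral_eq_lintegral_ofReal]
    · refine setLIntegral_congr_fun measurableSet_Ioi fun x hx => ?_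
      simp [majorant, not_le.2 (mem_Ioi.1 hx)]
    · exact (integrableOn_Ioi_rpow_of_lt (by linarith) hh).const_mul h
    · filter_upwards [ae_restrict_mem measurableSet_Ioi] with x hx
      have : 0 < x := hh.trans hx
      simp only [Pi.zero_apply]; positivity
  rw [i1, i2, ← ENNReal.ofReal_add (by positivity) (div_nonneg (by positivity) (by linarith))]
  exact le_of_eq (by ring_nf)

/-- The integrand has the primitive `((s - r)/(t - s))^α / (α (t - r))`. -/
lemma kernel_integral {α r a t : ℝ} (hα0 : 0 < α) (hra : r < a) (hat : a < t) :
    IntegrableOn (fun s => (t - s) ^ (-α - 1) * (s - r) ^ (α - 1)) (Ioc r a) ∧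
    ∫ s in Ioc r a, (t - s) ^ (-α - 1) * (s - r) ^ (α - 1)
      = ((a - r) / (t - a)) ^ α / (α * (t - r)) := by
  have hcont : ContinuousOn (fun s => ((s - r) / (t - s)) ^ α / (α * (t - r))) (Icc r a) := by
    refine ContinuousOn.div_const (ContinuousOn.rpow_const ?_ fun _ _ => Or.inr hα0.le) _
    refine ContinuousOn.div (by fun_prop) (by fun_prop) fun s hs => ?_
    have := hs.2; linarith
  have hder : ∀ s ∈ Ioo r a, HasDerivAt (fun s => ((s - r) / (t - s)) ^ α / (α * (t - r)))
      ((t - s) ^ (-α - 1) * (s - r) ^ (α - 1)) s := by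
    intro s hs
    have h1 : 0 < s - r := by linarith [hs.1]
    have h2 : 0 < t - s := by linarith [hs.2]
    have h3 : 0 < t - r := by linarith
    have d1 : HasDerivAt (fun s => (s - r) / (t - s)) ((t - r) / (t - s) ^ 2) s := by
      refine (((hasDerivAt_id' s).sub_const r).div
        ((hasDerivAt_id' s).const_sub t) h2.ne').congr_deriv ?_
      ring
    refine ((d1.rpow_const (p := α) (Or.inl (div_pos h1 h2).ne')).div_const
      (α * (t - r))).congr_deriv ?_
    rw [Real.div_rpow h1.le h2.le, Real.rpow_sub h2, Real.rpow_sub h2, Real.rpow_neg h2.le,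
      Real.rpow_one]
    field_simp
  have hpos : ∀ s ∈ Ioo r a, 0 ≤ (t - s) ^ (-α - 1) * (s - r) ^ (α - 1) := by
    intro s hs
    have h1 : 0 < s - r := by linarith [hs.1]
    have h2 : 0 < t - s := by linarith [hs.2]
    positivity
  have hint := intervalIntegral.integrableOn_deriv_of_nonneg hcont hder hpos
  refine ⟨hint, ?_⟩
  rw [← intervalIntegral.integral_of_le hra.le,
    intervalIntegral.integral_eq_sub_of_hasDerivAt_of_le hra.le hcont hder
      ((intervalIntegrable_iff_integrableOn_Ioc_of_le hra.le).2 hint)]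
  simp [Real.zero_rpow hα0.ne']

/-- The exchange of integrals in the truncated Marchaud derivative, at `t` with truncation at `a`,
of the fractional integral of `u`. -/
lemma fubini_kernel {α a t : ℝ} (hα0 : 0 < α) (hat : a < t) {u : ℝ → ℝ}
    (hum : Measurable u) (hu : IntegrableOn u (Ioc 0 a)) :
    IntegrableOn (fun s => (t - s) ^ (-α - 1) * ∫ r in Ioc 0 s, (s - r) ^ (α - 1) * u r)
      (Ioc 0 a) ∧
    ∫ s in Ioc 0 a, (t - s) ^ (-α - 1) * ∫ r in Ioc 0 s, (s - r) ^ (α - 1) * u r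
      = ∫ r in Ioc 0 a, u r * (((a - r) / (t - a)) ^ α / (α * (t - r))) := by
  set μ := (volume : Measure ℝ).restrict (Ioc 0 a) with hμ
  let f : ℝ → ℝ → ℝ := fun s r =>
    (Ioi r).indicator (fun s => (t - s) ^ (-α - 1) * (s - r) ^ (α - 1)) s * u r
  have hfm : Measurable (Function.uncurry f) := by
    have : Function.uncurry f = fun p : ℝ × ℝ => ({p : ℝ × ℝ | p.2 < p.1}.indicator
        (fun p => (t - p.1) ^ (-α - 1) * (p.1 - p.2) ^ (α - 1)) p) * u p.2 := by
      ext p; simp [f, Function.uncurry, indicator]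
    rw [this]
    refine Measurable.mul (Measurable.indicator (by fun_prop) ?_) (by fun_prop)
    exact measurableSet_lt measurable_snd measurable_fst
  have key : ∀ r ∈ Ioo (0:ℝ) a,
      Integrable ((Ioi r).indicator (fun s => (t - s) ^ (-α - 1) * (s - r) ^ (α - 1))) μ ∧
      ∫ s, (Ioi r).indicator (fun s => (t - s) ^ (-α - 1) * (s - r) ^ (α - 1)) s ∂μ
        = ((a - r) / (t - a)) ^ α / (α * (t - r)) := by
    intro r hr
    have hI : Ioc 0 a ∩ Ioi r = Ioc r a := by
      ext x; simp only [mem_inter_iff, mem_Ioc, mem_Ioi]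
      exact ⟨fun h => ⟨h.2, h.1.2⟩, fun h => ⟨⟨hr.1.trans h.1, h.2⟩, h.1⟩⟩
    obtain ⟨k1, k2⟩ := kernel_integral hα0 hr.2 hat
    constructor
    · rw [integrable_indicator_iff measurableSet_Ioi, IntegrableOn, hμ,
        Measure.restrict_restrict measurableSet_Ioi, inter_comm, hI]
      exact k1
    · rw [hμ, setIntegral_indicator measurableSet_Ioi, hI, k2]
  have hmem : ∀ᵐ r ∂μ, r ∈ Ioo (0:ℝ) a := by
    rw [hμ, ← restrict_Ioo_eq_restrict_Ioc]
    exact ae_restrict_mem measurableSet_Ioo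
  have hbdd : ∀ r ∈ Ioo (0:ℝ) a, |((a - r) / (t - a)) ^ α / (α * (t - r))|
      ≤ (a / (t - a)) ^ α / (α * (t - a)) := by
    intro r hr
    have h1 : 0 < t - a := by linarith
    have h2 : 0 < a - r := by linarith [hr.2]
    have h3 : 0 < t - r := by linarith
    rw [abs_of_nonneg (by positivity)]
    have h4 : 0 < a := hr.1.trans hr.2
    have := hr.1
    gcongr
    · linarith
    · linarith
  have hfi : Integrable (Function.uncurry f) (μ.prod μ) := by
    rw [integrable_prod_iff' hfm.aestronglyMeasurable]
    constructor
    · filter_upwards [hmem] with r hr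
      exact (key r hr).1.mul_const (u r)
    · have e : (fun r => ∫ s, ‖Function.uncurry f (s, r)‖ ∂μ) =ᵐ[μ]
          fun r => (((a - r) / (t - a)) ^ α / (α * (t - r))) * |u r| := by
        filter_upwards [hmem] with r hr
        rw [← (key r hr).2, ← integral_mul_const]
        refine setIntegral_congr_fun measurableSet_Ioc fun s hs => ?_
        simp only [f, Function.uncurry, Real.norm_eq_abs, abs_mul]
        congr 1
        refine abs_of_nonneg (indicator_apply_nonneg fun h => ?_)
        have h1 : 0 < s - r := by linarith [mem_Ioi.1 h]
        have h2 : 0 < t - s := by linarith [hs.2]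
        positivity
      rw [integrable_congr e]
      refine Integrable.bdd_mul (c := (a / (t - a)) ^ α / (α * (t - a))) hu.abs
        (Measurable.aestronglyMeasurable (by fun_prop)) ?_
      filter_upwards [hmem] with r hr using hbdd r hr
  have hin : ∀ s ∈ Ioc 0 a, ∫ r, f s r ∂μ
      = (t - s) ^ (-α - 1) * ∫ r in Ioc 0 s, (s - r) ^ (α - 1) * u r := by
    intro s hs
    have e : (fun r => f s r) = (Iio s).indicator
        (fun r => (t - s) ^ (-α - 1) * ((s - r) ^ (α - 1) * u r)) := by
      ext r
      by_cases h : r < s <;> simp [f, indicator, h, mul_assoc]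
    have hI : Ioc 0 a ∩ Iio s = Ioo 0 s := by
      ext x; simp only [mem_inter_iff, mem_Ioc, mem_Iio, mem_Ioo]
      exact ⟨fun h => ⟨h.1.1, h.2⟩, fun h => ⟨⟨h.1, h.2.le.trans hs.2⟩, h.2⟩⟩
    rw [e, hμ, setIntegral_indicator measurableSet_Iio, hI, ← integral_Ioc_eq_integral_Ioo,
      integral_const_mul]
  constructor
  · refine hfi.integral_prod_left.congr ?_
    filter_upwards [ae_restrict_mem measurableSet_Ioc] with s hs using hin s hs
  · rw [← setIntegral_congr_fun measurableSet_Ioc hin, integral_integral_swap hfi]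
    refine integral_congr_ae ?_
    filter_upwards [hmem] with r hr
    rw [← (key r hr).2, ← integral_const_mul]
    simp only [f, mul_comm]

/-- At a zero `t` of `φ`, the average of `|u|` near `t` against the kernel `majorant α h` is bounded
below by a multiple of `h^α`, uniformly in `t`. -/
lemma fractional_bound {α y₀ c t h T : ℝ} (hα0 : 0 < α) (hα1 : α < 1) (hy₀ : 0 < y₀)
    (hh : 0 < h) (hht : h < t) (htT : t ≤ T) {u φ : ℝ → ℝ} (hum : Measurable u)
    (hu : IntegrableOn u (Ioc 0 T)) (hφ : ∀ s ∈ Icc 0 T, 0 ≤ φ s)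
    (hsol : ∀ s ∈ Icc 0 T, φ s = y₀ + c * ∫ r in Ioc 0 s, (s - r) ^ (α - 1) * u r)
    (ht0 : φ t = 0) :
    ENNReal.ofReal (y₀ * (h / T) ^ α)
      ≤ ENNReal.ofReal |c| * ∫⁻ r in Ioc 0 t, ENNReal.ofReal (|u r| * majorant α h (t - r)) := by
  have htpos : 0 < t := hh.trans hht
  have hat : t - h < t := by linarith
  have ha0 : 0 < t - h := by linarith
  have hta : t - (t - h) = h := by ring
  have hzero := hsol t ⟨htpos.le, htT⟩
  rw [ht0] at hzero
  -- a non-integrable integrand would have integral `0`, which forces `φ t = y₀ > 0`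
  have hint : IntegrableOn (fun r => (t - r) ^ (α - 1) * u r) (Ioc 0 t) := by
    by_contra hn
    rw [integral_undef hn] at hzero
    linarith
  have hua : IntegrableOn u (Ioc 0 (t - h)) :=
    hu.mono_set (Ioc_subset_Ioc_right (by linarith))
  obtain ⟨F1, F2⟩ := fubini_kernel hα0 hat hum hua
  have hw0 : ∀ s ∈ Ioo 0 (t - h), HasDerivAt (fun s => (t - s) ^ (-α) / α)
      ((t - s) ^ (-α - 1)) s := by
    intro s hs
    have h2 : 0 < t - s := by linarith [hs.2]
    refine ((((hasDerivAt_id' s).const_sub t).rpow_const (p := -α)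
      (Or.inl h2.ne')).div_const α).congr_deriv ?_
    field_simp
  have hwc : ContinuousOn (fun s => (t - s) ^ (-α) / α) (Icc 0 (t - h)) := by
    refine ContinuousOn.div_const (ContinuousOn.rpow_const (by fun_prop) fun s hs => Or.inl ?_) _
    have := hs.2; linarith
  have hwi : IntegrableOn (fun s => (t - s) ^ (-α - 1)) (Ioc 0 (t - h)) := by
    refine intervalIntegral.integrableOn_deriv_of_nonneg hwc hw0 fun s hs => ?_
    exact Real.rpow_nonneg (by linarith [hs.2]) _
  have hwv : ∫ s in Ioc 0 (t - h), (t - s) ^ (-α - 1) = (h ^ (-α) - t ^ (-α)) / α := by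
    rw [← intervalIntegral.integral_of_le ha0.le,
      intervalIntegral.integral_eq_sub_of_hasDerivAt_of_le ha0.le hwc hw0
      ((intervalIntegrable_iff_integrableOn_Ioc_of_le ha0.le).2 hwi), hta]
    simp; ring
  have hnn : 0 ≤ ∫ s in Ioc 0 (t - h), (t - s) ^ (-α - 1) * φ s := by
    refine setIntegral_nonneg measurableSet_Ioc fun s hs => mul_nonneg ?_ ?_
    · exact Real.rpow_nonneg (by linarith [hs.2]) _
    · exact hφ s ⟨hs.1.le, by linarith [hs.2]⟩
  have hexp : ∫ s in Ioc 0 (t - h), (t - s) ^ (-α - 1) * φ s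
      = y₀ * ((h ^ (-α) - t ^ (-α)) / α) +
        c * ∫ r in Ioc 0 (t - h), u r * (((t - h - r) / (t - (t - h))) ^ α / (α * (t - r))) := by
    rw [← F2, ← hwv, ← integral_const_mul, ← integral_const_mul,
      ← integral_add (hwi.const_mul y₀) (F1.const_mul c)]
    refine setIntegral_congr_fun measurableSet_Ioc fun s hs => ?_
    rw [hsol s ⟨hs.1.le, by linarith [hs.2]⟩]
    ring
  -- extend the second integral to `(0, t]` and pull out the factor `h ^ (-α) / α`
  have hext : ∫ r in Ioc 0 (t - h), u r * (((t - h - r) / (t - (t - h))) ^ α / (α * (t - r)))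
      = h ^ (-α) / α * ∫ r in Ioc 0 t, (max (t - r - h) 0) ^ α / (t - r) * u r := by
    rw [setIntegral_eq_of_subset_of_forall_sdiff_eq_zero measurableSet_Ioc
      (Ioc_subset_Ioc_right hat.le : Ioc 0 (t - h) ⊆ Ioc 0 t), ← integral_const_mul]
    · refine setIntegral_congr_fun measurableSet_Ioc fun r hr => ?_
      have hr2 := hr.2
      rw [hta, max_eq_left (by linarith), Real.div_rpow (by linarith) hh.le, Real.rpow_neg hh.le,
        show t - h - r = t - r - h by ring]
      have : t - r ≠ 0 := by linarith
      field_simp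
    · intro r hr
      have : t - h < r := by
        by_contra hc
        exact hr.2 ⟨hr.1.1, not_lt.1 hc⟩
      rw [max_eq_right (by linarith), Real.zero_rpow hα0.ne']
      simp
  have hint2 : IntegrableOn (fun r => (max (t - r - h) 0) ^ α / (t - r) * u r) (Ioc 0 t) := by
    refine Integrable.bdd_mul (c := t ^ α / h) (hu.mono_set (Ioc_subset_Ioc_right htT))
      (Measurable.aestronglyMeasurable (by fun_prop)) ?_
    filter_upwards [ae_restrict_mem measurableSet_Ioc] with r hr
    have hr1 := hr.1
    rcases le_or_gt (t - r) h with hx | hx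
    · rw [max_eq_right (by linarith), Real.zero_rpow hα0.ne']
      simp; positivity
    · have h3 : 0 < t - r - h := by linarith
      have h4 : 0 < t - r := by linarith
      rw [max_eq_left (by linarith), Real.norm_of_nonneg (by positivity)]
      gcongr
      linarith
  set A := ∫ r in Ioc 0 t, (max (t - r - h) 0) ^ α / (t - r) * u r with hA
  set B := ∫ r in Ioc 0 t, (t - r) ^ (α - 1) * u r with hB
  have hlow : y₀ * (h / t) ^ α ≤ -c * (B - A) := by
    rw [hexp, hext] at hnn
    have hhα : 0 < h ^ α := by positivity
    have e : y₀ * ((h ^ (-α) - t ^ (-α)) / α) + c * (h ^ (-α) / α * A)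
        = (y₀ * (1 - (h / t) ^ α) + c * A) * (h ^ (-α) / α) := by
      rw [Real.div_rpow hh.le htpos.le, Real.rpow_neg hh.le, Real.rpow_neg htpos.le]
      field_simp
    rw [e] at hnn
    have := nonneg_of_mul_nonneg_left hnn (by positivity)
    linarith
  have hTpos : 0 < T := htpos.trans_le htT
  have hlow2 : y₀ * (h / T) ^ α ≤ |c| * ‖B - A‖ := by
    calc y₀ * (h / T) ^ α ≤ y₀ * (h / t) ^ α := by gcongr
      _ ≤ -c * (B - A) := hlow
      _ ≤ |-c * (B - A)| := le_abs_self _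
      _ = |c| * ‖B - A‖ := by rw [abs_mul, abs_neg, Real.norm_eq_abs]
  refine (ENNReal.ofReal_le_ofReal hlow2).trans ?_
  rw [ENNReal.ofReal_mul (abs_nonneg c)]
  gcongr
  rw [hA, hB, ← integral_sub hint hint2, ofReal_norm]
  refine (enorm_integral_le_lintegral_enorm _).trans ?_
  rw [← restrict_Ioo_eq_restrict_Ioc]
  refine setLIntegral_mono' measurableSet_Ioo fun r hr => ?_
  rw [← ofReal_norm]
  refine ENNReal.ofReal_le_ofReal ?_
  rw [← sub_mul, norm_mul, Real.norm_eq_abs, Real.norm_eq_abs, mul_comm]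
  gcongr
  exact abs_kernel_le_majorant hα0 hα1 hh (by linarith [hr.2])

/-- The main result for a globally defined continuous `φ`, and for `v` merely in `L¹`. -/
lemma volume_zero_set {α y₀ c T : ℝ} (hα0 : 0 < α) (hα1 : α < 1) (hy₀ : 0 < y₀) (hT : 0 < T)
    {v φ : ℝ → ℝ} (hvm : Measurable v) (hv : IntegrableOn v (Ioc 0 T))
    (hφc : Continuous φ) (hφ : ∀ s, 0 ≤ φ s)
    (hsol : ∀ s ∈ Icc 0 T, φ s = y₀ + c * ∫ r in Ioc 0 s, (s - r) ^ (α - 1) * (√(φ r) * v r)) :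
    volume {t ∈ Icc 0 T | φ t = 0} = 0 := by
  set Z := {t ∈ Icc 0 T | φ t = 0} with hZ
  have hZc : IsClosed Z := isClosed_Icc.inter (isClosed_eq hφc continuous_const)
  have hZm : MeasurableSet Z := hZc.measurableSet
  have hZT : volume Z ≤ ENNReal.ofReal T := by
    refine (measure_mono (fun t ht => ht.1 : Z ⊆ Icc 0 T)).trans ?_
    simp
  have hZfin : volume Z ≠ ⊤ := (hZT.trans_lt ENNReal.ofReal_lt_top).ne
  -- zeros stay away from `0`, because `φ 0 = y₀`
  obtain ⟨t₀, ht₀, hZt₀⟩ : ∃ t₀ > 0, ∀ t ∈ Z, t₀ ≤ t := by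
    have h0 : φ 0 = y₀ := by simpa using hsol 0 ⟨le_rfl, hT.le⟩
    have : ∀ᶠ t in nhds (0:ℝ), 0 < φ t :=
      hφc.continuousAt.eventually (lt_mem_nhds (by rw [h0]; exact hy₀))
    obtain ⟨t₀, ht₀, hb⟩ := Metric.eventually_nhds_iff.1 this
    refine ⟨t₀, ht₀, fun t ht => ?_⟩
    by_contra hlt
    have := hb (y := t) (by rw [Real.dist_eq, sub_zero, abs_of_nonneg ht.1.1]; linarith)
    linarith [ht.2]
  obtain ⟨M, hM⟩ : ∃ M, ∀ r ∈ Icc 0 T, √(φ r) ≤ M := by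
    obtain ⟨M, hM⟩ := isCompact_Icc.bddAbove_image
      (f := fun r => √(φ r)) (K := Icc (0:ℝ) T) (by fun_prop)
    exact ⟨M, fun r hr => hM ⟨r, hr, rfl⟩⟩
  have hM0 : 0 ≤ M := (Real.sqrt_nonneg _).trans (hM 0 ⟨le_rfl, hT.le⟩)
  have hu : IntegrableOn (fun r => √(φ r) * v r) (Ioc 0 T) := by
    refine Integrable.bdd_mul (c := M) hv
      (Continuous.aestronglyMeasurable (by fun_prop)) ?_
    filter_upwards [ae_restrict_mem measurableSet_Ioc] with r hr
    rw [Real.norm_of_nonneg (Real.sqrt_nonneg _)]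
    exact hM r ⟨hr.1.le, hr.2⟩
  have hum : Measurable fun r => √(φ r) * v r := by fun_prop
  set V := ∫ r in Ioc 0 T, |v r| with hV
  have hV0 : 0 ≤ V := integral_nonneg fun _ => abs_nonneg _
  set κ := 1 / α + 1 / (1 - α) with hκ
  have hκ0 : 0 ≤ κ := by
    have : 0 < 1 - α := by linarith
    positivity
  set z := (volume Z).toReal with hz
  -- `fractional_bound` integrated over the zero set
  have main : ∀ ε > 0, ∃ δ > 0, ∀ h > 0, h < δ → h < t₀ →
      y₀ * (h / T) ^ α * z ≤ |c| * (V * (ε * (h ^ α * κ) + M * (h * δ ^ (α - 2)) * T)) := by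
    intro ε hε
    have huc : UniformContinuousOn (fun r => √(φ r)) (Icc 0 T) :=
      isCompact_Icc.uniformContinuousOn_of_continuous (by fun_prop)
    obtain ⟨δ, hδ, hunif⟩ := Metric.uniformContinuousOn_iff.1 huc ε hε
    refine ⟨δ, hδ, fun h hh hhδ hht₀ => ?_⟩
    have hnear : ∀ t ∈ Z, ∀ r ∈ Ioc 0 T, r < t →
        √(φ r) * majorant α h (t - r) ≤ ε * majorant α h (t - r) + M * (h * δ ^ (α - 2)) := by
      intro t ht r hr hrt
      have hx : 0 < t - r := by linarith
      have hr' : r ∈ Icc 0 T := ⟨hr.1.le, hr.2⟩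
      rcases lt_or_ge (t - r) δ with hlt | hge
      · have h1 := hunif r hr' t ht.1
          (by rw [Real.dist_eq, abs_sub_comm, abs_of_pos hx]; exact hlt)
        rw [ht.2, Real.sqrt_zero, Real.dist_eq, sub_zero, abs_of_nonneg (Real.sqrt_nonneg _)] at h1
        have h2 := mul_le_mul_of_nonneg_right h1.le (majorant_nonneg (α := α) hh hx)
        have h3 : 0 ≤ M * (h * δ ^ (α - 2)) := by positivity
        linarith
      · have h1 : majorant α h (t - r) ≤ h * δ ^ (α - 2) := by
          rw [majorant, if_neg (by linarith)]
          exact mul_le_mul_of_nonneg_left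
            (Real.rpow_le_rpow_of_nonpos hδ hge (by linarith)) hh.le
        have h2 := mul_le_mul (hM r hr') h1 (majorant_nonneg hh hx) hM0
        have h3 := mul_nonneg hε.le (majorant_nonneg (α := α) hh hx)
        linarith
    -- `K t r` is the integrand of the double integral, cut off to `r < t`
    let K : ℝ → ℝ → ENNReal := fun t r =>
      {p : ℝ × ℝ | p.2 < p.1}.indicator
        (fun p => ENNReal.ofReal (|√(φ p.2) * v p.2| * majorant α h (p.1 - p.2))) (t, r)
    have hKm : Measurable (Function.uncurry K) := by
      have := measurable_majorant α h
      exact Measurable.indicator (by fun_prop) (measurableSet_lt measurable_snd measurable_fst)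
    have s1 : ENNReal.ofReal (y₀ * (h / T) ^ α) * volume Z
        ≤ ENNReal.ofReal |c| * ∫⁻ t in Z, ∫⁻ r in Ioc 0 T, K t r := by
      rw [← lintegral_const_mul _ (Measurable.lintegral_prod_right hKm), ← setLIntegral_const]
      refine setLIntegral_mono' hZm fun t ht => ?_
      refine (fractional_bound hα0 hα1 hy₀ hh (hht₀.trans_le (hZt₀ t ht)) ht.1.2 hum hu
        (fun s _ => hφ s) hsol ht.2).trans ?_
      refine mul_le_mul_right ?_ _
      rw [← restrict_Ioo_eq_restrict_Ioc]
      calc _ = ∫⁻ r in Ioo 0 t, K t r := by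
            refine setLIntegral_congr_fun measurableSet_Ioo fun r hr => ?_
            simp [K, indicator, hr.2]
        _ ≤ ∫⁻ r in Ioc 0 T, K t r :=
            lintegral_mono_set fun r hr => ⟨hr.1, hr.2.le.trans ht.1.2⟩
    have s2 : ∀ r ∈ Ioc 0 T, ∫⁻ t in Z, K t r ≤ ENNReal.ofReal |v r| *
        ENNReal.ofReal (ε * (h ^ α * κ) + M * (h * δ ^ (α - 2)) * T) := by
      intro r hr
      have hC : 0 ≤ M * (h * δ ^ (α - 2)) := by positivity
      calc ∫⁻ t in Z, K t r
          ≤ ∫⁻ t in Z, ENNReal.ofReal |v r| *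
            (ENNReal.ofReal ε * (Ioi r).indicator
              (fun t => ENNReal.ofReal (majorant α h (t - r))) t
              + ENNReal.ofReal (M * (h * δ ^ (α - 2)))) := by
            refine setLIntegral_mono' hZm fun t ht => ?_
            by_cases hrt : r < t
            · simp only [K, indicator, mem_ofPred_eq, hrt, if_true, mem_Ioi]
              have hx : 0 < t - r := by linarith
              have hm := majorant_nonneg (α := α) hh hx
              rw [← ENNReal.ofReal_mul hε.le, ← ENNReal.ofReal_add (by positivity) hC,
                ← ENNReal.ofReal_mul (abs_nonneg _)]
              refine ENNReal.ofReal_le_ofReal ?_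
              rw [abs_mul, abs_of_nonneg (Real.sqrt_nonneg _), mul_comm (√(φ r)), mul_assoc]
              exact mul_le_mul_of_nonneg_left (hnear t ht r hr hrt) (abs_nonneg _)
            · simp [K, indicator, hrt]
        _ = ENNReal.ofReal |v r| * (ENNReal.ofReal ε * (∫⁻ t in Z, (Ioi r).indicator
              (fun t => ENNReal.ofReal (majorant α h (t - r))) t)
              + ENNReal.ofReal (M * (h * δ ^ (α - 2))) * volume Z) := by
            have hm := measurable_majorant α h
            have hm2 : Measurable ((Ioi r).indicator
              (fun t => ENNReal.ofReal (majorant α h (t - r)))) :=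
              Measurable.indicator (by fun_prop) measurableSet_Ioi
            rw [lintegral_const_mul _ (by fun_prop), lintegral_add_right _ measurable_const,
              lintegral_const_mul _ hm2, setLIntegral_const]
        _ ≤ ENNReal.ofReal |v r| * (ENNReal.ofReal ε * ENNReal.ofReal (h ^ α * κ)
              + ENNReal.ofReal (M * (h * δ ^ (α - 2))) * ENNReal.ofReal T) := by
            gcongr
            refine (setLIntegral_le_lintegral _ _).trans ?_
            refine le_trans (le_of_eq ?_) (lintegral_majorant_le hα0 hα1 hh)
            rw [← lintegral_indicator measurableSet_Ioi,
              ← lintegral_sub_right_eq_self (fun x => (Ioi (0:ℝ)).indicator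
                (fun x => ENNReal.ofReal (majorant α h x)) x) r]
            refine lintegral_congr fun t => ?_
            simp [indicator]
        _ = _ := by
            rw [← ENNReal.ofReal_mul hε.le, ← ENNReal.ofReal_mul hC,
              ← ENNReal.ofReal_add (by positivity) (by positivity)]
    have s3 : ∫⁻ t in Z, ∫⁻ r in Ioc 0 T, K t r ≤
        ENNReal.ofReal (V * (ε * (h ^ α * κ) + M * (h * δ ^ (α - 2)) * T)) := by
      rw [lintegral_lintegral_swap hKm.aemeasurable]
      refine (setLIntegral_mono' measurableSet_Ioc s2).trans ?_
      rw [lintegral_mul_const _ (by fun_prop), ENNReal.ofReal_mul hV0, hV,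
        ofReal_integral_eq_lintegral_ofReal hv.abs (ae_of_all _ fun _ => abs_nonneg _)]
    have s4 := s1.trans (mul_le_mul_right s3 _)
    rw [← ENNReal.ofReal_toReal hZfin, ← ENNReal.ofReal_mul (by positivity),
      ← ENNReal.ofReal_mul (abs_nonneg c)] at s4
    exact (ENNReal.ofReal_le_ofReal_iff (by positivity)).1 s4
  -- divide by `h ^ α` and let `h → 0`, then `ε → 0`
  have lim1 : ∀ ε > 0, y₀ * (1 / T) ^ α * z ≤ |c| * (V * (ε * κ)) := by
    intro ε hε
    obtain ⟨δ, hδ, hb⟩ := main ε hε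
    have hpow : Filter.Tendsto (fun h : ℝ => h ^ (1 - α)) (nhdsWithin 0 (Ioi 0)) (nhds 0) := by
      have := (Real.continuousAt_rpow_const 0 (1 - α) (Or.inr (by linarith))).tendsto
      rw [Real.zero_rpow (by linarith)] at this
      exact this.mono_left nhdsWithin_le_nhds
    have hlim : Filter.Tendsto
        (fun h : ℝ => |c| * (V * (ε * κ + M * (h ^ (1 - α) * δ ^ (α - 2)) * T)))
        (nhdsWithin 0 (Ioi 0)) (nhds (|c| * (V * (ε * κ + M * (0 * δ ^ (α - 2)) * T)))) :=
      ((((hpow.mul_const _).const_mul M).mul_const T).const_add _).const_mul V |>.const_mul |c|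
    have := ge_of_tendsto hlim (b := y₀ * (1 / T) ^ α * z) ?_
    · simpa using this
    · filter_upwards [Ioo_mem_nhdsGT (lt_min hδ ht₀)] with h hh
      have h0 := hh.1
      have hα : 0 < h ^ α := by positivity
      have hb' := hb h hh.1 (hh.2.trans_le (min_le_left _ _)) (hh.2.trans_le (min_le_right _ _))
      refine le_of_mul_le_mul_right ?_ hα
      have e1 : (h / T) ^ α = (1 / T) ^ α * h ^ α := by
        rw [← Real.mul_rpow (by positivity) hh.1.le]; congr 1; ring
      have e2 : h ^ (1 - α) * h ^ α = h := by
        rw [← Real.rpow_add hh.1]; simp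
      calc y₀ * (1 / T) ^ α * z * h ^ α = y₀ * (h / T) ^ α * z := by rw [e1]; ring
        _ ≤ _ := hb'
        _ = |c| * (V * (ε * (h ^ α * κ) + M * ((h ^ (1 - α) * h ^ α) * δ ^ (α - 2)) * T)) := by
            rw [e2]
        _ = _ := by ring
  have lim2 : y₀ * (1 / T) ^ α * z ≤ 0 := by
    have hlim : Filter.Tendsto (fun ε : ℝ => |c| * (V * (ε * κ)))
        (nhdsWithin 0 (Ioi 0)) (nhds (|c| * (V * (0 * κ)))) :=
      ((((Filter.tendsto_id).mono_left nhdsWithin_le_nhds).mul_const κ).const_mul V).const_mul |c|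
    have := ge_of_tendsto hlim (b := y₀ * (1 / T) ^ α * z)
      (by filter_upwards [self_mem_nhdsWithin] with ε hε using lim1 ε hε)
    simpa using this
  have hz0 : z ≤ 0 := nonpos_of_mul_nonpos_right lim2 (by positivity)
  have := (ENNReal.toReal_eq_zero_iff _).1 (le_antisymm hz0 ENNReal.toReal_nonneg)
  exact this.resolve_right hZfin

end RoughHeston

/-- **A.e. positivity for the controlled rough Heston variance equation.**
If `φ ≥ 0` is continuous and satisfies
`φ t = y₀ + (ξ/Γ(H+1/2)) ∫₀ᵗ (t-s)^{H-1/2} √(φ s) v s ds` on `[0,T]` with `y₀ > 0`,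
`H ∈ (0,1/2)` and `v ∈ L²`, then `{t ∈ [0,T] : φ t > 0}` has Lebesgue measure `T`. -/
theorem rough_heston_positive_ae
    (T H y₀ ξ : ℝ) (hT : 0 < T) (hH : H ∈ Ioo (0:ℝ) (1/2)) (hy₀ : 0 < y₀)
    (v : ℝ → ℝ) (hvmeas : Measurable v)
    (hvL2 : IntegrableOn (fun s => v s ^ 2) (Ioc 0 T))
    (φ : ℝ → ℝ) (hφc : ContinuousOn φ (Icc 0 T))
    (hφnn : ∀ t ∈ Icc (0:ℝ) T, 0 ≤ φ t)
    (hsol : ∀ t ∈ Icc (0:ℝ) T,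
      φ t = y₀ + (ξ / Real.Gamma (H + 1/2)) *
        ∫ s in Ioc 0 t, (t - s) ^ (H - 1/2) * Real.sqrt (φ s) * v s) :
    volume {t ∈ Icc (0:ℝ) T | 0 < φ t} = ENNReal.ofReal T := by
  have hα0 : 0 < H + 1 / 2 := by linarith [hH.1]
  have hα1 : H + 1 / 2 < 1 := by linarith [hH.2]
  have hv : IntegrableOn v (Ioc 0 T) := by
    have h2 : MemLp v 2 (volume.restrict (Ioc 0 T)) :=
      (memLp_two_iff_integrable_sq hvmeas.aestronglyMeasurable).2 hvL2
    exact h2.integrable (by norm_num)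
  -- `ψ` extends `φ` continuously to the whole line by constants
  let ψ : ℝ → ℝ := IccExtend hT.le ((Icc 0 T).domRestrict φ)
  have hψφ : ∀ t ∈ Icc (0:ℝ) T, ψ t = φ t := fun t ht => by
    simp [ψ, IccExtend_of_mem hT.le _ ht]
  have hψc : Continuous ψ := hφc.domRestrict.Icc_extend'
  have hψ0 : ∀ t, 0 ≤ ψ t := fun t => hφnn _ (projIcc 0 T hT.le t).2
  have hnull := RoughHeston.volume_zero_set (c := ξ / Real.Gamma (H + 1 / 2)) hα0 hα1 hy₀ hT
    hvmeas hv hψc hψ0 (fun t ht => by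
      rw [hψφ t ht, hsol t ht]
      congr 2
      refine setIntegral_congr_fun measurableSet_Ioc fun s hs => ?_
      rw [hψφ s ⟨hs.1.le, hs.2.trans ht.2⟩, show H + 1 / 2 - 1 = H - 1 / 2 by ring, mul_assoc])
  have hset : {t ∈ Icc (0:ℝ) T | 0 < φ t} = Icc 0 T \ {t ∈ Icc 0 T | ψ t = 0} := by
    ext t
    simp only [mem_ofPred_eq, mem_sdiff, not_and]
    constructor
    · rintro ⟨h1, h2⟩
      exact ⟨h1, fun _ h3 => by rw [hψφ t h1] at h3; linarith⟩
    · rintro ⟨h1, h2⟩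
      exact ⟨h1, lt_of_le_of_ne (hφnn t h1) fun h3 => h2 h1 (by rw [hψφ t h1, ← h3])⟩
  rw [hset, measure_sdiff_null hnull]
  simp
end

section
/- Let H ∈ (0, 1/2) and h > 0. Define F_h(t) := (1/(Γ(H+1/2) Γ(1/2−H))) ∫₀ᵗ (t − s + h)^{H−1/2} s^{−H−1/2} ds for t ≥ 0. Then F_h is strictly increasing on [0,∞), and 0 < F_h(t) < 1 for every t > 0. -/
/-!
Since the exponents satisfy `(H - 1/2) + (-H - 1/2) = -1`, the substitution `s = (t + h) x` turns
the integral into an incomplete Beta integral,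
`∫₀ᵗ (t-s+h)^(H-1/2) s^(-H-1/2) ds = ∫₀^{t/(t+h)} x^(-H-1/2) (1-x)^(H-1/2) dx`
(`shifted_integral_eq`). The integrand on the right is positive on `(0,1)`, does not depend on `t`,
and its integral over the whole of `(0,1)` is `B(1/2-H, H+1/2) = Γ(1/2-H) Γ(H+1/2)`
(`integral_betaDensity`). As `t ↦ t/(t+h)` is strictly increasing from `0` towards `1`, both
claims follow from strict monotonicity of the incomplete integral in its upper endpoint.
-/

open MeasureTheory Set

/-- The integrand `x^(u-1) (1-x)^(v-1)` of the Beta integral for `u = 1/2 - H`, `v = H + 1/2`. -/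
noncomputable def betaDensity (H x : ℝ) : ℝ := x ^ (-H - 1/2) * (1 - x) ^ (H - 1/2)

lemma betaDensity_pos (H : ℝ) {x : ℝ} (hx : x ∈ Ioo (0:ℝ) 1) : 0 < betaDensity H x :=
  mul_pos (Real.rpow_pos_of_pos hx.1 _) (Real.rpow_pos_of_pos (sub_pos.2 hx.2) _)

lemma ofReal_betaDensity (H : ℝ) {x : ℝ} (hx : x ∈ Icc (0:ℝ) 1) :
    (betaDensity H x : ℂ) =
      (x : ℂ) ^ (((1/2 - H : ℝ) : ℂ) - 1) * (1 - (x : ℂ)) ^ (((H + 1/2 : ℝ) : ℂ) - 1) := by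
  rw [betaDensity, Complex.ofReal_mul, Complex.ofReal_cpow hx.1,
    Complex.ofReal_cpow (sub_nonneg.2 hx.2)]
  congr 2 <;> push_cast <;> ring

lemma intervalIntegrable_betaDensity {H : ℝ} (hH : H ∈ Ioo (0:ℝ) (1/2)) :
    IntervalIntegrable (betaDensity H) volume 0 1 := by
  have hc := Complex.betaIntegral_convergent (u := ((1/2 - H : ℝ) : ℂ))
    (v := ((H + 1/2 : ℝ) : ℂ)) (by rw [Complex.ofReal_re]; linarith [hH.2])
    (by rw [Complex.ofReal_re]; linarith [hH.1])
  rw [intervalIntegrable_iff_integrableOn_Ioc_of_le zero_le_one] at hc ⊢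
  refine IntegrableOn.congr_fun hc.re (fun x hx => ?_) measurableSet_Ioc
  rw [← ofReal_betaDensity H (Ioc_subset_Icc_self hx)]
  simp

lemma integral_betaDensity {H : ℝ} (hH : H ∈ Ioo (0:ℝ) (1/2)) :
    ∫ x in (0:ℝ)..1, betaDensity H x = Real.Gamma (H + 1/2) * Real.Gamma (1/2 - H) := by
  have hu : 0 < 1/2 - H := by linarith [hH.2]
  have hv : 0 < H + 1/2 := by linarith [hH.1]
  have key : Complex.betaIntegral ((1/2 - H : ℝ) : ℂ) ((H + 1/2 : ℝ) : ℂ) =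
      ((∫ x in (0:ℝ)..1, betaDensity H x : ℝ) : ℂ) := by
    rw [← intervalIntegral.integral_ofReal, Complex.betaIntegral]
    refine intervalIntegral.integral_congr fun x hx => ?_
    rw [uIcc_of_le zero_le_one] at hx
    exact (ofReal_betaDensity H hx).symm
  have hB := ProbabilityTheory.beta_eq_betaIntegralReal _ _ hu hv
  rw [key, Complex.ofReal_re, ProbabilityTheory.beta,
    show 1/2 - H + (H + 1/2) = 1 by ring, Real.Gamma_one, div_one] at hB
  rw [← hB, mul_comm]

/-- Positivity and integrability of the density make the incomplete Beta integral strictly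
increasing in its upper endpoint. -/
lemma strictMonoOn_integral_betaDensity {H : ℝ} (hH : H ∈ Ioo (0:ℝ) (1/2)) :
    StrictMonoOn (fun y => ∫ x in (0:ℝ)..y, betaDensity H x) (Icc 0 1) := by
  intro a ha b hb hab
  have hint : ∀ {c d : ℝ}, c ∈ Icc (0:ℝ) 1 → d ∈ Icc (0:ℝ) 1 →
      IntervalIntegrable (betaDensity H) volume c d := fun hc hd =>
    (intervalIntegrable_betaDensity hH).mono_set
      (by rw [uIcc_of_le (zero_le_one' ℝ)]; exact uIcc_subset_Icc hc hd)
  have h0 : (0:ℝ) ∈ Icc (0:ℝ) 1 := ⟨le_rfl, zero_le_one⟩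
  have hpos := intervalIntegral.intervalIntegral_pos_of_pos_on (hint ha hb)
    (fun x hx => betaDensity_pos H ⟨ha.1.trans_lt hx.1, hx.2.trans_le hb.2⟩) hab
  have hadd := intervalIntegral.integral_add_adjacent_intervals (hint h0 ha) (hint ha hb)
  change (∫ x in (0:ℝ)..a, betaDensity H x) < ∫ x in (0:ℝ)..b, betaDensity H x
  linarith

/-- The substitution `s = (t + h) x`; the Jacobian `t + h` cancels the factor `(t + h)^(-1)`
coming from the two powers. -/
lemma shifted_integral_eq (H : ℝ) {h t : ℝ} (hh : 0 < h) (ht : 0 ≤ t) :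
    ∫ s in Ioc 0 t, (t - s + h) ^ (H - 1/2) * s ^ (-H - 1/2) =
      ∫ x in (0:ℝ)..(t / (t + h)), betaDensity H x := by
  have hT : 0 < t + h := by linarith
  rw [← intervalIntegral.integral_of_le ht]
  have hsub := intervalIntegral.mul_integral_comp_mul_left (a := 0) (b := t / (t + h))
    (f := fun s => (t - s + h) ^ (H - 1/2) * s ^ (-H - 1/2)) (c := t + h)
  rw [mul_zero, mul_div_cancel₀ _ hT.ne'] at hsub
  rw [← hsub, ← intervalIntegral.integral_const_mul]
  refine intervalIntegral.integral_congr fun x hx => ?_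
  rw [uIcc_of_le (by positivity)] at hx
  have hx1 : 0 ≤ 1 - x := by
    have : t / (t + h) ≤ 1 := (div_le_one hT).2 (by linarith)
    linarith [hx.2]
  have hpow : (t + h) ^ (H - 1/2) * (t + h) ^ (-H - 1/2) = (t + h)⁻¹ := by
    rw [← Real.rpow_add hT, show H - 1/2 + (-H - 1/2) = -1 by ring, Real.rpow_neg_one]
  change (t + h) * ((t - (t + h) * x + h) ^ (H - 1/2) * ((t + h) * x) ^ (-H - 1/2)) =
    x ^ (-H - 1/2) * (1 - x) ^ (H - 1/2)
  rw [show t - (t + h) * x + h = (t + h) * (1 - x) by ring, Real.mul_rpow hT.le hx1,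
    Real.mul_rpow hT.le hx.1]
  calc _ = (t + h) * ((t + h) ^ (H - 1/2) * (t + h) ^ (-H - 1/2)) *
        (x ^ (-H - 1/2) * (1 - x) ^ (H - 1/2)) := by ring
    _ = _ := by rw [hpow, mul_inv_cancel₀ hT.ne', one_mul]

/-- **Strict monotonicity of the shifted-kernel resolvent convolution.** For `H ∈ (0,1/2)`
and `h > 0`, the function
`F_h(t) = (1/(Γ(H+1/2)Γ(1/2-H))) ∫₀ᵗ (t-s+h)^{H-1/2} s^{-H-1/2} ds`
is strictly increasing on `[0,∞)` and satisfies `0 < F_h(t) < 1` for every `t > 0`. -/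
theorem shifted_kernel_resolvent_strict_mono
    (H h : ℝ) (hH : H ∈ Ioo (0:ℝ) (1/2)) (hh : 0 < h) :
    StrictMonoOn
      (fun t => (Real.Gamma (H + 1/2) * Real.Gamma (1/2 - H))⁻¹ *
        ∫ s in Ioc 0 t, (t - s + h) ^ (H - 1/2) * s ^ (-H - 1/2))
      (Ici (0:ℝ)) ∧
    ∀ t > (0:ℝ),
      (0 < (Real.Gamma (H + 1/2) * Real.Gamma (1/2 - H))⁻¹ *
        ∫ s in Ioc 0 t, (t - s + h) ^ (H - 1/2) * s ^ (-H - 1/2)) ∧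
      (Real.Gamma (H + 1/2) * Real.Gamma (1/2 - H))⁻¹ *
        (∫ s in Ioc 0 t, (t - s + h) ^ (H - 1/2) * s ^ (-H - 1/2)) < 1 := by
  have hC : 0 < Real.Gamma (H + 1/2) * Real.Gamma (1/2 - H) :=
    mul_pos (Real.Gamma_pos_of_pos (by linarith [hH.1])) (Real.Gamma_pos_of_pos (by linarith [hH.2]))
  have hmono := strictMonoOn_integral_betaDensity hH
  have hmem : ∀ {t : ℝ}, 0 ≤ t → t / (t + h) ∈ Icc (0:ℝ) 1 := fun ht =>
    ⟨by positivity, (div_le_one (by linarith)).2 (by linarith)⟩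
  refine ⟨fun a ha b hb hab => ?_, fun t ht => ?_⟩
  · have ha' : 0 ≤ a := ha
    have hb' : 0 ≤ b := hb
    dsimp only
    rw [shifted_integral_eq H hh ha', shifted_integral_eq H hh hb']
    refine mul_lt_mul_of_pos_left (hmono (hmem ha') (hmem hb') ?_) (inv_pos.2 hC)
    rw [div_lt_div_iff₀ (by linarith) (by linarith)]
    nlinarith
  · have ht' : 0 < t := ht
    rw [shifted_integral_eq H hh ht'.le]
    constructor
    · have h0 := hmono ⟨le_rfl, zero_le_one⟩ (hmem ht'.le) (show 0 < t / (t + h) by positivity)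
      simp only [intervalIntegral.integral_same] at h0
      exact mul_pos (inv_pos.2 hC) h0
    · have h1 := hmono (hmem ht'.le) ⟨zero_le_one, le_rfl⟩
        ((div_lt_one (by linarith)).2 (by linarith) : t / (t + h) < 1)
      simp only [integral_betaDensity hH] at h1
      rwa [inv_mul_lt_iff₀ hC, mul_one]
end

section
/- Let T > 0, H ∈ (0,1/2), y₀ ∈ ℝ, ρ ∈ (−1,1) with ρ̄ = √(1−ρ²), and let Σ : ℝ → [0,∞) and ζ : ℝ → ℝ be continuous. Define, for continuous paths φ, ϕ : [0,T] → ℝ, I(φ,ϕ) := inf{ (1/2)∫₀ᵀ (u_s² + v_s²) ds : u, v ∈ L²([0,T];ℝ), φ_t = ∫₀ᵗ √(Σ(ϕ_s)) (ρ̄ u_s + ρ v_s) ds for all t, and ϕ_t = y₀ + (1/Γ(H+1/2)) ∫₀ᵗ (t−s)^{H−1/2} ζ(ϕ_s) v_s ds for all t }, with inf ∅ := +∞. Suppose φ is absolutely continuous with φ₀ = 0 and derivative φ̇, that ϕ_t = y₀ + (I^{H+1/2} g)(t) for some g ∈ L¹([0,T]), and that Σ(ϕ_t) > 0 and ζ(ϕ_t)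 ≠ 0 for almost every t ∈ [0,T]. Then, as an equality in [0,∞], I(φ,ϕ) = (1/(2ρ̄²)) ∫₀ᵀ [ φ̇_t²/Σ(ϕ_t) − 2ρ φ̇_t g_t / (ζ(ϕ_t) √(Σ(ϕ_t))) + (g_t/ζ(ϕ_t))² ] dt. -/
open MeasureTheory Set
open scoped ENNReal

/-!
The two path constraints determine the controls almost everywhere, so the set whose infimum is
taken has at most one element.

* The first constraint says that `φ̇` and `√Σ(ϕ) (ρ̄ u + ρ v)` have the same primitive, so they agree
  a.e. by Lebesgue differentiation (`ae_eq_of_primitive_eq`).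
* The second says that `g` and `ζ(ϕ) v` have the same fractional integral of order
  `α = H + 1/2 ∈ (0,1)`. Integrating against `(x - t)^{-α}`, Fubini and the Beta integral turn each
  fractional integral into `B(α, 1-α)` times the ordinary primitive at `x` (`abel_inversion`), so
  again `g = ζ(ϕ) v` a.e. (`ae_eq_of_abel_integral_eq`).

Since `Σ(ϕ) > 0` and `ζ(ϕ) ≠ 0` a.e., this forces `v = g/ζ(ϕ)` and `u = (φ̇/√Σ(ϕ) - ρ v)/ρ̄`, and
expanding the square shows that `(u² + v²)/2` is the claimed density (`energy_density_eq`). Hence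
every admissible pair has cost equal to the right-hand side. Conversely, when the right-hand side is
finite this pair is square integrable and admissible; when it is infinite there is nothing to show
for the upper bound. The kernel `(t - s)^{H-1/2}` is in `L²` because `H > 0`, which gives the
integrability required of admissible pairs.
-/

lemma ae_eq_of_primitive_eq {T : ℝ} (hT : 0 < T) {f h : ℝ → ℝ}
    (hf : IntegrableOn f (Ioc 0 T)) (hh : IntegrableOn h (Ioc 0 T))
    (heq : ∀ t ∈ Icc (0:ℝ) T, ∫ s in Ioc 0 t, f s = ∫ s in Ioc 0 t, h s) :
    f =ᵐ[volume.restrict (Ioc 0 T)] h := by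
  have hf' := (intervalIntegrable_iff_integrableOn_Ioc_of_le hT.le).2 hf
  have hh' := (intervalIntegrable_iff_integrableOn_Ioc_of_le hT.le).2 hh
  rw [← restrict_Ioo_eq_restrict_Ioc, Filter.EventuallyEq, ae_restrict_iff' measurableSet_Ioo]
  filter_upwards [hf'.ae_hasDerivAt_integral, hh'.ae_hasDerivAt_integral] with x hfx hhx hx
  have hxI : x ∈ uIcc 0 T := by rw [uIcc_of_le hT.le]; exact Ioo_subset_Icc_self hx
  have h1 := hfx hxI 0 (by simp)
  have h2 := hhx hxI 0 (by simp)
  refine h1.unique (h2.congr_of_eventuallyEq ?_)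
  filter_upwards [Ioo_mem_nhds hx.1 hx.2] with y hy
  rw [intervalIntegral.integral_of_le hy.1.le, intervalIntegral.integral_of_le hy.1.le]
  exact heq y (Ioo_subset_Icc_self hy)

/-- The substitution `t = s + (x - s) r` reduces this to the Beta integral; the exponents add up to
`-1`, so no power of `x - s` is left. -/
lemma integral_abel_kernel {α s x : ℝ} (hα : α ∈ Ioo (0:ℝ) 1) (hsx : s < x) :
    ∫ t in Ioc s x, (x - t) ^ (-α) * (t - s) ^ (α - 1) = ProbabilityTheory.beta α (1 - α) := by
  have hpos : 0 < x - s := sub_pos.2 hsx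
  have h := Complex.betaIntegral_scaled (α : ℂ) ((1 - α : ℝ) : ℂ) hpos
  have hexp : (α : ℂ) + ((1 - α : ℝ) : ℂ) - 1 = 0 := by push_cast; ring
  rw [hexp, Complex.cpow_zero, one_mul] at h
  rw [ProbabilityTheory.beta_eq_betaIntegralReal α (1 - α) hα.1 (by linarith [hα.2]), ← h,
    ← intervalIntegral.integral_of_le hsx.le]
  have hcong : (∫ r in (0:ℝ)..(x - s), (r : ℂ) ^ ((α : ℂ) - 1) *
      (((x - s : ℝ) : ℂ) - r) ^ (((1 - α : ℝ) : ℂ) - 1)) =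
      ∫ r in (0:ℝ)..(x - s), (((x - s - r) ^ (-α) * r ^ (α - 1) : ℝ) : ℂ) := by
    refine intervalIntegral.integral_congr fun r hr => ?_
    rw [uIcc_of_le hpos.le] at hr
    have h1 : (0:ℝ) ≤ x - s - r := by linarith [hr.2]
    rw [Complex.ofReal_mul, Complex.ofReal_cpow h1, Complex.ofReal_cpow hr.1, mul_comm]
    push_cast
    congr 2
    ring
  rw [hcong, intervalIntegral.integral_ofReal, Complex.ofReal_re]
  have := intervalIntegral.integral_comp_sub_right
    (fun r => (x - s - r) ^ (-α) * r ^ (α - 1)) (a := s) (b := x) s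
  rw [sub_self] at this
  rw [← this]
  refine intervalIntegral.integral_congr fun t _ => ?_
  simp

/-- Composing the (unnormalised) fractional integrals of orders `α` and `1 - α` gives a multiple of
the ordinary primitive. The inner integral may diverge, hence take the value `0`, for `t` in a null
set, which does not affect the outer integral. -/
lemma abel_inversion {α T x : ℝ} (hα : α ∈ Ioo (0:ℝ) 1) (hx : x ∈ Icc 0 T) {h : ℝ → ℝ}
    (hm : Measurable h) (hi : IntegrableOn h (Ioc 0 T)) :
    ∫ t in Ioc 0 x, (x - t) ^ (-α) * ∫ s in Ioc 0 t, (t - s) ^ (α - 1) * h s =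
      ProbabilityTheory.beta α (1 - α) * ∫ s in Ioc 0 x, h s := by
  set B := ProbabilityTheory.beta α (1 - α) with hB
  have hBpos : 0 < B := ProbabilityTheory.beta_pos hα.1 (by linarith [hα.2])
  set μ := volume.restrict (Ioc 0 x)
  set K : ℝ → ℝ → ℝ := fun t s =>
    (Ioi s).indicator (fun t => (x - t) ^ (-α) * (t - s) ^ (α - 1)) t with hK
  have hhx : Integrable h μ := hi.mono_set (Ioc_subset_Ioc_right hx.2)
  have hrestr : ∀ s ∈ Ioc 0 x, μ.restrict (Ioi s) = volume.restrict (Ioc s x) := by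
    intro s hs
    rw [Measure.restrict_restrict measurableSet_Ioi]
    congr 1
    ext t
    simp only [mem_inter_iff, mem_Ioi, mem_Ioc]
    exact ⟨fun ht => ⟨ht.1, ht.2.2⟩, fun ht => ⟨ht.1, hs.1.trans ht.1, ht.2⟩⟩
  have hne : ∀ᵐ s ∂μ, s ∈ Ioo 0 x := by
    simp only [μ, ← restrict_Ioo_eq_restrict_Ioc]
    exact ae_restrict_mem measurableSet_Ioo
  have hKint : ∀ᵐ s ∂μ, ∫ t, K t s ∂μ = B := by
    filter_upwards [hne] with s hs
    simp only [hK]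
    rw [integral_indicator measurableSet_Ioi, hrestr s (Ioo_subset_Ioc_self hs),
      integral_abel_kernel hα hs.2]
  have hKnn : ∀ t ∈ Ioc 0 x, ∀ s, 0 ≤ K t s := by
    intro t ht s
    refine indicator_apply_nonneg fun hts => ?_
    exact mul_nonneg (Real.rpow_nonneg (sub_nonneg.2 ht.2) _)
      (Real.rpow_nonneg (sub_nonneg.2 (mem_Ioi.1 hts).le) _)
  have hKm : Measurable (fun p : ℝ × ℝ => K p.1 p.2) := by
    have : (fun p : ℝ × ℝ => K p.1 p.2) = {p : ℝ × ℝ | p.2 < p.1}.indicator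
        (fun p => (x - p.1) ^ (-α) * (p.1 - p.2) ^ (α - 1)) := by
      ext p; simp [hK, indicator]
    rw [this]
    exact Measurable.indicator (by fun_prop) (measurableSet_lt measurable_snd measurable_fst)
  have hint : Integrable (Function.uncurry fun t s => K t s * h s) (μ.prod μ) := by
    have hKhm : Measurable (Function.uncurry fun t s => K t s * h s) :=
      hKm.mul (hm.comp measurable_snd)
    refine (integrable_prod_iff' hKhm.aestronglyMeasurable).2 ⟨?_, ?_⟩
    · filter_upwards [hKint] with s hs
      -- A nonintegrable function has integral `0`, and `B ≠ 0`.
      have : Integrable (fun t => K t s) μ :=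
        .of_integral_ne_zero (by rw [hs]; exact hBpos.ne')
      exact this.mul_const (h s)
    · refine (hhx.norm.const_mul B).congr ?_
      filter_upwards [hKint] with s hs
      rw [← hs, ← integral_mul_const]
      refine setIntegral_congr_fun measurableSet_Ioc fun t ht => ?_
      simp [Function.uncurry, abs_of_nonneg (hKnn t ht s)]
  have hswap := integral_integral_swap hint
  calc _ = ∫ t, ∫ s, K t s * h s ∂μ ∂μ := by
        refine setIntegral_congr_fun measurableSet_Ioc fun t ht => ?_
        rw [← integral_const_mul]
        have h1 : Ioo 0 t = Iio t ∩ Ioc 0 x := by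
          ext s
          simp only [mem_inter_iff, mem_Iio, mem_Ioc, mem_Ioo]
          exact ⟨fun hs => ⟨hs.2, hs.1, hs.2.le.trans ht.2⟩, fun hs => ⟨hs.2.1, hs.1⟩⟩
        rw [integral_Ioc_eq_integral_Ioo, h1, ← Measure.restrict_restrict measurableSet_Iio,
          ← integral_indicator measurableSet_Iio]
        refine integral_congr_ae (.of_forall fun s => ?_)
        by_cases hst : s < t <;> simp [hK, hst, indicator, mul_assoc]
    _ = ∫ s, ∫ t, K t s * h s ∂μ ∂μ := hswap
    _ = ∫ s, B * h s ∂μ := by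
        refine integral_congr_ae ?_
        filter_upwards [hKint] with s hs
        rw [integral_mul_const, hs]
    _ = _ := integral_const_mul _ _

/-- An integrable function is determined a.e. by its fractional integral of order `α ∈ (0,1)`. -/
lemma ae_eq_of_abel_integral_eq {α T : ℝ} (hα : α ∈ Ioo (0:ℝ) 1) (hT : 0 < T) {f h : ℝ → ℝ}
    (hfm : Measurable f) (hf : IntegrableOn f (Ioc 0 T))
    (hhm : Measurable h) (hh : IntegrableOn h (Ioc 0 T))
    (heq : ∀ t ∈ Icc (0:ℝ) T, ∫ s in Ioc 0 t, (t - s) ^ (α - 1) * f s =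
      ∫ s in Ioc 0 t, (t - s) ^ (α - 1) * h s) :
    f =ᵐ[volume.restrict (Ioc 0 T)] h := by
  refine ae_eq_of_primitive_eq hT hf hh fun x hx => ?_
  have hB : ProbabilityTheory.beta α (1 - α) ≠ 0 :=
    (ProbabilityTheory.beta_pos hα.1 (by linarith [hα.2])).ne'
  refine mul_left_cancel₀ hB ?_
  rw [← abel_inversion hα hx hfm hf, ← abel_inversion hα hx hhm hh]
  refine setIntegral_congr_fun measurableSet_Ioc fun t ht => ?_
  rw [heq t ⟨ht.1.le, ht.2.trans hx.2⟩]

lemma memLp_two_abel_kernel {H t : ℝ} (hH : 0 < H) (ht : 0 ≤ t) :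
    MemLp (fun s => (t - s) ^ (H - 1/2)) 2 (volume.restrict (Ioc 0 t)) := by
  rw [memLp_two_iff_integrable_sq (Measurable.aestronglyMeasurable (by fun_prop))]
  have h := ((intervalIntegral.intervalIntegrable_rpow' (a := 0) (b := t)
    (r := 2 * H - 1) (by linarith)).comp_sub_left t).symm
  rw [sub_zero, sub_self, intervalIntegrable_iff_integrableOn_Ioc_of_le ht] at h
  refine h.congr_fun (fun s hs => ?_) measurableSet_Ioc
  have hts : 0 ≤ t - s := sub_nonneg.2 hs.2
  beta_reduce
  rw [← Real.rpow_natCast, ← Real.rpow_mul hts]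
  congr 1
  push_cast
  ring

lemma memLp_two_continuous_mul {T : ℝ} {z v : ℝ → ℝ} (hz : Continuous z) (hv : Measurable v)
    (hv2 : IntegrableOn (fun s => v s ^ 2) (Ioc 0 T)) :
    MemLp (fun s => z s * v s) 2 (volume.restrict (Ioc 0 T)) := by
  have hvL : MemLp v 2 (volume.restrict (Ioc 0 T)) :=
    (memLp_two_iff_integrable_sq hv.aestronglyMeasurable).2 hv2
  obtain ⟨C, hC⟩ := isCompact_Icc.exists_bound_of_continuousOn (hz.continuousOn (s := Icc 0 T))
  refine hvL.of_le_mul (c := C) (by fun_prop) ?_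
  filter_upwards [ae_restrict_mem measurableSet_Ioc] with s hs
  rw [norm_mul]
  exact mul_le_mul_of_nonneg_right (hC s (Ioc_subset_Icc_self hs)) (norm_nonneg _)

/-- The pointwise identity between the cost of the controls and the explicit density; here `a`, `c`
stand for `√Σ(ϕ)` and `√(1 - ρ²)`. -/
lemma energy_density_eq {a z c ρ u v S p g : ℝ} (ha : 0 < a) (haS : a ^ 2 = S) (hz : z ≠ 0)
    (hc : 0 < c) (hcρ : c ^ 2 = 1 - ρ ^ 2) (hp : p = a * (c * u + ρ * v)) (hg : g = z * v) :
    (2 * (1 - ρ ^ 2))⁻¹ * (p ^ 2 / S - 2 * ρ * p * g / (z * a) + (g / z) ^ 2) =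
      2⁻¹ * (u ^ 2 + v ^ 2) := by
  have h1 : p ^ 2 / S = (c * u + ρ * v) ^ 2 := by
    rw [← haS, hp]; field_simp
  have h2 : 2 * ρ * p * g / (z * a) = 2 * ρ * (c * u + ρ * v) * v := by
    rw [hp, hg]; field_simp
  have h3 : g / z = v := by rw [hg]; field_simp
  rw [h1, h2, h3, ← hcρ]
  field_simp
  linear_combination -v ^ 2 * hcρ

/-- **Explicit form of the small-time large deviations rate function of rough volatility
models.** Here `Sgm` plays the role of `Σ` and `g` the role of the fractional derivative
`D^{H+1/2}(ϕ - y₀)`. If `φ` is absolutely continuous with `φ 0 = 0` and density `φd`,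
`ϕ = y₀ + I^{H+1/2} g` with `g ∈ L¹`, and `Σ(ϕ_t) > 0`, `ζ(ϕ_t) ≠ 0` for a.e. `t`, then
the variational rate function `I(φ,ϕ)` equals
`(1/(2ρ̄²)) ∫₀ᵀ [ φ̇²/Σ(ϕ) - 2ρ φ̇ g/(ζ(ϕ)√Σ(ϕ)) + (g/ζ(ϕ))² ] dt` in `[0,∞]`. -/
theorem rough_vol_rate_function_explicit
    (T H y₀ ρ : ℝ) (hT : 0 < T) (hH : H ∈ Ioo (0:ℝ) (1/2))
    (hρ : ρ ∈ Ioo (-1 : ℝ) 1)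
    (Sgm ζ : ℝ → ℝ) (hSgmc : Continuous Sgm) (hSgmnn : ∀ x, 0 ≤ Sgm x)
    (hζc : Continuous ζ)
    (φ ϕ : ℝ → ℝ) (φd g : ℝ → ℝ)
    (hφc : ContinuousOn φ (Icc 0 T)) (hϕc : ContinuousOn ϕ (Icc 0 T))
    (hφ0 : φ 0 = 0)
    (hφdmeas : Measurable φd) (hφdInt : IntegrableOn φd (Ioc 0 T))
    (hφAC : ∀ t ∈ Icc (0:ℝ) T, φ t = ∫ s in Ioc 0 t, φd s)
    (hgmeas : Measurable g) (hgInt : IntegrableOn g (Ioc 0 T))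
    (hϕeq : ∀ t ∈ Icc (0:ℝ) T,
      ϕ t = y₀ + (Real.Gamma (H + 1/2))⁻¹ * ∫ s in Ioc 0 t, (t - s) ^ (H - 1/2) * g s)
    (hae : ∀ᵐ t ∂(volume.restrict (Icc (0:ℝ) T)), 0 < Sgm (ϕ t) ∧ ζ (ϕ t) ≠ 0) :
    sInf {E : ℝ≥0∞ | ∃ u v : ℝ → ℝ,
        Measurable u ∧ IntegrableOn (fun s => u s ^ 2) (Ioc 0 T) ∧
        Measurable v ∧ IntegrableOn (fun s => v s ^ 2) (Ioc 0 T) ∧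
        (∀ t ∈ Icc (0:ℝ) T,
          IntegrableOn
            (fun s => Real.sqrt (Sgm (ϕ s)) * (Real.sqrt (1 - ρ ^ 2) * u s + ρ * v s))
            (Ioc 0 t) ∧
          φ t = ∫ s in Ioc 0 t,
            Real.sqrt (Sgm (ϕ s)) * (Real.sqrt (1 - ρ ^ 2) * u s + ρ * v s)) ∧
        (∀ t ∈ Icc (0:ℝ) T,
          IntegrableOn (fun s => (t - s) ^ (H - 1/2) * (ζ (ϕ s) * v s)) (Ioc 0 t) ∧
          ϕ t = y₀ + (Real.Gamma (H + 1/2))⁻¹ *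
            ∫ s in Ioc 0 t, (t - s) ^ (H - 1/2) * (ζ (ϕ s) * v s)) ∧
        E = ENNReal.ofReal (2⁻¹ * ∫ s in Ioc 0 T, (u s ^ 2 + v s ^ 2))} =
      ∫⁻ t in Ioc 0 T, ENNReal.ofReal ((2 * (1 - ρ ^ 2))⁻¹ *
        (φd t ^ 2 / Sgm (ϕ t) -
          2 * ρ * φd t * g t / (ζ (ϕ t) * Real.sqrt (Sgm (ϕ t))) +
          (g t / ζ (ϕ t)) ^ 2)) := by
  have hα : H + 1/2 ∈ Ioo (0:ℝ) 1 := ⟨by linarith [hH.1], by linarith [hH.2]⟩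
  have hexp : H - 1/2 = H + 1/2 - 1 := by ring
  have hΓ : (Real.Gamma (H + 1/2))⁻¹ ≠ 0 := inv_ne_zero (Real.Gamma_pos_of_pos hα.1).ne'
  have hρ2 : 0 < 1 - ρ ^ 2 := by nlinarith [hρ.1, hρ.2]
  set c := Real.sqrt (1 - ρ ^ 2) with hc_def
  have hc : 0 < c := Real.sqrt_pos.2 hρ2
  have hc2 : c ^ 2 = 1 - ρ ^ 2 := Real.sq_sqrt hρ2.le
  -- A globally continuous extension of `ϕ` makes the controls below measurable on all of `ℝ`.
  obtain ⟨ψ, hψc, hψ⟩ : ∃ ψ : ℝ → ℝ, Continuous ψ ∧ ∀ t ∈ Icc (0:ℝ) T, ϕ t = ψ t :=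
    ⟨IccExtend hT.le ((Icc 0 T).domRestrict ϕ),
      (continuousOn_iff_continuous_domRestrict.1 hϕc).Icc_extend',
      fun t ht => by rw [IccExtend_of_mem _ _ ht]; rfl⟩
  have hψ' : ∀ t ≤ T, ∀ s ∈ Ioc 0 t, ϕ s = ψ s := fun t ht s hs =>
    hψ s ⟨hs.1.le, hs.2.trans ht⟩
  have hpos : ∀ᵐ t ∂(volume.restrict (Ioc (0:ℝ) T)),
      0 < Real.sqrt (Sgm (ϕ t)) ∧ Real.sqrt (Sgm (ϕ t)) ^ 2 = Sgm (ϕ t) ∧ ζ (ϕ t) ≠ 0 := by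
    filter_upwards [ae_restrict_of_ae_restrict_of_subset Ioc_subset_Icc_self hae] with t ht
    exact ⟨Real.sqrt_pos.2 ht.1, Real.sq_sqrt ht.1.le, ht.2⟩
  have henergy : ∀ u v : ℝ → ℝ,
      (∀ᵐ t ∂(volume.restrict (Ioc (0:ℝ) T)),
        φd t = Real.sqrt (Sgm (ϕ t)) * (c * u t + ρ * v t)) →
      (∀ᵐ t ∂(volume.restrict (Ioc (0:ℝ) T)), g t = ζ (ϕ t) * v t) →
      (∫⁻ t in Ioc 0 T, ENNReal.ofReal ((2 * (1 - ρ ^ 2))⁻¹ *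
        (φd t ^ 2 / Sgm (ϕ t) -
          2 * ρ * φd t * g t / (ζ (ϕ t) * Real.sqrt (Sgm (ϕ t))) +
          (g t / ζ (ϕ t)) ^ 2))) =
      ∫⁻ t in Ioc 0 T, ENNReal.ofReal (2⁻¹ * (u t ^ 2 + v t ^ 2)) := by
    intro u v h1 h2
    refine lintegral_congr_ae ?_
    filter_upwards [hpos, h1, h2] with t ht h1 h2
    rw [energy_density_eq ht.1 ht.2.1 ht.2.2 hc hc2 h1 h2]
  have hcost : ∀ u v : ℝ → ℝ, IntegrableOn (fun t => u t ^ 2) (Ioc 0 T) →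
      IntegrableOn (fun t => v t ^ 2) (Ioc 0 T) →
      ENNReal.ofReal (2⁻¹ * ∫ s in Ioc 0 T, (u s ^ 2 + v s ^ 2)) =
        ∫⁻ t in Ioc 0 T, ENNReal.ofReal (2⁻¹ * (u t ^ 2 + v t ^ 2)) := by
    intro u v hu hv
    have hi : IntegrableOn (fun t => 2⁻¹ * (u t ^ 2 + v t ^ 2)) (Ioc 0 T) :=
      (hu.add hv).const_mul _
    rw [← integral_const_mul, ofReal_integral_eq_lintegral_ofReal hi
      (.of_forall fun t => by positivity)]
  refine le_antisymm ?_ (le_sInf ?_)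
  · by_cases htop : (∫⁻ t in Ioc 0 T, ENNReal.ofReal ((2 * (1 - ρ ^ 2))⁻¹ *
        (φd t ^ 2 / Sgm (ϕ t) -
          2 * ρ * φd t * g t / (ζ (ϕ t) * Real.sqrt (Sgm (ϕ t))) +
          (g t / ζ (ϕ t)) ^ 2))) = ⊤
    · rw [htop]; exact le_top
    set v : ℝ → ℝ := fun t => g t / ζ (ψ t) with hv
    set u : ℝ → ℝ := fun t => (φd t / Real.sqrt (Sgm (ψ t)) - ρ * v t) / c with hu
    have hvm : Measurable v := hgmeas.div (hζc.comp hψc).measurable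
    have hum : Measurable u := by
      have := (hSgmc.comp hψc).measurable
      exact ((hφdmeas.div this.sqrt).sub (hvm.const_mul ρ)).div_const c
    have h1 : ∀ᵐ t ∂(volume.restrict (Ioc (0:ℝ) T)),
        φd t = Real.sqrt (Sgm (ϕ t)) * (c * u t + ρ * v t) := by
      filter_upwards [hpos, ae_restrict_mem measurableSet_Ioc] with t ht htI
      have hne := ht.1.ne'
      simp only [hu]
      rw [← hψ' T le_rfl t htI]
      field_simp
      ring
    have h2 : ∀ᵐ t ∂(volume.restrict (Ioc (0:ℝ) T)), g t = ζ (ϕ t) * v t := by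
      filter_upwards [hpos, ae_restrict_mem measurableSet_Ioc] with t ht htI
      have hne := ht.2.2
      simp only [hv]
      rw [← hψ' T le_rfl t htI]
      field_simp
    have hE := henergy u v h1 h2
    have hint : IntegrableOn (fun t => 2⁻¹ * (u t ^ 2 + v t ^ 2)) (Ioc 0 T) := by
      refine (lintegral_ofReal_ne_top_iff_integrable (by fun_prop)
        (.of_forall fun t => by positivity)).1 ?_
      rw [← hE]; exact htop
    have hu2 : IntegrableOn (fun s => u s ^ 2) (Ioc 0 T) := by
      refine (hint.const_mul 2).mono' (by fun_prop) (.of_forall fun t => ?_)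
      rw [Real.norm_of_nonneg (by positivity)]
      nlinarith [sq_nonneg (v t)]
    have hv2 : IntegrableOn (fun s => v s ^ 2) (Ioc 0 T) := by
      refine (hint.const_mul 2).mono' (by fun_prop) (.of_forall fun t => ?_)
      rw [Real.norm_of_nonneg (by positivity)]
      nlinarith [sq_nonneg (u t)]
    refine sInf_le ⟨u, v, hum, hu2, hvm, hv2, fun t ht => ?_, fun t ht => ?_, ?_⟩
    · have h1t := ae_restrict_of_ae_restrict_of_subset (Ioc_subset_Ioc_right ht.2) h1
      exact ⟨(hφdInt.mono_set (Ioc_subset_Ioc_right ht.2)).congr h1t,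
        (hφAC t ht).trans (integral_congr_ae h1t)⟩
    · have h2t := ae_restrict_of_ae_restrict_of_subset (Ioc_subset_Ioc_right ht.2) h2
      refine ⟨?_, ?_⟩
      · have hw := (memLp_two_continuous_mul (hζc.comp hψc) hvm hv2).mono_measure
          (Measure.restrict_mono (Ioc_subset_Ioc_right ht.2) le_rfl)
        have hk := (memLp_two_abel_kernel hH.1 ht.1).integrable_mul hw
        refine IntegrableOn.congr_fun hk (fun s hs => ?_) measurableSet_Ioc
        simp [hψ' t ht.2 s hs]
      · rw [hϕeq t ht]
        congr 2
        refine integral_congr_ae ?_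
        filter_upwards [h2t] with s hs
        rw [hs]
    · rw [hE, hcost u v hu2 hv2]
  · rintro E ⟨u, v, hum, hu2, hvm, hv2, hφu, hϕv, rfl⟩
    have h1 : ∀ᵐ t ∂(volume.restrict (Ioc (0:ℝ) T)),
        φd t = Real.sqrt (Sgm (ϕ t)) * (c * u t + ρ * v t) :=
      ae_eq_of_primitive_eq hT hφdInt (hφu T ⟨hT.le, le_rfl⟩).1
        fun t ht => (hφAC t ht).symm.trans (hφu t ht).2
    have hw : IntegrableOn (fun s => ζ (ψ s) * v s) (Ioc 0 T) :=
      (memLp_two_continuous_mul (hζc.comp hψc) hvm hv2).integrable (by norm_num)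
    have h2' : g =ᵐ[volume.restrict (Ioc (0:ℝ) T)] fun s => ζ (ψ s) * v s := by
      refine ae_eq_of_abel_integral_eq hα hT hgmeas hgInt
        ((hζc.comp hψc).measurable.mul hvm) hw fun t ht => ?_
      rw [← hexp]
      have h3 := (hϕeq t ht).symm.trans (hϕv t ht).2
      rw [mul_left_cancel₀ hΓ (add_left_cancel h3)]
      refine setIntegral_congr_fun measurableSet_Ioc fun s hs => ?_
      simp only [hψ' t ht.2 s hs]
    have h2 : ∀ᵐ t ∂(volume.restrict (Ioc (0:ℝ) T)), g t = ζ (ϕ t) * v t := by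
      filter_upwards [h2', ae_restrict_mem measurableSet_Ioc] with t ht htI
      rw [ht, hψ' T le_rfl t htI]
    rw [henergy u v h1 h2, hcost u v hu2 hv2]
end

section
/- Let T > 0, H ∈ (0,1/2), y₀ > 0, ξ > 0, ρ ∈ (−1,1) with ρ̄ = √(1−ρ²). Let φ : [0,T] → ℝ be absolutely continuous with φ₀ = 0 and derivative φ̇ ∈ L¹, let g ∈ L¹([0,T]) and set ϕ_t := y₀ + (I^{H+1/2} g)(t); assume ϕ is nonnegative on [0,T] and ϕ_t > 0 for almost every t. For δ ≥ 0 set ϕ^δ_t := ϕ_t + δ t^{H+1/2} and g^δ := g + δ Γ(H+3/2) (so that ϕ^δ_t = y₀ + (I^{H+1/2} g^δ)(t)), and define J^δ := ∫₀ᵀ (1_{ϕ^δ_t > 0} / (2 ρ̄² ϕ^δ_t)) [ φ̇_t² − 2ρ φ̇_t g^δ_t/ξ + (g^δ_t/ξ)² ] dt. If J⁰ < ∞, then lim_{δ↓0} J^δ = J⁰. -/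
/-!
The proof is dominated convergence along `δ ↓ 0`. For almost every `t ∈ (0, T]` both `t > 0` and
`ϕ t > 0`, so the indicator equals one for every `δ ≥ 0` and the integrand is continuous in `δ` at
`0`. By `rate_integrand_le`, for `0 < δ < 1` it is dominated by twice the integrand at `δ = 0`,
which is integrable because `J 0 < ∞`, plus a constant multiple of `t ^ (-(H + 1/2))`, which is
integrable on `(0, T]` because `H + 1/2 < 1`. Measurability of `ϕ`, and hence of the integrands,
comes from its representation as a fractional integral (`measurable_fractional_integral`).
-/

open MeasureTheory Set Filter Topology
open scoped ENNReal

/-- Pointwise domination. Completing the square gives `Q(x, y + δc) ≤ 2 Q(x, y) + 2 (δc/ξ)²` for the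
quadratic form `Q(x, y) = x² - 2ρxy/ξ + (y/ξ)²`; enlarging the denominator from `a` to `a + δp` only
helps the first term, while `δ² / (a + δp) ≤ 1 / p` controls the second. -/
lemma rate_integrand_le {k a p δ c ξ ρ x y : ℝ} (hk : 0 < k) (ha : 0 < a) (hp : 0 < p)
    (hδ : 0 < δ) (hδ1 : δ < 1) (hρ : ρ ^ 2 < 1) :
    (k * (a + δ * p))⁻¹ * (x ^ 2 - 2 * ρ * x * (y + δ * c) / ξ + ((y + δ * c) / ξ) ^ 2) ≤
      2 * ((k * a)⁻¹ * (x ^ 2 - 2 * ρ * x * y / ξ + (y / ξ) ^ 2)) +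
        2 * (c / ξ) ^ 2 * k⁻¹ * p⁻¹ := by
  have hQ : ∀ u v : ℝ, 0 ≤ u ^ 2 - 2 * ρ * u * v + v ^ 2 := fun u v => by
    nlinarith [sq_nonneg (u - ρ * v), mul_nonneg (sub_nonneg.2 hρ.le) (sq_nonneg v)]
  have hq := hQ x (y / ξ)
  have h1 : x ^ 2 - 2 * ρ * x * (y + δ * c) / ξ + ((y + δ * c) / ξ) ^ 2 ≤
      2 * (x ^ 2 - 2 * ρ * x * (y / ξ) + (y / ξ) ^ 2) + 2 * (c / ξ) ^ 2 * δ ^ 2 := by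
    -- the difference of the two sides is `Q(x, y - δc)`
    have h := hQ x (y / ξ - δ * (c / ξ))
    have e : (y + δ * c) / ξ = y / ξ + δ * (c / ξ) := by ring
    rw [mul_div_assoc, e]
    nlinarith [h]
  have hpos : 0 < a + δ * p := by positivity
  have h2 : (k * (a + δ * p))⁻¹ ≤ (k * a)⁻¹ := by
    gcongr
    nlinarith [mul_pos hδ hp]
  have h3 : (k * (a + δ * p))⁻¹ * δ ^ 2 ≤ k⁻¹ * p⁻¹ := by
    rw [← mul_inv, inv_mul_le_iff₀ (by positivity), ← div_eq_mul_inv, le_div_iff₀ (by positivity)]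
    have : δ ^ 2 * p ≤ a + δ * p := by nlinarith [mul_pos hδ hp]
    nlinarith [mul_le_mul_of_nonneg_left this hk.le]
  calc _ ≤ (k * (a + δ * p))⁻¹ * (2 * (x ^ 2 - 2 * ρ * x * (y / ξ) + (y / ξ) ^ 2)
          + 2 * (c / ξ) ^ 2 * δ ^ 2) := by gcongr
    _ = 2 * ((k * (a + δ * p))⁻¹ * (x ^ 2 - 2 * ρ * x * (y / ξ) + (y / ξ) ^ 2))
          + 2 * (c / ξ) ^ 2 * ((k * (a + δ * p))⁻¹ * δ ^ 2) := by ring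
    _ ≤ 2 * ((k * a)⁻¹ * (x ^ 2 - 2 * ρ * x * (y / ξ) + (y / ξ) ^ 2))
          + 2 * (c / ξ) ^ 2 * (k⁻¹ * p⁻¹) := by gcongr
    _ = _ := by ring

lemma measurable_fractional_integral (H : ℝ) {g : ℝ → ℝ} (hg : Measurable g) :
    Measurable fun t : ℝ => ∫ s in Ioc 0 t, (t - s) ^ (H - 1/2) * g s := by
  -- the variable domain `(0, t]` is absorbed into the integrand as an indicator
  have h : (fun t : ℝ => ∫ s in Ioc 0 t, (t - s) ^ (H - 1/2) * g s) = fun t =>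
      ∫ s, {q : ℝ × ℝ | 0 < q.2 ∧ q.2 ≤ q.1}.indicator
        (fun q => (q.1 - q.2) ^ (H - 1/2) * g q.2) (t, s) := by
    funext t
    rw [← integral_indicator measurableSet_Ioc]
    rfl
  rw [h]
  have hm : Measurable ({q : ℝ × ℝ | 0 < q.2 ∧ q.2 ≤ q.1}.indicator
        (fun q => (q.1 - q.2) ^ (H - 1/2) * g q.2)) := by
    refine Measurable.indicator (by fun_prop) ?_
    exact (measurableSet_lt measurable_const measurable_snd).inter
      (measurableSet_le measurable_snd measurable_fst)
  exact (hm.stronglyMeasurable.integral_prod_right' (ν := volume)).measurable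

/-- **Perturbation continuity of the explicit rough Heston rate function.**
With `ϕ = y₀ + I^{H+1/2} g` nonnegative on `[0,T]` and positive a.e., set
`ϕ^δ_t = ϕ_t + δ t^{H+1/2}`, `g^δ = g + δ Γ(H+3/2)` and
`J δ = ∫₀ᵀ 1_{ϕ^δ>0}/(2ρ̄²ϕ^δ) [φ̇² - 2ρφ̇ g^δ/ξ + (g^δ/ξ)²] dt ∈ [0,∞]`.
If `J 0 < ∞`, then `J δ → J 0` as `δ ↓ 0`. -/
theorem rough_heston_rate_perturbation_continuity
    (T H y₀ ξ ρ : ℝ) (hT : 0 < T) (hH : H ∈ Ioo (0:ℝ) (1/2))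
    (hy₀ : 0 < y₀) (hξ : 0 < ξ) (hρ : ρ ∈ Ioo (-1 : ℝ) 1)
    (φ φd g : ℝ → ℝ)
    (hφ0 : φ 0 = 0)
    (hφdmeas : Measurable φd) (hφdInt : IntegrableOn φd (Ioc 0 T))
    (hφAC : ∀ t ∈ Icc (0:ℝ) T, φ t = ∫ s in Ioc 0 t, φd s)
    (hgmeas : Measurable g) (hgInt : IntegrableOn g (Ioc 0 T))
    (ϕ : ℝ → ℝ)
    (hϕeq : ∀ t ∈ Icc (0:ℝ) T,
      ϕ t = y₀ + (Real.Gamma (H + 1/2))⁻¹ * ∫ s in Ioc 0 t, (t - s) ^ (H - 1/2) * g s)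
    (hϕnn : ∀ t ∈ Icc (0:ℝ) T, 0 ≤ ϕ t)
    (hϕpos : ∀ᵐ t ∂(volume.restrict (Icc (0:ℝ) T)), 0 < ϕ t)
    (J : ℝ → ℝ≥0∞)
    (hJ : ∀ δ : ℝ, J δ = ∫⁻ t in Ioc 0 T,
      ENNReal.ofReal
        (Set.indicator {s : ℝ | 0 < ϕ s + δ * s ^ (H + 1/2)}
          (fun s => (2 * (1 - ρ ^ 2) * (ϕ s + δ * s ^ (H + 1/2)))⁻¹ *
            (φd s ^ 2 - 2 * ρ * φd s * (g s + δ * Real.Gamma (H + 3/2)) / ξ +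
              ((g s + δ * Real.Gamma (H + 3/2)) / ξ) ^ 2)) t))
    (hfin : J 0 ≠ ⊤) :
    Tendsto J (nhdsWithin 0 (Ioi (0:ℝ))) (nhds (J 0)) := by
  obtain ⟨hH0, hH1⟩ := hH
  have hρ2 : ρ ^ 2 < 1 := by nlinarith [hρ.1, hρ.2]
  have hk : 0 < 2 * (1 - ρ ^ 2) := by linarith
  set k := 2 * (1 - ρ ^ 2) with hkdef
  set c := Real.Gamma (H + 3/2) with hc
  -- a globally measurable function agreeing with `ϕ` on `[0, T]`
  let ψ : ℝ → ℝ := fun t => y₀ + (Real.Gamma (H + 1/2))⁻¹ *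
    ∫ s in Ioc 0 t, (t - s) ^ (H - 1/2) * g s
  have hψm : Measurable ψ :=
    ((measurable_fractional_integral H hgmeas).const_mul _).const_add _
  have hpos : ∀ᵐ t ∂(volume.restrict (Ioc (0:ℝ) T)), 0 < t ∧ 0 < ψ t ∧ ϕ t = ψ t := by
    filter_upwards [ae_restrict_mem measurableSet_Ioc,
      ae_restrict_of_ae_restrict_of_subset Ioc_subset_Icc_self hϕpos] with t ht h
    have he : ϕ t = ψ t := hϕeq t (Ioc_subset_Icc_self ht)
    exact ⟨ht.1, he ▸ h, he⟩
  have hpow : IntegrableOn (fun t : ℝ => 2 * (c / ξ) ^ 2 * k⁻¹ * (t ^ (H + 1/2))⁻¹) (Ioc 0 T) := by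
    have h : IntegrableOn (fun t : ℝ => t ^ (-(H + 1/2))) (Ioc 0 T) :=
      (intervalIntegrable_iff_integrableOn_Ioc_of_le hT.le).1
        (intervalIntegral.intervalIntegrable_rpow' (by linarith))
    refine IntegrableOn.congr_fun (h.const_mul (2 * (c / ξ) ^ 2 * k⁻¹)) (fun t ht => ?_)
      measurableSet_Ioc
    simp only [Real.rpow_neg ht.1.le]
  let E : ℝ → ℝ → ℝ := fun δ s => (k * (ψ s + δ * s ^ (H + 1/2)))⁻¹ *
    (φd s ^ 2 - 2 * ρ * φd s * (g s + δ * c) / ξ + ((g s + δ * c) / ξ) ^ 2)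
  have hEm : ∀ δ, Measurable (E δ) := fun δ => by
    have h1 : Measurable (fun s : ℝ => δ * s ^ (H + 1/2)) := by fun_prop
    have h2 : Measurable (fun s => φd s ^ 2 - 2 * ρ * φd s * (g s + δ * c) / ξ +
      ((g s + δ * c) / ξ) ^ 2) := by fun_prop
    exact ((hψm.add h1).const_mul k).inv.mul h2
  -- the indicator is almost everywhere equal to one
  have hJE : ∀ δ : ℝ, 0 ≤ δ → J δ = ∫⁻ t in Ioc 0 T, ENNReal.ofReal (E δ t) := fun δ hδ => by
    rw [hJ]
    refine lintegral_congr_ae ?_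
    filter_upwards [hpos] with t ht
    have hp := Real.rpow_pos_of_pos ht.1 (H + 1/2)
    have hψ := ht.2.1
    have hmem : t ∈ {s : ℝ | 0 < ϕ s + δ * s ^ (H + 1/2)} := by
      rw [mem_setOf_eq, ht.2.2]
      positivity
    rw [indicator_of_mem hmem, ht.2.2]
  have hE0 : ∫⁻ t in Ioc 0 T, ENNReal.ofReal (E 0 t) ≠ ⊤ := hJE 0 le_rfl ▸ hfin
  rw [hJE 0 le_rfl]
  have hev : (fun δ => ∫⁻ t in Ioc 0 T, ENNReal.ofReal (E δ t)) =ᶠ[𝓝[>] 0] J := by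
    filter_upwards [self_mem_nhdsWithin] with δ hδ
    exact (hJE δ (le_of_lt hδ)).symm
  refine Tendsto.congr' hev ?_
  refine tendsto_lintegral_filter_of_dominated_convergence
    (fun t => 2 * ENNReal.ofReal (E 0 t) +
      ENNReal.ofReal (2 * (c / ξ) ^ 2 * k⁻¹ * (t ^ (H + 1/2))⁻¹)) ?_ ?_ ?_ ?_
  · exact Eventually.of_forall fun δ => (hEm δ).ennreal_ofReal
  · filter_upwards [Ioo_mem_nhdsGT (zero_lt_one' ℝ)] with δ hδ
    filter_upwards [hpos] with t ht
    have hb := rate_integrand_le (c := c) (ξ := ξ) (x := φd t) (y := g t) hk ht.2.1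
      (Real.rpow_pos_of_pos ht.1 (H + 1/2)) hδ.1 hδ.2 hρ2
    have he : E δ t ≤ 2 * E 0 t + 2 * (c / ξ) ^ 2 * k⁻¹ * (t ^ (H + 1/2))⁻¹ := by
      simpa only [E, zero_mul, add_zero] using hb
    refine (ENNReal.ofReal_le_ofReal he).trans (ENNReal.ofReal_add_le.trans ?_)
    rw [ENNReal.ofReal_mul zero_le_two, ENNReal.ofReal_ofNat]
  · rw [lintegral_add_left ((hEm 0).ennreal_ofReal.const_mul _),
      lintegral_const_mul' _ _ ENNReal.ofNat_ne_top]
    exact ENNReal.add_ne_top.2 ⟨ENNReal.mul_ne_top ENNReal.ofNat_ne_top hE0,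
      hpow.lintegral_lt_top.ne⟩
  · filter_upwards [hpos] with t ht
    have hne : k * (ψ t + 0 * t ^ (H + 1/2)) ≠ 0 := by
      rw [zero_mul, add_zero]
      exact (mul_pos hk ht.2.1).ne'
    have hcont : ContinuousAt (fun δ => E δ t) 0 := by
      refine ContinuousAt.mul (ContinuousAt.inv₀ (by fun_prop) hne) (by fun_prop)
    exact (ENNReal.continuous_ofReal.tendsto _).comp (hcont.tendsto.mono_left nhdsWithin_le_nhds)
end
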